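/- Let ν > −1 and δ > 0, and let μ be a signed Borel measure on ℝ satisfying (H1)-(H2)-(H3) with supp(μ) ⊂ [−δ, ∞). Then the infimum of ∫_{-∞}^{∞} {M(x) − L(x)} |x|^{2ν+1} dx over all pairs of real entire functions L, M of exponential type at most δ with L(x) ≤ f_μ(x) ≤ M(x) for all real x equals Γ(ν+1)Γ(ν+2)(4/δ)^{2ν+2}. -/

import Mathlib

/-! Lower bound: `F = M - L` is nonnegative on the real axis, and `F 0 ≥ 1`, since `L 0 ≤ 0` while
(H3) and Abel's theorem give `f_μ(0+) = 1`. Damped by powers of `sinc` and periodized, `F` becomes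
a nonnegative trigonometric polynomial, whose even part is a polynomial in `sin²`. Gauss–Radau
quadrature for the beta weight, with node `0` and the zeros of a Jacobi polynomial, bounds the mass
of that polynomial below by a multiple of its value at `0`, and letting the period tend to infinity
gives `Γ(ν+1) Γ(ν+2) (4/δ)^(2ν+2)`.

Upper bound: by Mehler–Heine the extremal quadrature polynomials converge to the square `P` of a
normalized Bessel function, whose mass equals the bound. `P` is a limit of products of factors
`1 - a z²`, `a ≥ 0`, so its reciprocal is the two-sided Laplace transform, near the imaginary axis,
of a probability measure `ρ`. With `u = ρ ∗ μ(-∞, ·]` one has `f_μ(x) = x P(x) ∫ u(t) e^(-xt) dt`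
for small `x > 0`, and cutting the integral at `t = 0` leaves an entire function
`L(z) = z P(z) ∫_{t<0} u(t) e^(-zt) dt` with `L ≤ f_μ ≤ L + P`. -/

open MeasureTheory Set Filter

/-- An entire function has exponential type at most `τ` if for every `ε > 0` it is
`O(e^{(τ+ε)|z|})`. -/
def ExpTypeLE (F : ℂ → ℂ) (τ : ℝ) : Prop :=
  ∀ ε : ℝ, 0 < ε → ∃ C : ℝ, ∀ z : ℂ, ‖F z‖ ≤ C * Real.exp ((τ + ε) * ‖z‖)

section

open Polynomial Topology
open ProbabilityTheory (beta beta_pos betaMeasure betaPDF betaPDFReal)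

theorem ascPochhammer_eval_add {R : Type*} [CommSemiring R] (x : R) (m n : ℕ) :
    (ascPochhammer R (m + n)).eval x =
      (ascPochhammer R m).eval x * (ascPochhammer R n).eval (x + m) := by
  simp [← ascPochhammer_mul]

theorem fwdDiff_iter_one_eq_sum_choose {R : Type*} [CommRing R] (n : ℕ) (f : R → R) (x : R) :
    (fwdDiff 1)^[n] f x =
      (-1) ^ n * ∑ k ∈ Finset.range (n + 1), (-1) ^ k * n.choose k * f (x + k) := by
  rw [fwdDiff_iter_eq_sum_shift, Finset.mul_sum]
  refine Finset.sum_congr rfl fun k hk => ?_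
  have hkn : k ≤ n := Finset.mem_range_succ_iff.mp hk
  have hsign : (-1 : R) ^ (n - k) = (-1) ^ n * (-1) ^ k := by
    rw [← Nat.sub_add_cancel hkn, Nat.add_sub_cancel, pow_add, mul_assoc, ← mul_pow]
    simp
  simp only [zsmul_eq_mul, nsmul_eq_mul, mul_one]
  push_cast
  rw [hsign]
  ring

theorem sum_neg_one_pow_choose_mul_eval_eq_zero {R : Type*} [CommRing R] {n : ℕ} {p : R[X]}
    (hp : p.natDegree < n) :
    ∑ k ∈ Finset.range (n + 1), (-1) ^ k * n.choose k * p.eval (k : R) = 0 := by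
  have h := congrFun (Polynomial.fwdDiff_iter_eq_zero_of_degree_lt hp) 0
  rw [fwdDiff_iter_one_eq_sum_choose] at h
  simpa using h

theorem fwdDiff_iter_one_inv {K : Type*} [Field K] (n : ℕ) {x : K} (hx : ∀ k : ℕ, x + k ≠ 0) :
    (fwdDiff 1)^[n] (fun t : K => t⁻¹) x =
      (-1) ^ n * n.factorial / (ascPochhammer K (n + 1)).eval x := by
  induction n generalizing x with
  | zero => simp
  | succ n ih =>
    have hx' (k : ℕ) : x + 1 + k ≠ 0 := by
      have h := hx (k + 1)
      push_cast at h
      rwa [add_assoc, add_comm 1]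
    have hx0 : x ≠ 0 := by simpa using hx 0
    have hlast : x + (n + 1) ≠ 0 := by simpa using hx (n + 1)
    have hright : (ascPochhammer K (n + 2)).eval x =
        (ascPochhammer K (n + 1)).eval x * (x + (n + 1)) := by
      rw [ascPochhammer_succ_eval]; push_cast; rfl
    have hleft : (ascPochhammer K (n + 2)).eval x =
        x * (ascPochhammer K (n + 1)).eval (x + 1) := by
      rw [ascPochhammer_succ_left]; simp
    have hne (y : K) (hy : ∀ k : ℕ, y + k ≠ 0) : (ascPochhammer K (n + 1)).eval y ≠ 0 := by
      rw [Ne, ascPochhammer_eval_eq_zero_iff]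
      rintro ⟨k, -, hk⟩
      exact hy k (by rw [hk, add_neg_cancel])
    have hshift : (ascPochhammer K (n + 1)).eval (x + 1) =
        (ascPochhammer K (n + 1)).eval x * (x + (n + 1)) / x := by
      rw [eq_div_iff hx0, ← hright, hleft, mul_comm]
    have hne_x := hne x hx
    rw [Function.iterate_succ_apply', fwdDiff, ih hx, ih hx', hright, hshift, Nat.factorial_succ]
    field_simp
    push_cast
    ring

theorem sum_neg_one_pow_choose_div {K : Type*} [Field K] (n : ℕ) {x : K}
    (hx : ∀ k : ℕ, x + k ≠ 0) :
    ∑ k ∈ Finset.range (n + 1), (-1) ^ k * n.choose k * (x + k)⁻¹ =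
      n.factorial / (ascPochhammer K (n + 1)).eval x := by
  have h := fwdDiff_iter_one_inv n hx
  rw [fwdDiff_iter_one_eq_sum_choose, mul_div_assoc] at h
  exact mul_left_cancel₀ (by simp) h

theorem sum_neg_one_pow_choose_mul_eval_div {K : Type*} [Field K] {n : ℕ} {x : K}
    (hx : ∀ k : ℕ, x + k ≠ 0) {p : K[X]} (hp : p.natDegree ≤ n) :
    ∑ k ∈ Finset.range (n + 1), (-1) ^ k * n.choose k * (p.eval (k : K) / (x + k)) =
      p.eval (-x) * n.factorial / (ascPochhammer K (n + 1)).eval x := by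
  -- Dividing `p` by `X + x` leaves a quotient of degree `< n`, which the alternating sum kills.
  obtain ⟨q, hq⟩ : X - C (-x) ∣ p - C (p.eval (-x)) := X_sub_C_dvd_sub_C_eval
  have hsum_q : ∑ k ∈ Finset.range (n + 1), (-1) ^ k * n.choose k * q.eval (k : K) = 0 := by
    rcases eq_or_ne q 0 with rfl | hq0
    · simp
    refine sum_neg_one_pow_choose_mul_eval_eq_zero ?_
    have hdeg := congrArg natDegree hq
    rw [natDegree_sub_C, natDegree_mul (X_sub_C_ne_zero _) hq0, natDegree_X_sub_C] at hdeg
    omega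
  have hterm (k : ℕ) : p.eval (k : K) / (x + k) = q.eval (k : K) + p.eval (-x) * (x + k)⁻¹ := by
    have h := congrArg (eval (k : K)) hq
    simp only [eval_sub, eval_C, eval_mul, eval_X, sub_neg_eq_add] at h
    have hxk := hx k
    field_simp
    linear_combination h
  calc _ = ∑ k ∈ Finset.range (n + 1), ((-1) ^ k * n.choose k * q.eval (k : K) +
        p.eval (-x) * ((-1) ^ k * n.choose k * (x + k)⁻¹)) :=
        Finset.sum_congr rfl fun k _ => by rw [hterm]; ring
    _ = _ := by
        rw [Finset.sum_add_distrib, hsum_q, ← Finset.mul_sum, sum_neg_one_pow_choose_div n hx,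
          zero_add, mul_div_assoc]

theorem eval_nonneg_or_nonpos_of_forall_ne_zero {q : ℝ[X]} {a b : ℝ} (hab : a < b)
    (hq : ∀ s ∈ Ioo a b, q.eval s ≠ 0) :
    (∀ y ∈ Icc a b, 0 ≤ q.eval y) ∨ ∀ y ∈ Icc a b, q.eval y ≤ 0 := by
  have hsign : (∀ y ∈ Ioo a b, 0 ≤ q.eval y) ∨ ∀ y ∈ Ioo a b, q.eval y ≤ 0 := by
    by_contra! hcon
    obtain ⟨⟨u, hu, hu_neg⟩, v, hv, hv_pos⟩ := hcon
    obtain ⟨s, hs, hs0⟩ := isPreconnected_Ioo.intermediate_value hu hv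
      q.continuous.continuousOn ⟨hu_neg.le, hv_pos.le⟩
    exact hq s hs hs0
  rw [← closure_Ioo hab.ne]
  refine hsign.imp (fun h => ?_) fun h => ?_
  · exact closure_minimal (t := {y | 0 ≤ q.eval y}) h (isClosed_le continuous_const q.continuous)
  · exact closure_minimal (t := {y | q.eval y ≤ 0}) h (isClosed_le q.continuous continuous_const)

theorem exists_roots_mul_prod_nonneg_or_nonpos {q : ℝ[X]} (hq : q ≠ 0) {a b : ℝ} (hab : a < b) :
    ∃ S : Finset ℝ, (∀ s ∈ S, s ∈ Ioo a b ∧ q.IsRoot s) ∧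
      ((∀ y ∈ Icc a b, 0 ≤ (q * ∏ s ∈ S, (X - C s)).eval y) ∨
        ∀ y ∈ Icc a b, (q * ∏ s ∈ S, (X - C s)).eval y ≤ 0) := by
  induction hd : q.natDegree generalizing q with
  | zero =>
    have hroot : ∀ s ∈ Ioo a b, q.eval s ≠ 0 := fun s _ h => hq <| by
      rw [eq_C_of_natDegree_eq_zero hd] at h ⊢
      rw [eval_C] at h
      rw [h, C_0]
    exact ⟨∅, by simp, by simpa using eval_nonneg_or_nonpos_of_forall_ne_zero hab hroot⟩
  | succ d ih =>
    by_cases! hroot : ∀ s ∈ Ioo a b, q.eval s ≠ 0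
    · exact ⟨∅, by simp, by simpa using eval_nonneg_or_nonpos_of_forall_ne_zero hab hroot⟩
    obtain ⟨s, hs, hs0⟩ := hroot
    obtain ⟨q, rfl⟩ := dvd_iff_isRoot.mpr hs0
    have hq0 : q ≠ 0 := right_ne_zero_of_mul hq
    have hdeg : q.natDegree = d := by
      rw [natDegree_mul (X_sub_C_ne_zero _) hq0, natDegree_X_sub_C] at hd; omega
    obtain ⟨S, hS, hsign⟩ := ih hq0 hdeg
    have hroots : ∀ t ∈ S, t ∈ Ioo a b ∧ ((X - C s) * q).IsRoot t := fun t ht =>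
      ⟨(hS t ht).1, root_mul_left_of_isRoot _ (hS t ht).2⟩
    by_cases hsS : s ∈ S
    · refine ⟨S.erase s, fun t ht => hroots t (Finset.mem_of_mem_erase ht), ?_⟩
      have hprod : (X - C s) * q * ∏ t ∈ S.erase s, (X - C t) = q * ∏ t ∈ S, (X - C t) := by
        rw [← Finset.mul_prod_erase S _ hsS]; ring
      rwa [hprod]
    · refine ⟨insert s S, Finset.forall_mem_insert _ _ _ |>.mpr ⟨⟨hs, hs0⟩, hroots⟩, ?_⟩
      have hprod : (X - C s) * q * ∏ t ∈ insert s S, (X - C t) =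
          (X - C s) ^ 2 * (q * ∏ t ∈ S, (X - C t)) := by
        rw [Finset.prod_insert hsS]; ring
      simp only [hprod, eval_mul (p := (X - C s) ^ 2), eval_pow]
      exact hsign.imp (fun h y hy => mul_nonneg (sq_nonneg _) (h y hy)) fun h y hy =>
        mul_nonpos_of_nonneg_of_nonpos (sq_nonneg _) (h y hy)

/-- Positive definiteness of a linear functional `J` on polynomials, relative to `[0, 1]`: the
property of integration against a measure on `[0, 1]` of infinite support that makes Gaussian
quadrature work. -/
def PosDefOnUnitInterval (J : ℝ[X] →ₗ[ℝ] ℝ) : Prop :=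
  ∀ p : ℝ[X], p ≠ 0 → (∀ y ∈ Icc (0 : ℝ) 1, 0 ≤ p.eval y) → 0 < J p

/-- `P` is the polynomial of degree `n` that is orthogonal to lower degrees with respect to
`p ↦ J (X * p)`, normalized by `P(0) = 1`. Its roots are the nodes, besides `0`, of the `n`-th
Gauss–Radau quadrature of `J`. -/
structure IsRadauPolynomial (J : ℝ[X] →ₗ[ℝ] ℝ) (n : ℕ) (P : ℝ[X]) : Prop where
  natDegree_eq : P.natDegree = n
  eval_zero : P.eval 0 = 1
  orthogonal : ∀ s : ℝ[X], s.degree < n → J (X * P * s) = 0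

namespace IsRadauPolynomial

variable {J : ℝ[X] →ₗ[ℝ] ℝ} {n : ℕ} {P : ℝ[X]}

theorem ne_zero (hP : IsRadauPolynomial J n P) : P ≠ 0 := by
  rintro rfl
  simpa using hP.eval_zero

theorem map_sq (hP : IsRadauPolynomial J n P) : J (P ^ 2) = J P := by
  obtain ⟨s, hs⟩ : X ∣ P - 1 := by
    rw [X_dvd_iff, coeff_zero_eq_eval_zero, eval_sub, hP.eval_zero, eval_one, sub_self]
  have hs_deg : s.degree < n := by
    rcases eq_or_ne s 0 with rfl | hs0
    · exact WithBot.bot_lt_coe _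
    rw [← natDegree_lt_iff_degree_lt hs0]
    have h := congrArg natDegree hs
    rw [← C_1, natDegree_sub_C, hP.natDegree_eq, natDegree_X_mul hs0] at h
    omega
  rw [show P ^ 2 = P + X * P * s by linear_combination P * hs, map_add, hP.orthogonal s hs_deg,
    add_zero]

theorem map_pos (hP : IsRadauPolynomial J n P) (hJ : PosDefOnUnitInterval J) : 0 < J P := by
  rw [← hP.map_sq]
  refine hJ _ (pow_ne_zero 2 hP.ne_zero) fun y _ => ?_
  rw [eval_pow]
  positivity

theorem roots_toFinset (hP : IsRadauPolynomial J n P) (hJ : PosDefOnUnitInterval J) :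
    P.roots.toFinset.card = n ∧ ∀ s ∈ P.roots.toFinset, s ∈ Ioo (0 : ℝ) 1 := by
  obtain ⟨S, hS, hsign⟩ := exists_roots_mul_prod_nonneg_or_nonpos hP.ne_zero zero_lt_one
  set Q : ℝ[X] := ∏ s ∈ S, (X - C s)
  have hQ : Q.Monic := monic_prod_of_monic _ _ fun s _ => monic_X_sub_C s
  have hcard : n ≤ S.card := by
    by_contra! hlt
    have hdeg : Q.degree < n := by
      rw [← natDegree_lt_iff_degree_lt hQ.ne_zero,
        natDegree_prod_of_monic _ _ fun s _ => monic_X_sub_C s]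
      simpa using hlt
    have hne : X * P * Q ≠ 0 := mul_ne_zero (mul_ne_zero X_ne_zero hP.ne_zero) hQ.ne_zero
    have hzero := hP.orthogonal Q hdeg
    rcases hsign with h | h
    · refine (hJ _ hne fun y hy => ?_).ne' hzero
      rw [mul_assoc, eval_mul, eval_X]
      exact mul_nonneg hy.1 (h y hy)
    · refine (hJ _ (neg_ne_zero.mpr hne) fun y hy => ?_).ne' (by rw [map_neg, hzero, neg_zero])
      rw [mul_assoc, eval_neg, eval_mul, eval_X, neg_nonneg]
      exact mul_nonpos_of_nonneg_of_nonpos hy.1 (h y hy)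
  have hsub : S ⊆ P.roots.toFinset := fun s hs =>
    Multiset.mem_toFinset.mpr ((mem_roots hP.ne_zero).mpr (hS s hs).2)
  have hroots : P.roots.toFinset.card ≤ n :=
    (Multiset.toFinset_card_le _).trans (hP.natDegree_eq ▸ card_roots' P)
  have heq : S = P.roots.toFinset := Finset.eq_of_subset_of_card_le hsub (hroots.trans hcard)
  exact ⟨hroots.antisymm (heq ▸ hcard), fun s hs => (hS s (heq ▸ hs)).1⟩

theorem eq_C_mul_prod_roots (hP : IsRadauPolynomial J n P) (hJ : PosDefOnUnitInterval J) :
    P = C P.leadingCoeff * ∏ s ∈ P.roots.toFinset, (X - C s) := by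
  have hcard := (hP.roots_toFinset hJ).1
  have hroots : P.roots.card = P.natDegree := (card_roots' P).antisymm <| by
    rw [hP.natDegree_eq, ← hcard]; exact Multiset.toFinset_card_le _
  have hnodup : P.roots.Nodup := by
    rw [← Multiset.toFinset_card_eq_card_iff_nodup, hroots, hcard, hP.natDegree_eq]
  have hsplit := C_leadingCoeff_mul_prod_multiset_X_sub_C hroots
  rw [Finset.prod, Multiset.toFinset_val, hnodup.dedup, hsplit]

theorem eq_prod_roots (hP : IsRadauPolynomial J n P) (hJ : PosDefOnUnitInterval J) :
    P = ∏ s ∈ P.roots.toFinset, (1 - C s⁻¹ * X) := by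
  have hnode : ∀ s ∈ P.roots.toFinset, X - C s = C (-s) * (1 - C s⁻¹ * X) := fun s hs => by
    have hs0 : C s * C s⁻¹ = (1 : ℝ[X]) := by
      rw [← C_mul, mul_inv_cancel₀ ((hP.roots_toFinset hJ).2 s hs).1.ne', C_1]
    rw [C_neg]
    linear_combination (-X) * hs0
  obtain ⟨c, hc⟩ : ∃ c : ℝ, P = C c * ∏ s ∈ P.roots.toFinset, (1 - C s⁻¹ * X) :=
    ⟨P.leadingCoeff * ∏ s ∈ P.roots.toFinset, (-s), by
      conv_lhs => rw [hP.eq_C_mul_prod_roots hJ, Finset.prod_congr rfl hnode]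
      rw [Finset.prod_mul_distrib, C_mul, map_prod, mul_assoc]⟩
  have hc1 : c = 1 := by
    simpa [eval_prod, hP.eval_zero] using (congrArg (eval 0) hc).symm
  rwa [hc1, C_1, one_mul] at hc

theorem map_eq_zero (hP : IsRadauPolynomial J n P) (hJ : PosDefOnUnitInterval J) {r : ℝ[X]}
    (hr : r.natDegree ≤ 2 * n) (hr0 : r.eval 0 = 0)
    (hroots : ∀ s ∈ P.roots.toFinset, r.eval s = 0) : J r = 0 := by
  have hPr : P ∣ r := by
    rw [hP.eq_C_mul_prod_roots hJ,
      (isUnit_C.mpr (leadingCoeff_ne_zero.mpr hP.ne_zero).isUnit).mul_left_dvd]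
    exact Finset.prod_dvd_of_coprime
      (fun a _ b _ hab => isCoprime_X_sub_C_of_isUnit_sub (sub_ne_zero.mpr hab).isUnit)
      fun s hs => dvd_iff_isRoot.mpr (hroots s hs)
  have hcoprime : IsCoprime X P := by
    rw [← sub_zero X, ← C_0]
    refine (irreducible_X_sub_C (0 : ℝ)).coprime_iff_not_dvd.mpr ?_
    rw [dvd_iff_isRoot, IsRoot, hP.eval_zero]
    exact one_ne_zero
  obtain ⟨s, rfl⟩ := hcoprime.mul_dvd (X_dvd_iff.mpr (by rw [coeff_zero_eq_eval_zero, hr0])) hPr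
  rcases eq_or_ne s 0 with rfl | hs0
  · simp
  refine hP.orthogonal s ?_
  rw [← natDegree_lt_iff_degree_lt hs0]
  rw [natDegree_mul (mul_ne_zero X_ne_zero hP.ne_zero) hs0, natDegree_X_mul hP.ne_zero,
    hP.natDegree_eq] at hr
  omega

theorem map_mul_eval_zero_le (hP : IsRadauPolynomial J n P) (hJ : PosDefOnUnitInterval J)
    {p : ℝ[X]} (hp : p.natDegree ≤ 2 * n) (hp0 : ∀ y ∈ Icc (0 : ℝ) 1, 0 ≤ p.eval y) :
    J P * p.eval 0 ≤ J p := by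
  obtain ⟨hcard, hmem⟩ := hP.roots_toFinset hJ
  set S := P.roots.toFinset with hS
  have h0S : (0 : ℝ) ∉ S := fun h => (hmem 0 h).1.false
  set ℓ : ℝ → ℝ[X] := fun s => Lagrange.basis (insert 0 S) id s
  have hinj : Set.InjOn id ((insert 0 S : Finset ℝ) : Set ℝ) := injOn_id _
  have hℓ_deg (s : ℝ) (hs : s ∈ S) : (ℓ s ^ 2).natDegree = 2 * n := by
    rw [natDegree_pow, Lagrange.natDegree_basis hinj (Finset.mem_insert_of_mem hs),
      Finset.card_insert_of_notMem h0S, hcard, Nat.add_sub_cancel]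
  -- Both sides below agree at the nodes, so squares of Lagrange polynomials give the weights.
  have hquad : J (p - (p.eval 0 • P ^ 2 + ∑ s ∈ S, p.eval s • ℓ s ^ 2)) = 0 := by
    refine hP.map_eq_zero hJ ?_ ?_ fun t ht => ?_
    · refine (natDegree_sub_le _ _).trans (max_le hp (natDegree_add_le_of_degree_le ?_ ?_))
      · exact (natDegree_smul_le _ _).trans (by rw [natDegree_pow, hP.natDegree_eq])
      · exact natDegree_sum_le_of_forall_le _ _ fun s hs =>
          (natDegree_smul_le _ _).trans (hℓ_deg s hs).le
    · have hℓ0 : ∀ s ∈ S, (ℓ s).eval 0 = 0 := fun s hs =>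
        Lagrange.eval_basis_of_ne (v := id) (ne_of_mem_of_not_mem hs h0S)
          (Finset.mem_insert_self 0 S)
      simp +contextual [eval_finsetSum, hP.eval_zero, hℓ0, Finset.sum_eq_zero]
    · have hPt : P.eval t = 0 := by
        simpa [hS, hP.ne_zero] using ht
      have hℓt : ∀ s ∈ S, s ≠ t → (ℓ s).eval t = 0 := fun s _ hst =>
        Lagrange.eval_basis_of_ne (v := id) hst (Finset.mem_insert_of_mem ht)
      have hℓtt : (ℓ t).eval t = 1 :=
        Lagrange.eval_basis_self hinj (Finset.mem_insert_of_mem ht)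
      simp only [eval_sub, eval_add, eval_smul, eval_pow, hPt, eval_finsetSum]
      rw [Finset.sum_eq_single_of_mem t ht fun s hs hst => by rw [hℓt s hs hst]; simp, hℓtt]
      simp
  have hweights : 0 ≤ ∑ s ∈ S, p.eval s * J (ℓ s ^ 2) := Finset.sum_nonneg fun s hs =>
    mul_nonneg (hp0 s (Ioo_subset_Icc_self (hmem s hs))) (hJ _ (pow_ne_zero _
      (Lagrange.basis_ne_zero hinj (Finset.mem_insert_of_mem hs)))
      fun y _ => by rw [eval_pow]; positivity).le
  simp only [map_sub, map_add, map_sum, map_smul, smul_eq_mul, hP.map_sq] at hquad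
  linarith

end IsRadauPolynomial

theorem Gamma_add_natCast_eq_mul_ascPochhammer {x : ℝ} (hx : 0 < x) (n : ℕ) :
    Real.Gamma (x + n) = Real.Gamma x * (ascPochhammer ℝ n).eval x := by
  induction n with
  | zero => simp
  | succ n ih =>
    rw [ascPochhammer_succ_eval, ← mul_assoc, ← ih, Nat.cast_succ, ← add_assoc,
      Real.Gamma_add_one (by positivity), mul_comm]

theorem ascPochhammer_eval_eq_prod {R : Type*} [CommSemiring R] (n : ℕ) (x : R) :
    (ascPochhammer R n).eval x = ∏ j ∈ Finset.range n, (x + j) := by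
  induction n with
  | zero => simp
  | succ n ih => rw [ascPochhammer_succ_eval, ih, Finset.prod_range_succ]

theorem tendsto_ascPochhammer_eval_div {x : ℝ} (hx : 0 < x) :
    Tendsto (fun n : ℕ => (ascPochhammer ℝ n).eval x / ((n : ℝ) ^ (x - 1) * n.factorial)) atTop
      (𝓝 (Real.Gamma x)⁻¹) := by
  have hlim := ((Real.GammaSeq_tendsto_Gamma x).inv₀ (Real.Gamma_pos_of_pos hx).ne').mul
    (tendsto_natCast_div_add_atTop x)
  rw [mul_one] at hlim
  refine hlim.congr' ?_
  filter_upwards [eventually_gt_atTop 0] with n hn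
  have hn' : (0 : ℝ) < n := by exact_mod_cast hn
  have hxn : (n : ℝ) + x ≠ 0 := by positivity
  rw [Real.GammaSeq, ← ascPochhammer_eval_eq_prod, ascPochhammer_succ_eval,
    Real.rpow_sub_one hn'.ne', add_comm x]
  field_simp

theorem measurable_betaPDF (a b : ℝ) : Measurable (betaPDF a b) := by
  unfold betaPDF
  fun_prop

theorem ae_mem_Ioo_betaMeasure (a b : ℝ) : ∀ᵐ y ∂betaMeasure a b, y ∈ Ioo (0 : ℝ) 1 := by
  rw [betaMeasure, ae_withDensity_iff (measurable_betaPDF a b)]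
  refine Eventually.of_forall fun y hy => ?_
  by_contra hmem
  rw [mem_Ioo, not_and_or, not_lt, not_lt] at hmem
  rcases hmem with h | h
  · exact hy (ProbabilityTheory.betaPDF_eq_zero_of_nonpos h)
  · exact hy (ProbabilityTheory.betaPDF_eq_zero_of_one_le h)

section Beta

variable {a b : ℝ}

theorem betaPDFReal_nonneg (ha : 0 < a) (hb : 0 < b) (y : ℝ) : 0 ≤ betaPDFReal a b y := by
  by_cases hy : 0 < y ∧ y < 1
  · exact (ProbabilityTheory.betaPDFReal_pos hy.1 hy.2 ha hb).le
  · rw [betaPDFReal, if_neg hy]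

theorem integral_betaMeasure (ha : 0 < a) (hb : 0 < b) (g : ℝ → ℝ) :
    ∫ y, g y ∂betaMeasure a b = ∫ y, betaPDFReal a b y * g y := by
  rw [betaMeasure, integral_withDensity_eq_integral_toReal_smul (measurable_betaPDF a b)
    (Eventually.of_forall fun _ => ENNReal.ofReal_lt_top)]
  simp only [betaPDF, ENNReal.toReal_ofReal (betaPDFReal_nonneg ha hb _), smul_eq_mul]

theorem integral_betaPDFReal (ha : 0 < a) (hb : 0 < b) : ∫ y, betaPDFReal a b y = 1 := by
  have := ProbabilityTheory.isProbabilityMeasureBeta ha hb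
  simpa using (integral_betaMeasure ha hb fun _ => 1).symm

theorem integral_pow_betaMeasure (ha : 0 < a) (hb : 0 < b) (k : ℕ) :
    ∫ y, y ^ k ∂betaMeasure a b =
      (ascPochhammer ℝ k).eval a / (ascPochhammer ℝ k).eval (a + b) := by
  have hdens (y : ℝ) : betaPDFReal a b y * y ^ k =
      beta (a + k) b / beta a b * betaPDFReal (a + k) b y := by
    by_cases hy : 0 < y ∧ y < 1
    · have hbeta := (beta_pos (add_pos_of_pos_of_nonneg ha k.cast_nonneg) hb).ne'
      rw [betaPDFReal, betaPDFReal, if_pos hy, if_pos hy, add_sub_right_comm,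
        Real.rpow_add_natCast hy.1.ne']
      field_simp
    · simp [betaPDFReal, hy]
  have hak : 0 < a + k := by positivity
  rw [integral_betaMeasure ha hb, integral_congr_ae (Eventually.of_forall hdens),
    integral_const_mul, integral_betaPDFReal hak hb, mul_one, beta, beta, add_right_comm,
    Gamma_add_natCast_eq_mul_ascPochhammer ha,
    Gamma_add_natCast_eq_mul_ascPochhammer (add_pos ha hb)]
  have := Real.Gamma_pos_of_pos ha
  have := Real.Gamma_pos_of_pos hb
  have := Real.Gamma_pos_of_pos (add_pos ha hb)
  field_simp

theorem integrable_eval_betaMeasure (ha : 0 < a) (hb : 0 < b) (p : ℝ[X]) :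
    Integrable (fun y => p.eval y) (betaMeasure a b) := by
  have := ProbabilityTheory.isProbabilityMeasureBeta ha hb
  obtain ⟨C, hC⟩ :=
    isCompact_Icc.exists_bound_of_continuousOn (p.continuous.continuousOn (s := Icc 0 1))
  refine Integrable.of_bound p.continuous.aestronglyMeasurable C ?_
  filter_upwards [ae_mem_Ioo_betaMeasure a b] with y hy using hC y (Ioo_subset_Icc_self hy)

/-- Integration of polynomials against the beta distribution with parameters `a` and `b`. -/
noncomputable def betaFunctional (ha : 0 < a) (hb : 0 < b) : ℝ[X] →ₗ[ℝ] ℝ where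
  toFun p := ∫ y, p.eval y ∂betaMeasure a b
  map_add' p q := by
    simp only [eval_add]
    exact integral_add (integrable_eval_betaMeasure ha hb p) (integrable_eval_betaMeasure ha hb q)
  map_smul' c p := by
    simp only [eval_smul, smul_eq_mul, RingHom.id_apply]
    exact integral_const_mul c _

theorem betaFunctional_apply (ha : 0 < a) (hb : 0 < b) (p : ℝ[X]) :
    betaFunctional ha hb p = ∫ y, p.eval y ∂betaMeasure a b := rfl

theorem betaFunctional_X_pow (ha : 0 < a) (hb : 0 < b) (k : ℕ) :
    betaFunctional ha hb (X ^ k) =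
      (ascPochhammer ℝ k).eval a / (ascPochhammer ℝ k).eval (a + b) := by
  simp only [betaFunctional_apply, eval_pow, eval_X, integral_pow_betaMeasure ha hb]

theorem posDefOnUnitInterval_betaFunctional (ha : 0 < a) (hb : 0 < b) :
    PosDefOnUnitInterval (betaFunctional ha hb) := by
  intro p hp hnonneg
  have := ProbabilityTheory.isProbabilityMeasureBeta ha hb
  have hroots : ∀ᵐ y ∂betaMeasure a b, p.eval y ≠ 0 := by
    have hvol : ∀ᵐ y : ℝ, p.eval y ≠ 0 := by
      simpa [ae_iff, IsRoot] using (finite_setOfPred_isRoot hp).measure_zero volume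
    exact (withDensity_absolutelyContinuous volume (betaPDF a b)).ae_le hvol
  rw [betaFunctional_apply, integral_pos_iff_support_of_nonneg_ae]
  · rw [show Function.support (fun y => p.eval y) = {y | p.eval y ≠ 0} from rfl,
      measure_congr (eventuallyEq_univ.mpr hroots), measure_univ]
    exact one_pos
  · filter_upwards [ae_mem_Ioo_betaMeasure a b] with y hy using hnonneg y (Ioo_subset_Icc_self hy)
  · exact integrable_eval_betaMeasure ha hb p

/-- The Jacobi polynomial `₂F₁(-n, n + a + b; a + 1; X)`, i.e. `P_n^{(a, b - 1)}(1 - 2X)`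
normalized to take the value `1` at `0`. It is orthogonal for the weight `y ^ a (1 - y) ^ (b - 1)`
on `[0, 1]`, that is, for `p ↦ betaFunctional (X * p)`. -/
noncomputable def jacobiPolynomial (a b : ℝ) (n : ℕ) : ℝ[X] :=
  ∑ k ∈ Finset.range (n + 1), monomial k ((-1) ^ k * n.choose k *
    ((ascPochhammer ℝ k).eval (n + a + b) / (ascPochhammer ℝ k).eval (a + 1)))

theorem coeff_jacobiPolynomial (a b : ℝ) (n k : ℕ) :
    (jacobiPolynomial a b n).coeff k = (-1) ^ k * n.choose k *
      ((ascPochhammer ℝ k).eval (n + a + b) / (ascPochhammer ℝ k).eval (a + 1)) := by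
  simp only [jacobiPolynomial, finsetSum_coeff, coeff_monomial, Finset.sum_ite_eq',
    Finset.mem_range, Nat.lt_succ_iff, ite_eq_left_iff, not_le]
  intro h
  simp [Nat.choose_eq_zero_of_lt h]

theorem natDegree_jacobiPolynomial (ha : 0 < a) (hb : 0 < b) (n : ℕ) :
    (jacobiPolynomial a b n).natDegree = n := by
  refine natDegree_eq_of_le_of_coeff_ne_zero ?_ ?_
  · refine natDegree_le_iff_coeff_eq_zero.mpr fun k hk => ?_
    simp [coeff_jacobiPolynomial, Nat.choose_eq_zero_of_lt hk]
  · have hnum := ascPochhammer_pos n (n + a + b) (by positivity)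
    have hden := ascPochhammer_pos n (a + 1) (by positivity)
    simp [coeff_jacobiPolynomial, hnum.ne', hden.ne']

theorem eval_zero_jacobiPolynomial (a b : ℝ) (n : ℕ) : (jacobiPolynomial a b n).eval 0 = 1 := by
  simp [← coeff_zero_eq_eval_zero, coeff_jacobiPolynomial]

theorem betaFunctional_X_mul_jacobiPolynomial_mul_X_pow (ha : 0 < a) (hb : 0 < b) {n j : ℕ}
    (hj : j < n) : betaFunctional ha hb (X * jacobiPolynomial a b n * X ^ j) = 0 := by
  obtain ⟨i, rfl⟩ : ∃ i, n = j + 1 + i := Nat.exists_eq_add_of_lt hj |>.imp fun i hi => by omega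
  set n := j + 1 + i
  set q : ℝ[X] := C (a / (ascPochhammer ℝ n).eval (a + b)) *
    ((ascPochhammer ℝ j).comp (X + C (a + 1)) * (ascPochhammer ℝ i).comp (X + C (a + b + j + 1)))
    with hq
  have hdeg : q.natDegree < n := by
    refine (natDegree_C_mul_le _ _).trans_lt (natDegree_mul_le.trans_lt ?_)
    simp only [natDegree_comp, ascPochhammer_natDegree, natDegree_X_add_C]
    omega
  have hterm (k : ℕ) : (ascPochhammer ℝ k).eval (n + a + b) / (ascPochhammer ℝ k).eval (a + 1) *
      ((ascPochhammer ℝ (k + 1 + j)).eval a / (ascPochhammer ℝ (k + 1 + j)).eval (a + b)) =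
      q.eval (k : ℝ) := by
    have hsplit : (ascPochhammer ℝ n).eval (a + b) * (ascPochhammer ℝ k).eval (n + a + b) =
        (ascPochhammer ℝ (k + 1 + j)).eval (a + b) *
          (ascPochhammer ℝ i).eval (k + (a + b + j + 1)) := by
      rw [show (n : ℝ) + a + b = a + b + n by ring, ← ascPochhammer_eval_add,
        show (k : ℝ) + (a + b + j + 1) = a + b + (k + 1 + j : ℕ) by push_cast; ring,
        ← ascPochhammer_eval_add, show n + k = k + 1 + j + i by omega]
    have hnum : (ascPochhammer ℝ (k + 1 + j)).eval a =
        a * (ascPochhammer ℝ k).eval (a + 1) * (ascPochhammer ℝ j).eval (k + (a + 1)) := by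
      rw [show k + 1 + j = 1 + k + j by ring, ascPochhammer_eval_add, ascPochhammer_eval_add]
      push_cast
      simp [add_comm, add_left_comm]
    have h1 := (ascPochhammer_pos k (a + 1) (by positivity)).ne'
    have h2 := (ascPochhammer_pos (k + 1 + j) (a + b) (by positivity)).ne'
    have h3 := (ascPochhammer_pos n (a + b) (by positivity)).ne'
    simp only [hq, eval_mul, eval_C, eval_comp, eval_add, eval_X, hnum]
    field_simp
    linear_combination (ascPochhammer ℝ j).eval (k + (a + 1)) * hsplit
  have hexpand : X * jacobiPolynomial a b n * X ^ j = ∑ k ∈ Finset.range (n + 1),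
      ((-1 : ℝ) ^ k * n.choose k * ((ascPochhammer ℝ k).eval (n + a + b) /
        (ascPochhammer ℝ k).eval (a + 1))) • (X : ℝ[X]) ^ (k + 1 + j) := by
    simp only [jacobiPolynomial, ← C_mul_X_pow_eq_monomial, Finset.mul_sum, Finset.sum_mul,
      smul_eq_C_mul]
    exact Finset.sum_congr rfl fun k _ => by ring
  simp only [hexpand, map_sum, map_smul, betaFunctional_X_pow, smul_eq_mul, mul_assoc]
  simp only [hterm, ← mul_assoc]
  exact sum_neg_one_pow_choose_mul_eval_eq_zero hdeg

theorem isRadauPolynomial_jacobiPolynomial (ha : 0 < a) (hb : 0 < b) (n : ℕ) :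
    IsRadauPolynomial (betaFunctional ha hb) n (jacobiPolynomial a b n) where
  natDegree_eq := natDegree_jacobiPolynomial ha hb n
  eval_zero := eval_zero_jacobiPolynomial a b n
  orthogonal s hs := by
    rw [← sum_monomial_eq s, Polynomial.sum, Finset.mul_sum, map_sum]
    refine Finset.sum_eq_zero fun j hj => ?_
    have hjn : j < n := by
      exact_mod_cast (le_degree_of_ne_zero (mem_support_iff.mp hj)).trans_lt hs
    rw [← C_mul_X_pow_eq_monomial, ← smul_eq_C_mul, mul_smul_comm, map_smul,
      betaFunctional_X_mul_jacobiPolynomial_mul_X_pow ha hb hjn, smul_zero]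

theorem betaFunctional_jacobiPolynomial (ha : 0 < a) (hb : 0 < b) (n : ℕ) :
    betaFunctional ha hb (jacobiPolynomial a b n) = (ascPochhammer ℝ n).eval b * n.factorial /
      ((ascPochhammer ℝ n).eval (a + 1) * (ascPochhammer ℝ n).eval (a + b)) := by
  set q : ℝ[X] := C (a / (ascPochhammer ℝ n).eval (a + b)) *
    (ascPochhammer ℝ n).comp (X + C (a + b)) with hq
  have hdeg : q.natDegree ≤ n := by
    refine (natDegree_C_mul_le _ _).trans ?_
    simp only [natDegree_comp, ascPochhammer_natDegree, natDegree_X_add_C, mul_one, le_refl]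
  have hsucc : (ascPochhammer ℝ (n + 1)).eval a = a * (ascPochhammer ℝ n).eval (a + 1) := by
    simp [ascPochhammer_succ_left]
  have hab := (ascPochhammer_pos n (a + b) (by positivity)).ne'
  have hterm (k : ℕ) : (ascPochhammer ℝ k).eval (n + a + b) / (ascPochhammer ℝ k).eval (a + 1) *
      ((ascPochhammer ℝ k).eval a / (ascPochhammer ℝ k).eval (a + b)) =
      q.eval (k : ℝ) / (a + k) := by
    have hsplit : (ascPochhammer ℝ n).eval (a + b) * (ascPochhammer ℝ k).eval (n + a + b) =
        (ascPochhammer ℝ k).eval (a + b) * (ascPochhammer ℝ n).eval (k + (a + b)) := by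
      rw [show (n : ℝ) + a + b = a + b + n by ring, ← ascPochhammer_eval_add, add_comm (k : ℝ),
        ← ascPochhammer_eval_add, add_comm n k]
    have hratio : (ascPochhammer ℝ k).eval a * (a + k) = a * (ascPochhammer ℝ k).eval (a + 1) := by
      rw [← ascPochhammer_succ_eval]
      simp [ascPochhammer_succ_left]
    have h1 := (ascPochhammer_pos k (a + 1) (by positivity)).ne'
    have h2 := (ascPochhammer_pos k (a + b) (by positivity)).ne'
    have hak : a + k ≠ 0 := by positivity
    simp only [hq, eval_mul, eval_C, eval_comp, eval_add, eval_X]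
    field_simp
    linear_combination (ascPochhammer ℝ k).eval a * (a + k) * hsplit +
      (ascPochhammer ℝ k).eval (a + b) * (ascPochhammer ℝ n).eval (k + (a + b)) * hratio
  simp only [jacobiPolynomial, map_sum, ← C_mul_X_pow_eq_monomial, ← smul_eq_C_mul, map_smul,
    betaFunctional_X_pow, smul_eq_mul, mul_assoc]
  simp only [hterm, ← mul_assoc]
  rw [sum_neg_one_pow_choose_mul_eval_div (fun k => by positivity) hdeg, hsucc]
  have h1 := (ascPochhammer_pos n (a + 1) (by positivity)).ne'
  simp only [hq, eval_mul, eval_C, eval_comp, eval_add, eval_X, neg_add_cancel_left]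
  field_simp

theorem tendsto_rpow_mul_betaFunctional_jacobiPolynomial (ha : 0 < a) (hb : 0 < b) :
    Tendsto (fun n : ℕ => (n : ℝ) ^ (2 * a) *
        (beta a b * betaFunctional ha hb (jacobiPolynomial a b n))) atTop
      (𝓝 (Real.Gamma a * Real.Gamma (a + 1))) := by
  have hGa := (Real.Gamma_pos_of_pos ha).ne'
  have hGa' := (Real.Gamma_pos_of_pos (by positivity : 0 < a + 1)).ne'
  have hGb := (Real.Gamma_pos_of_pos hb).ne'
  have hGab := (Real.Gamma_pos_of_pos (add_pos ha hb)).ne'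
  have hlim := ((tendsto_ascPochhammer_eval_div hb).div
    ((tendsto_ascPochhammer_eval_div (by positivity : 0 < a + 1)).mul
      (tendsto_ascPochhammer_eval_div (add_pos ha hb)))
    (mul_ne_zero (inv_ne_zero hGa') (inv_ne_zero hGab))).const_mul (beta a b)
  have hvalue : beta a b * ((Real.Gamma b)⁻¹ / ((Real.Gamma (a + 1))⁻¹ * (Real.Gamma (a + b))⁻¹)) =
      Real.Gamma a * Real.Gamma (a + 1) := by
    rw [beta]
    field_simp
  rw [hvalue] at hlim
  refine hlim.congr' ?_
  filter_upwards [eventually_gt_atTop 0] with n hn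
  have hn' : (0 : ℝ) < n := by exact_mod_cast hn
  have hpow : (n : ℝ) ^ (a * 2) * (n : ℝ) ^ (b - 1) =
      (n : ℝ) ^ (a + 1 - 1) * (n : ℝ) ^ (a + b - 1) := by
    rw [← Real.rpow_add hn', ← Real.rpow_add hn']
    ring_nf
  have h1 := (ascPochhammer_pos n (a + 1) (by positivity)).ne'
  have h2 := (ascPochhammer_pos n (a + b) (by positivity)).ne'
  rw [betaFunctional_jacobiPolynomial, Pi.div_apply]
  field_simp
  linear_combination (-(beta a b * (ascPochhammer ℝ n).eval b)) * hpow

end Beta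

section SinWeight

variable {ν L : ℝ}

/-- A `2πL`-periodic substitute for `|x| ^ (2ν + 1)`, cut off to one period. It turns integration of
trigonometric polynomials over a period into integration of polynomials against a beta
distribution. -/
noncomputable def sinWeight (ν L x : ℝ) : ℝ :=
  (Ioo (-(Real.pi * L)) (Real.pi * L)).indicator
    (fun x => |2 * L * Real.sin (x / (2 * L))| ^ (2 * ν + 1)) x

theorem sinWeight_of_abs_lt {x : ℝ} (hx : |x| < Real.pi * L) :
    sinWeight ν L x = |2 * L * Real.sin (x / (2 * L))| ^ (2 * ν + 1) :=
  indicator_of_mem (mem_Ioo.mpr (abs_lt.mp hx)) _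

theorem sinWeight_of_le_abs {x : ℝ} (hx : Real.pi * L ≤ |x|) : sinWeight ν L x = 0 :=
  indicator_of_notMem (fun h => hx.not_gt (abs_lt.mpr (mem_Ioo.mp h))) _

theorem sinWeight_nonneg (ν L x : ℝ) : 0 ≤ sinWeight ν L x :=
  indicator_nonneg (fun _ _ => by positivity) _

theorem sinWeight_neg (ν L x : ℝ) : sinWeight ν L (-x) = sinWeight ν L x := by
  rcases lt_or_ge |x| (Real.pi * L) with hx | hx
  · rw [sinWeight_of_abs_lt hx, sinWeight_of_abs_lt (by rwa [abs_neg]), neg_div, Real.sin_neg,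
      mul_neg, abs_neg]
  · rw [sinWeight_of_le_abs hx, sinWeight_of_le_abs (by rwa [abs_neg])]

theorem sinWeight_abs (ν L x : ℝ) : sinWeight ν L |x| = sinWeight ν L x := by
  rcases abs_choice x with h | h <;> rw [h]
  exact sinWeight_neg ν L x

theorem measurable_sinWeight (ν L : ℝ) : Measurable (sinWeight ν L) := by
  have : Measurable fun x : ℝ => |2 * L * Real.sin (x / (2 * L))| := by fun_prop
  exact (this.pow_const _).indicator measurableSet_Ioo

theorem abs_two_mul_mul_sin_le (hL : 0 < L) (x : ℝ) : |2 * L * Real.sin (x / (2 * L))| ≤ |x| := by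
  have h2L : 0 < 2 * L := by positivity
  have hsin := Real.abs_sin_le_abs (x := x / (2 * L))
  rwa [abs_div, abs_of_pos h2L, le_div_iff₀ h2L, mul_comm, ← abs_of_pos h2L, ← abs_mul,
    abs_of_pos h2L] at hsin

theorem two_div_pi_mul_abs_le (hL : 0 < L) {x : ℝ} (hx : |x| < Real.pi * L) :
    2 / Real.pi * |x| ≤ |2 * L * Real.sin (x / (2 * L))| := by
  have h2L : 0 < 2 * L := by positivity
  have hdiv : |x / (2 * L)| = |x| / (2 * L) := by rw [abs_div, abs_of_pos h2L]
  have hsin := Real.mul_abs_le_abs_sin (x := x / (2 * L)) (by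
    rw [hdiv, div_le_iff₀ h2L]
    linarith)
  calc 2 / Real.pi * |x| = 2 * L * (2 / Real.pi * |x / (2 * L)|) := by
        rw [hdiv]
        field_simp
    _ ≤ 2 * L * |Real.sin (x / (2 * L))| := by gcongr
    _ = _ := by rw [abs_mul, abs_of_pos h2L]

theorem sinWeight_le (ν : ℝ) (hL : 0 < L) {x : ℝ} (hx : x ≠ 0) :
    sinWeight ν L x ≤ max 1 ((2 / Real.pi) ^ (2 * ν + 1)) * |x| ^ (2 * ν + 1) := by
  rcases le_or_gt (Real.pi * L) |x| with hxL | hxL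
  · rw [sinWeight_of_le_abs hxL]
    positivity
  have := abs_pos.mpr hx
  rw [sinWeight_of_abs_lt hxL]
  rcases le_total 0 (2 * ν + 1) with h | h
  · calc _ ≤ |x| ^ (2 * ν + 1) :=
          Real.rpow_le_rpow (abs_nonneg _) (abs_two_mul_mul_sin_le hL x) h
      _ ≤ _ := le_mul_of_one_le_left (by positivity) (le_max_left _ _)
  · calc _ ≤ (2 / Real.pi * |x|) ^ (2 * ν + 1) :=
          Real.rpow_le_rpow_of_nonpos (by positivity) (two_div_pi_mul_abs_le hL hxL) h
      _ = (2 / Real.pi) ^ (2 * ν + 1) * |x| ^ (2 * ν + 1) :=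
          Real.mul_rpow (by positivity) (by positivity)
      _ ≤ _ := by gcongr; exact le_max_right _ _

theorem tendsto_mul_sin_div (x : ℝ) : Tendsto (fun t => t * Real.sin (x / t)) atTop (𝓝 x) := by
  have hsinc := ((Real.continuous_sinc.tendsto 0).comp
    (tendsto_const_nhds.div_atTop tendsto_id : Tendsto (fun t => x / t) atTop (𝓝 0))).const_mul x
  rw [Real.sinc_zero, mul_one] at hsinc
  refine hsinc.congr' ?_
  filter_upwards [eventually_gt_atTop 0] with t ht
  rcases eq_or_ne x 0 with rfl | hx
  · simp
  · rw [Function.comp_apply, Real.sinc_of_ne_zero (by positivity)]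
    field_simp

theorem tendsto_sinWeight (ν : ℝ) {x : ℝ} (hx : x ≠ 0) :
    Tendsto (fun L => sinWeight ν L x) atTop (𝓝 (|x| ^ (2 * ν + 1))) := by
  have hlim := (((tendsto_mul_sin_div x).comp (tendsto_id.const_mul_atTop two_pos)).abs).rpow_const
    (p := 2 * ν + 1) (Or.inl (abs_ne_zero.mpr hx))
  refine hlim.congr' ?_
  filter_upwards [(tendsto_id.const_mul_atTop Real.pi_pos).eventually_gt_atTop |x|] with L hL
  exact (sinWeight_of_abs_lt hL).symm

theorem image_sin_sq_Ioo (hL : 0 < L) :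
    (fun x => Real.sin (x / (2 * L)) ^ 2) '' Ioo 0 (Real.pi * L) = Ioo 0 1 := by
  ext y
  constructor
  · rintro ⟨x, ⟨hx0, hx1⟩, rfl⟩
    have h0 : 0 < x / (2 * L) := by positivity
    have h1 : x / (2 * L) < Real.pi / 2 := by
      rw [div_lt_iff₀ (by positivity)]
      linarith
    have hsin := Real.sin_pos_of_pos_of_lt_pi h0 (by linarith)
    have hcos := Real.cos_pos_of_mem_Ioo ⟨by linarith, h1⟩
    refine ⟨by positivity, ?_⟩
    nlinarith [Real.sin_sq_add_cos_sq (x / (2 * L))]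
  · rintro ⟨hy0, hy1⟩
    have hsqrt : √y < 1 := by rwa [Real.sqrt_lt' one_pos, one_pow]
    have hpos : 0 < Real.arcsin √y := Real.arcsin_pos.mpr (Real.sqrt_pos.mpr hy0)
    have hlt : Real.arcsin √y < Real.pi / 2 := Real.arcsin_lt_pi_div_two.mpr hsqrt
    refine ⟨2 * L * Real.arcsin √y, ⟨by positivity, by nlinarith⟩, ?_⟩
    have hdiv : 2 * L * Real.arcsin √y / (2 * L) = Real.arcsin √y := by field_simp
    simp only [hdiv]
    rw [Real.sin_arcsin (by linarith [Real.sqrt_nonneg y]) hsqrt.le,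
      Real.sq_sqrt hy0.le]

theorem injOn_sin_sq (hL : 0 < L) :
    InjOn (fun x => Real.sin (x / (2 * L)) ^ 2) (Ioo 0 (Real.pi * L)) := by
  have hmem {x : ℝ} (hx : x ∈ Ioo 0 (Real.pi * L)) : x / (2 * L) ∈ Ioo 0 (Real.pi / 2) :=
    ⟨div_pos hx.1 (by positivity), by rw [div_lt_iff₀ (by positivity)]; linarith [hx.2]⟩
  intro x hx y hy hxy
  obtain ⟨hx0, hx1⟩ := hmem hx
  obtain ⟨hy0, hy1⟩ := hmem hy
  have hsin : Real.sin (x / (2 * L)) = Real.sin (y / (2 * L)) :=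
    (pow_left_inj₀ (Real.sin_nonneg_of_nonneg_of_le_pi hx0.le (by linarith))
      (Real.sin_nonneg_of_nonneg_of_le_pi hy0.le (by linarith)) two_ne_zero).mp hxy
  have := Real.injOn_sin ⟨by linarith, hx1.le⟩ ⟨by linarith, hy1.le⟩ hsin
  field_simp at this
  exact this

theorem hasDerivAt_sin_sq (hL : L ≠ 0) (x : ℝ) :
    HasDerivAt (fun x => Real.sin (x / (2 * L)) ^ 2)
      (Real.sin (x / (2 * L)) * Real.cos (x / (2 * L)) / L) x := by
  have h := (((hasDerivAt_id x).div_const (2 * L)).sin).pow 2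
  refine h.congr_deriv ?_
  simp only [id]
  field_simp
  ring

theorem deriv_sin_sq_mul_betaPDFReal (hν : -1 < ν) (hL : 0 < L) {x : ℝ}
    (hx : x ∈ Ioo 0 (Real.pi * L)) :
    (2 * L) ^ (2 * ν + 2) * beta (ν + 1) (1 / 2) *
      (|Real.sin (x / (2 * L)) * Real.cos (x / (2 * L)) / L| *
        betaPDFReal (ν + 1) (1 / 2) (Real.sin (x / (2 * L)) ^ 2)) = 2 * sinWeight ν L x := by
  have h0 : 0 < x / (2 * L) := div_pos hx.1 (by positivity)
  have h1 : x / (2 * L) < Real.pi / 2 := by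
    rw [div_lt_iff₀ (by positivity)]
    linarith [hx.2]
  have hsin := Real.sin_pos_of_pos_of_lt_pi h0 (by linarith)
  have hcos := Real.cos_pos_of_mem_Ioo ⟨by linarith, h1⟩
  have hmem : Real.sin (x / (2 * L)) ^ 2 ∈ Ioo (0 : ℝ) 1 :=
    image_sin_sq_Ioo hL ▸ mem_image_of_mem _ hx
  rw [sinWeight_of_abs_lt (by rw [abs_of_pos hx.1]; exact hx.2), betaPDFReal,
    if_pos (mem_Ioo.mp hmem), ← Real.cos_sq']
  set s := Real.sin (x / (2 * L))
  set c := Real.cos (x / (2 * L))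
  have hs : (s ^ 2) ^ (ν + 1 - 1) * s = s ^ (2 * ν + 1) := by
    rw [add_sub_cancel_right, ← Real.rpow_natCast_mul hsin.le, ← Real.rpow_add_one hsin.ne',
      Nat.cast_two]
  have hc : (c ^ 2) ^ ((1 : ℝ) / 2 - 1) = c⁻¹ := by
    rw [← Real.rpow_natCast_mul hcos.le, ← Real.rpow_neg_one]
    norm_num
  have hbeta := beta_pos (by linarith : 0 < ν + 1) (one_half_pos (α := ℝ))
  rw [abs_of_pos (by positivity), abs_of_pos (by positivity), Real.mul_rpow (by positivity) hsin.le,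
    ← hs, hc, show 2 * ν + 2 = 2 * ν + 1 + 1 by ring, Real.rpow_add_one (by positivity)]
  field_simp

theorem integral_comp_sin_sq_mul_sinWeight (hν : -1 < ν) (hL : 0 < L) (g : ℝ → ℝ) :
    ∫ x, g (Real.sin (x / (2 * L)) ^ 2) * sinWeight ν L x =
      (2 * L) ^ (2 * ν + 2) * beta (ν + 1) (1 / 2) * ∫ y, g y ∂betaMeasure (ν + 1) (1 / 2) := by
  have habs (x : ℝ) : g (Real.sin (|x| / (2 * L)) ^ 2) * sinWeight ν L |x| =
      g (Real.sin (x / (2 * L)) ^ 2) * sinWeight ν L x := by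
    rw [sinWeight_abs]
    rcases abs_choice x with h | h <;> simp only [h, neg_div, Real.sin_neg, neg_sq]
  have hhalf : ∫ x, g (Real.sin (x / (2 * L)) ^ 2) * sinWeight ν L x =
      2 * ∫ x in Ioo 0 (Real.pi * L), g (Real.sin (x / (2 * L)) ^ 2) * sinWeight ν L x := by
    rw [← integral_congr_ae (Eventually.of_forall habs),
      integral_comp_abs (f := fun x => g (Real.sin (x / (2 * L)) ^ 2) * sinWeight ν L x)]
    congr 1
    refine setIntegral_eq_of_subset_of_forall_sdiff_eq_zero measurableSet_Ioi
      Ioo_subset_Ioi_self fun x hx => ?_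
    rw [sinWeight_of_le_abs, mul_zero]
    exact (not_lt.mp fun h => hx.2 ⟨hx.1, h⟩).trans (le_abs_self x)
  have hbeta : ∫ y, g y ∂betaMeasure (ν + 1) (1 / 2) =
      ∫ y in Ioo 0 1, betaPDFReal (ν + 1) (1 / 2) y * g y := by
    rw [integral_betaMeasure (by linarith) (by norm_num)]
    refine (setIntegral_eq_integral_of_forall_compl_eq_zero fun y hy => ?_).symm
    rw [betaPDFReal, if_neg (mem_Ioo.not.mp hy), zero_mul]
  rw [hhalf, hbeta, ← image_sin_sq_Ioo hL, integral_image_eq_integral_abs_deriv_smul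
    measurableSet_Ioo (fun x _ => (hasDerivAt_sin_sq hL.ne' x).hasDerivWithinAt) (injOn_sin_sq hL),
    ← integral_const_mul, ← integral_const_mul]
  refine setIntegral_congr_fun measurableSet_Ioo fun x hx => ?_
  simp only [smul_eq_mul]
  linear_combination (-g (Real.sin (x / (2 * L)) ^ 2)) * deriv_sin_sq_mul_betaPDFReal hν hL hx

theorem integrable_sinWeight (hν : -1 < ν) (hL : 0 < L) : Integrable (sinWeight ν L) := by
  have hν' : 0 < ν + 1 := by linarith
  have := ProbabilityTheory.isProbabilityMeasureBeta hν' (one_half_pos (α := ℝ))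
  have hint := integral_comp_sin_sq_mul_sinWeight hν hL fun _ => 1
  simp only [one_mul, integral_const, probReal_univ, smul_eq_mul, mul_one] at hint
  refine .of_integral_ne_zero (hint ▸ mul_ne_zero (by positivity) ?_)
  exact (beta_pos hν' one_half_pos).ne'

end SinWeight

/-- `T` is the real part of a trigonometric polynomial of degree at most `N` and period `2πL`. -/
def IsTrigPoly (N : ℕ) (L : ℝ) (T : ℝ → ℝ) : Prop :=
  ∃ c : ℤ → ℂ, ∀ x, T x =
    (∑ k ∈ Finset.Icc (-N : ℤ) N, c k * Complex.exp ((k * (x / L) : ℝ) * Complex.I)).re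

namespace IsTrigPoly

variable {ν L : ℝ} {N : ℕ} {T : ℝ → ℝ}

theorem exists_polynomial (hT : IsTrigPoly N L T) : ∃ p : ℝ[X], p.natDegree ≤ N ∧
    ∀ x, p.eval (Real.sin (x / (2 * L)) ^ 2) = (T x + T (-x)) / 2 := by
  obtain ⟨c, hc⟩ := hT
  refine ⟨∑ k ∈ Finset.Icc (-N : ℤ) N, C (c k).re * (Chebyshev.T ℝ k).comp (1 - 2 * X),
    natDegree_sum_le_of_forall_le _ _ fun k hk => ?_, fun x => ?_⟩
  · have hlin : (1 - 2 * X : ℝ[X]).natDegree ≤ 1 := by compute_degree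
    have hkN : k.natAbs ≤ N := by
      rw [Finset.mem_Icc] at hk
      omega
    calc _ ≤ ((Chebyshev.T ℝ k).comp (1 - 2 * X)).natDegree := natDegree_C_mul_le _ _
      _ ≤ N * 1 := by
        rw [natDegree_comp, Chebyshev.natDegree_T]
        exact Nat.mul_le_mul hkN hlin
      _ = N := mul_one N
  · have hcos : 1 - 2 * Real.sin (x / (2 * L)) ^ 2 = Real.cos (x / L) := by
      rw [← Real.cos_two_mul_eq_one_sub, show 2 * (x / (2 * L)) = x / L by ring]
    rw [hc, hc, Complex.re_sum, Complex.re_sum, ← Finset.sum_add_distrib, Finset.sum_div,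
      eval_finsetSum]
    refine Finset.sum_congr rfl fun k _ => ?_
    simp only [eval_mul, eval_C, eval_comp, eval_sub, eval_one, eval_ofNat, eval_X, hcos,
      Chebyshev.T_real_cos, Complex.mul_re, Complex.exp_ofReal_mul_I_re,
      Complex.exp_ofReal_mul_I_im, neg_div, mul_neg, Real.cos_neg, Real.sin_neg]
    ring

theorem continuous (hT : IsTrigPoly N L T) : Continuous T := by
  obtain ⟨c, hc⟩ := hT
  rw [funext hc]
  fun_prop

theorem exists_abs_le (hT : IsTrigPoly N L T) : ∃ B, ∀ x, |T x| ≤ B := by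
  obtain ⟨c, hc⟩ := hT
  refine ⟨∑ k ∈ Finset.Icc (-N : ℤ) N, ‖c k‖, fun x => ?_⟩
  rw [hc]
  refine (Complex.abs_re_le_norm _).trans ((norm_sum_le _ _).trans_eq ?_)
  simp only [norm_mul, Complex.norm_exp_ofReal_mul_I, mul_one]

theorem integrable_mul_sinWeight (hT : IsTrigPoly N L T) (hν : -1 < ν) (hL : 0 < L) :
    Integrable (fun x => T x * sinWeight ν L x) := by
  obtain ⟨B, hB⟩ := hT.exists_abs_le
  exact (integrable_sinWeight hν hL).bdd_mul hT.continuous.aestronglyMeasurable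
    (Eventually.of_forall hB)

theorem integral_even_part_mul_sinWeight (hT : IsTrigPoly N L T) (hν : -1 < ν) (hL : 0 < L) :
    ∫ x, (T x + T (-x)) / 2 * sinWeight ν L x = ∫ x, T x * sinWeight ν L x := by
  have hint := hT.integrable_mul_sinWeight hν hL
  have hneg : ∫ x, T (-x) * sinWeight ν L x = ∫ x, T x * sinWeight ν L x := by
    simpa only [sinWeight_neg] using
      integral_neg_eq_self (fun x => T x * sinWeight ν L x) volume
  have hint' : Integrable (fun x => T (-x) * sinWeight ν L x) := by
    simpa only [sinWeight_neg] using hint.comp_neg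
  have hsplit (x : ℝ) : (T x + T (-x)) / 2 * sinWeight ν L x =
      2⁻¹ * (T x * sinWeight ν L x + T (-x) * sinWeight ν L x) := by ring
  simp only [hsplit]
  rw [integral_const_mul, integral_add hint hint', hneg]
  ring

theorem mul_betaFunctional_jacobiPolynomial_le_integral {n : ℕ} (hT : IsTrigPoly (2 * n) L T)
    (hT0 : ∀ x, 0 ≤ T x) (hν : 0 < ν + 1) (hL : 0 < L) :
    (2 * L) ^ (2 * ν + 2) * beta (ν + 1) (1 / 2) *
      (betaFunctional hν one_half_pos (jacobiPolynomial (ν + 1) (1 / 2) n) * T 0) ≤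
      ∫ x, T x * sinWeight ν L x := by
  obtain ⟨p, hdeg, hp⟩ := hT.exists_polynomial
  have hp_zero : p.eval 0 = T 0 := by simpa using hp 0
  have hp_nonneg (y : ℝ) (hy : y ∈ Icc (0 : ℝ) 1) : 0 ≤ p.eval y := by
    have hsqrt : √y ∈ Icc (-1) 1 :=
      ⟨by linarith [Real.sqrt_nonneg y], Real.sqrt_le_one.mpr hy.2⟩
    have hsin : Real.sin (2 * L * Real.arcsin √y / (2 * L)) ^ 2 = y := by
      rw [mul_div_cancel_left₀ _ (by positivity), Real.sin_arcsin hsqrt.1 hsqrt.2,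
        Real.sq_sqrt hy.1]
    rw [← hsin, hp]
    have := hT0 (2 * L * Real.arcsin √y)
    have := hT0 (-(2 * L * Real.arcsin √y))
    positivity
  rw [← hT.integral_even_part_mul_sinWeight (by linarith) hL]
  simp only [← hp]
  rw [integral_comp_sin_sq_mul_sinWeight (by linarith) hL fun y => p.eval y, ← hp_zero]
  gcongr
  · exact mul_nonneg (by positivity) (beta_pos hν one_half_pos).le
  · exact (isRadauPolynomial_jacobiPolynomial hν one_half_pos n).map_mul_eval_zero_le
      (posDefOnUnitInterval_betaFunctional hν one_half_pos) hdeg hp_nonneg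

end IsTrigPoly

/-- The least possible mass `∫ F(x) |x| ^ (2ν + 1) dx` of an entire function `F` of exponential type
`τ` that is nonnegative on `ℝ` with `1 ≤ F 0`. -/
noncomputable def minimalMass (ν τ : ℝ) : ℝ :=
  Real.Gamma (ν + 1) * Real.Gamma (ν + 2) * (4 / τ) ^ (2 * ν + 2)

theorem tendsto_mul_betaFunctional_jacobiPolynomial {ν τ : ℝ} (hν : 0 < ν + 1) (hτ : 0 < τ) :
    Tendsto (fun n : ℕ => (2 * (2 * n / τ)) ^ (2 * ν + 2) * beta (ν + 1) (1 / 2) *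
      betaFunctional hν one_half_pos (jacobiPolynomial (ν + 1) (1 / 2) n)) atTop
      (𝓝 (minimalMass ν τ)) := by
  have hlim := (tendsto_rpow_mul_betaFunctional_jacobiPolynomial hν one_half_pos).const_mul
    ((4 / τ) ^ (2 * ν + 2))
  have hmass : (4 / τ) ^ (2 * ν + 2) * (Real.Gamma (ν + 1) * Real.Gamma (ν + 1 + 1)) =
      minimalMass ν τ := by
    rw [minimalMass, add_assoc ν, one_add_one_eq_two]
    ring
  rw [hmass] at hlim
  refine hlim.congr fun n => ?_
  rw [show 2 * (2 * (n : ℝ) / τ) = 4 / τ * n by ring, Real.mul_rpow (by positivity) n.cast_nonneg]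
  ring_nf

theorem continuousOn_minimalMass (ν : ℝ) : ContinuousOn (minimalMass ν) (Ioi 0) := by
  intro τ hτ
  have hτ0 : τ ≠ 0 := (mem_Ioi.mp hτ).ne'
  unfold minimalMass
  refine (ContinuousAt.mul continuousAt_const (ContinuousAt.rpow_const ?_ ?_)).continuousWithinAt
  · fun_prop (disch := exact hτ0)
  · exact Or.inl (by positivity)

theorem tendsto_intervalIntegral_vertical_segment_zero {H : ℂ → ℂ} {A Y : ℝ} {s : ℝ → ℝ}
    (hH : ∀ x y : ℝ, |y| ≤ |Y| → ‖H (x + y * Complex.I)‖ ≤ A / (1 + x ^ 2))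
    (hs : ∀ T, s T ^ 2 = T ^ 2) :
    Tendsto (fun T : ℝ => ∫ y in (0 : ℝ)..Y, H (s T + y * Complex.I)) atTop (𝓝 0) := by
  have hbound : Tendsto (fun T : ℝ => A / (1 + T ^ 2) * |Y - 0|) atTop (𝓝 0) := by
    simpa using (tendsto_const_nhds.div_atTop
      (tendsto_atTop_add_const_left _ _ (tendsto_pow_atTop two_ne_zero))).mul_const |Y - 0|
  refine squeeze_zero_norm (fun T => ?_) hbound
  refine intervalIntegral.norm_integral_le_of_norm_le_const fun y hy => ?_
  rw [← hs T]
  refine hH (s T) y ?_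
  rcases le_total 0 Y with hY | hY
  · rw [uIoc_of_le hY, mem_Ioc] at hy
    rw [abs_of_pos hy.1, abs_of_nonneg hY]
    exact hy.2
  · rw [uIoc_of_ge hY, mem_Ioc] at hy
    rw [abs_of_nonpos hy.2, abs_of_nonpos hY]
    linarith [hy.1]

theorem integral_eq_integral_add_mul_I {H : ℂ → ℂ} {A Y : ℝ} (hH : Differentiable ℂ H)
    (hbound : ∀ x y : ℝ, |y| ≤ |Y| → ‖H (x + y * Complex.I)‖ ≤ A / (1 + x ^ 2)) :
    ∫ x : ℝ, H x = ∫ x : ℝ, H (x + Y * Complex.I) := by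
  have hint (y : ℝ) (hy : |y| ≤ |Y|) : Integrable (fun x : ℝ => H (x + y * Complex.I)) := by
    have hcont := hH.continuous
    refine (integrable_inv_one_add_sq.const_mul A).mono' (by fun_prop) ?_
    exact Eventually.of_forall fun x => hbound x y hy
  have hint_zero : Integrable (fun x : ℝ => H x) := by simpa using hint 0 (by simp)
  have hbottom := intervalIntegral_tendsto_integral hint_zero tendsto_neg_atTop_atBot tendsto_id
  have htop := intervalIntegral_tendsto_integral (hint Y le_rfl) tendsto_neg_atTop_atBot tendsto_id
  have hright := tendsto_intervalIntegral_vertical_segment_zero (s := id) hbound fun _ => rfl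
  have hleft := tendsto_intervalIntegral_vertical_segment_zero (s := Neg.neg) hbound neg_sq
  have hrect (T : ℝ) : (∫ x : ℝ in -T..T, H x) - (∫ x : ℝ in -T..T, H (x + Y * Complex.I)) +
      Complex.I • (∫ y : ℝ in (0 : ℝ)..Y, H (T + y * Complex.I)) -
      Complex.I • (∫ y : ℝ in (0 : ℝ)..Y, H ((-T : ℝ) + y * Complex.I)) = 0 := by
    simpa using Complex.integral_boundary_rect_eq_zero_of_differentiableOn H ⟨-T, 0⟩ ⟨T, Y⟩
      hH.differentiableOn
  have hlim := ((hbottom.sub htop).add (hright.const_smul Complex.I)).sub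
    (hleft.const_smul Complex.I)
  have hzero := tendsto_nhds_unique (hlim.congr fun T => by simpa using hrect T)
    tendsto_const_nhds
  simpa [sub_eq_zero] using hzero

section Decay

variable {G : ℂ → ℂ} {A τ : ℝ}

theorem norm_integral_mul_exp_le (hG : Differentiable ℂ G)
    (hbound : ∀ z, ‖G z‖ ≤ A * Real.exp (τ * |z.im|) / (1 + z.re ^ 2)) (hτ : 0 ≤ τ) (a Y : ℝ) :
    ‖∫ x : ℝ, G x * Complex.exp (-(a * x) * Complex.I)‖ ≤
      A * Real.exp (τ * |Y| + a * Y) * Real.pi := by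
  have hA : 0 ≤ A := by simpa using (norm_nonneg _).trans (hbound 0)
  have hnorm (x y : ℝ) : ‖G (x + y * Complex.I) *
      Complex.exp (-(a * (x + y * Complex.I)) * Complex.I)‖ ≤
      A * Real.exp (τ * |y| + a * y) / (1 + x ^ 2) := by
    rw [norm_mul, Complex.norm_exp, Real.exp_add, ← mul_assoc, mul_div_right_comm]
    refine mul_le_mul ?_ (le_of_eq ?_) (by positivity) (by positivity)
    · simpa using hbound (x + y * Complex.I)
    · simp
  rw [integral_eq_integral_add_mul_I (Y := Y) (A := A * Real.exp (τ * |Y| + |a| * |Y|))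
    (H := fun z => G z * Complex.exp (-(a * z) * Complex.I)) (by fun_prop) fun x y hy => ?_]
  · refine (norm_integral_le_of_norm_le
      (integrable_inv_one_add_sq.const_mul (A * Real.exp (τ * |Y| + a * Y)))
      (Eventually.of_forall fun x => hnorm x Y)).trans_eq ?_
    rw [integral_const_mul, integral_univ_inv_one_add_sq]
  · refine (hnorm x y).trans ?_
    have hay : a * y ≤ |a| * |Y| := (le_abs_self _).trans (by rw [abs_mul]; gcongr)
    gcongr

theorem integral_mul_exp_eq_zero_of_lt_abs (hG : Differentiable ℂ G)
    (hbound : ∀ z, ‖G z‖ ≤ A * Real.exp (τ * |z.im|) / (1 + z.re ^ 2)) (hτ : 0 ≤ τ) {a : ℝ}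
    (ha : τ < |a|) : ∫ x : ℝ, G x * Complex.exp (-(a * x) * Complex.I) = 0 := by
  have hdecay (t : ℝ) (ht : 0 ≤ t) : ‖∫ x : ℝ, G x * Complex.exp (-(a * x) * Complex.I)‖ ≤
      A * Real.exp ((τ - |a|) * t) * Real.pi := by
    rcases le_total 0 a with h | h
    · have := norm_integral_mul_exp_le hG hbound hτ a (-t)
      rw [abs_neg, abs_of_nonneg ht] at this
      rw [abs_of_nonneg h]
      convert this using 4
      ring
    · have := norm_integral_mul_exp_le hG hbound hτ a t
      rw [abs_of_nonneg ht] at this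
      rw [abs_of_nonpos h]
      convert this using 4
      ring
  have hexp : Tendsto (fun t : ℝ => Real.exp ((τ - |a|) * t)) atTop (𝓝 0) :=
    Real.tendsto_exp_atBot.comp (tendsto_id.const_mul_atTop_of_neg (by linarith))
  have hlim : Tendsto (fun t : ℝ => A * Real.exp ((τ - |a|) * t) * Real.pi) atTop (𝓝 0) := by
    simpa using (hexp.const_mul A).mul_const Real.pi
  refine norm_le_zero_iff.mp (ge_of_tendsto hlim ?_)
  filter_upwards [eventually_ge_atTop 0] with t ht using hdecay t ht

end Decay

/-- The `2πL`-periodization `x ↦ ∑ₖ f(x + 2πLk)`, with value `0` where the series diverges. -/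
noncomputable def periodization (L : ℝ) (f : ℝ → ℂ) (x : ℝ) : ℂ :=
  ∑' k : ℤ, f (x + 2 * Real.pi * L * k)

section Periodization

variable {f : ℝ → ℂ} {A L x : ℝ} {K : ℕ}

theorem re_periodization_nonneg (L : ℝ) (hf : ∀ x, 0 ≤ (f x).re) (x : ℝ) :
    0 ≤ (periodization L f x).re := by
  unfold periodization
  by_cases hsum : Summable fun k : ℤ => f (x + 2 * Real.pi * L * k)
  · rw [Complex.re_tsum hsum]
    exact tsum_nonneg fun k => hf _
  · rw [tsum_eq_zero_of_not_summable hsum, Complex.zero_re]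

theorem norm_shift_le (hf : ∀ x, ‖f x‖ ≤ A / (1 + |x|) ^ K) (hL : 0 < L) (hx : |x| ≤ Real.pi * L)
    {k : ℤ} (hk : k ≠ 0) :
    ‖f (x + 2 * Real.pi * L * k)‖ ≤ A / Real.pi ^ K * |1 / (k : ℝ) ^ K| / L ^ K := by
  have hA : 0 ≤ A := by simpa using (norm_nonneg _).trans (hf 0)
  have hk_one : (1 : ℝ) ≤ |(k : ℝ)| := mod_cast Int.one_le_abs hk
  have hshift : Real.pi * L * |(k : ℝ)| ≤ |x + 2 * Real.pi * L * k| := by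
    have htri : |2 * Real.pi * L * (k : ℝ)| ≤ |x + 2 * Real.pi * L * k| + |x| := by
      simpa using abs_sub (x + 2 * Real.pi * L * k) x
    rw [abs_mul, abs_of_pos (by positivity : 0 < 2 * Real.pi * L)] at htri
    nlinarith [mul_pos Real.pi_pos hL]
  calc _ ≤ A / (1 + |x + 2 * Real.pi * L * k|) ^ K := hf _
    _ ≤ A / (Real.pi * L * |(k : ℝ)|) ^ K := by
      gcongr
      linarith
    _ = _ := by
      rw [abs_div, abs_one, abs_pow, mul_pow, mul_pow]
      field_simp

theorem summable_shift (hf : ∀ x, ‖f x‖ ≤ A / (1 + |x|) ^ K) (hK : 1 < K) (hL : 0 < L)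
    (hx : |x| ≤ Real.pi * L) : Summable fun k : ℤ => f (x + 2 * Real.pi * L * k) := by
  have hsum : Summable fun k : ℤ => |1 / (k : ℝ) ^ K| := (Real.summable_one_div_int_pow.mpr hK).abs
  refine .of_norm_bounded_eventually ((hsum.mul_left (A / Real.pi ^ K)).div_const (L ^ K)) ?_
  filter_upwards [(finite_singleton (0 : ℤ)).compl_mem_cofinite] with k hk
    using norm_shift_le hf hL hx hk

theorem re_le_re_periodization (hf : ∀ x, ‖f x‖ ≤ A / (1 + |x|) ^ K) (hK : 1 < K) (hL : 0 < L)
    (hf0 : ∀ x, 0 ≤ (f x).re) (hx : |x| ≤ Real.pi * L) :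
    (f x).re ≤ (periodization L f x).re := by
  have hsum := summable_shift hf hK hL hx
  have hle := (Complex.hasSum_re hsum.hasSum).summable.le_tsum 0 fun k _ => hf0 _
  rw [← Complex.re_tsum hsum] at hle
  simpa [periodization] using hle

theorem norm_periodization_sub_le (hf : ∀ x, ‖f x‖ ≤ A / (1 + |x|) ^ K) (hK : 1 < K)
    (hL : 0 < L) (hx : |x| ≤ Real.pi * L) :
    ‖periodization L f x - f x‖ ≤
      (A / Real.pi ^ K * ∑' k : ℤ, |1 / (k : ℝ) ^ K|) / L ^ K := by
  have hA : 0 ≤ A := by simpa using (norm_nonneg _).trans (hf 0)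
  have hsplit := (summable_shift hf hK hL hx).tsum_eq_add_tsum_ite 0
  simp only [Int.cast_zero, mul_zero, add_zero] at hsplit
  rw [periodization, hsplit, add_sub_cancel_left]
  have hsum : Summable fun k : ℤ => |1 / (k : ℝ) ^ K| := (Real.summable_one_div_int_pow.mpr hK).abs
  refine tsum_of_norm_bounded ((hsum.hasSum.mul_left _).div_const _) fun k => ?_
  split_ifs with hk
  · rw [norm_zero]
    positivity
  · exact norm_shift_le hf hL hx hk

end Periodization

theorem fourier_comp_mul_eq_zero {G : ℂ → ℂ} {A τ L : ℝ} (hG : Differentiable ℂ G)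
    (hbound : ∀ z, ‖G z‖ ≤ A * Real.exp (τ * |z.im|) / (1 + z.re ^ 2)) (hτ : 0 ≤ τ) (hL : 0 < L)
    {w : ℝ} (hw : τ * L < |w|) :
    FourierTransform.fourier (fun t : ℝ => G (2 * Real.pi * L * t : ℝ)) w = 0 := by
  have hvanish := integral_mul_exp_eq_zero_of_lt_abs hG hbound hτ (a := w / L)
    (by rwa [abs_div, abs_of_pos hL, lt_div_iff₀ hL])
  have hscale := Measure.integral_comp_mul_left
    (fun x : ℝ => G x * Complex.exp (-((w / L : ℝ) * x) * Complex.I)) (2 * Real.pi * L)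
  rw [hvanish, smul_zero] at hscale
  rw [Real.fourier_eq', ← hscale]
  congr 1 with t
  have hLc : (L : ℂ) ≠ 0 := mod_cast hL.ne'
  simp only [smul_eq_mul, RCLike.inner_apply, conj_trivial]
  rw [mul_comm]
  congr 2
  push_cast
  field_simp

theorem isBigO_comp_mul_cocompact {f : ℝ → ℂ} {A D : ℝ} (hf : ∀ x, ‖f x‖ ≤ A / (1 + x ^ 2))
    (hD : D ≠ 0) : (fun t => f (D * t)) =O[cocompact ℝ] fun x : ℝ => |x| ^ (-(2 : ℝ)) := by
  have hA : 0 ≤ A := by simpa using (norm_nonneg _).trans (hf 0)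
  refine Asymptotics.IsBigO.of_bound (A / D ^ 2) ?_
  filter_upwards [(isCompact_singleton (x := (0 : ℝ))).compl_mem_cocompact] with x hx
  have hx2 : 0 < x ^ 2 := sq_pos_of_ne_zero hx
  have hpow : ‖|x| ^ (-(2 : ℝ))‖ = (x ^ 2)⁻¹ := by
    rw [Real.rpow_neg (abs_nonneg x), Real.rpow_two, sq_abs, Real.norm_of_nonneg (by positivity)]
  calc ‖f (D * x)‖ ≤ A / (1 + (D * x) ^ 2) := hf _
    _ ≤ A / (D ^ 2 * x ^ 2) := by
      gcongr
      linarith [mul_pow D x 2]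
    _ = A / D ^ 2 * ‖|x| ^ (-(2 : ℝ))‖ := by rw [hpow, div_mul_eq_div_div, div_eq_mul_inv]

/-- Poisson summation: the Fourier coefficients of the periodization are samples of the Fourier
transform of `G`, which vanishes outside `[-τ, τ]`. -/
theorem isTrigPoly_periodization {G : ℂ → ℂ} {A τ L : ℝ} {N : ℕ} (hG : Differentiable ℂ G)
    (hbound : ∀ z, ‖G z‖ ≤ A * Real.exp (τ * |z.im|) / (1 + z.re ^ 2)) (hτ : 0 ≤ τ) (hL : 0 < L)
    (hN : τ * L ≤ N) : IsTrigPoly N L (fun x => (periodization L (fun t => G t) x).re) := by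
  set f : ℝ → ℂ := fun t => G (2 * Real.pi * L * t : ℝ) with hf
  have hcont : Continuous f := by
    have := hG.continuous
    fun_prop
  have hdecay := isBigO_comp_mul_cocompact (f := fun x : ℝ => G x)
    (fun x => by simpa using hbound x) (by positivity : 2 * Real.pi * L ≠ 0)
  have hvanish (k : ℤ) (hk : k ∉ Finset.Icc (-N : ℤ) N) :
      FourierTransform.fourier f (k : ℝ) = 0 := by
    refine fourier_comp_mul_eq_zero hG hbound hτ hL (hN.trans_lt ?_)
    rw [Finset.mem_Icc, ← abs_le, not_le] at hk
    exact_mod_cast hk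
  have hpoisson (x : ℝ) := Real.tsum_eq_tsum_fourier_of_rpow_decay_of_summable hcont
    one_lt_two hdecay (summable_of_ne_finset_zero hvanish) (x / (2 * Real.pi * L))
  refine ⟨fun k => FourierTransform.fourier f (k : ℝ), fun x => congrArg Complex.re ?_⟩
  have hshift (k : ℤ) : G (x + 2 * Real.pi * L * k : ℝ) = f (x / (2 * Real.pi * L) + k) := by
    simp only [hf]
    congr 2
    field_simp
  simp only [periodization, hshift]
  rw [hpoisson, tsum_eq_sum fun k hk => by rw [hvanish k hk, zero_mul]]
  refine Finset.sum_congr rfl fun k _ => ?_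
  rw [fourier_coe_apply]
  congr 2
  push_cast
  field_simp

section LowerBound

variable {ν τ A L : ℝ} {G : ℂ → ℂ} {K : ℕ}

theorem exp_mul_div_one_add_pow_le (hK : 2 ≤ K) (hA : 0 ≤ A) (z : ℂ) :
    A * Real.exp (τ * |z.im|) / (1 + ‖z‖) ^ K ≤
      A * Real.exp (τ * |z.im|) / (1 + z.re ^ 2) := by
  gcongr
  have hre := Complex.abs_re_le_norm z
  calc 1 + z.re ^ 2 ≤ (1 + |z.re|) ^ 2 := by nlinarith [abs_nonneg z.re, sq_abs z.re]
    _ ≤ (1 + ‖z‖) ^ 2 := by gcongr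
    _ ≤ (1 + ‖z‖) ^ K := pow_le_pow_right₀ (by linarith [norm_nonneg z]) hK

theorem integral_mul_sinWeight_le (hν : -1 < ν) (hL : 0 < L) (hK : 1 < K) {f : ℝ → ℂ}
    (hf : Continuous f) (hf0 : ∀ x, 0 ≤ (f x).re) (hdecay : ∀ x, ‖f x‖ ≤ A / (1 + |x|) ^ K) :
    ∫ x, (periodization L f x).re * sinWeight ν L x ≤ (∫ x, (f x).re * sinWeight ν L x) +
      (A / Real.pi ^ K * ∑' k : ℤ, |1 / (k : ℝ) ^ K|) / L ^ K * ∫ x, sinWeight ν L x := by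
  have hA : 0 ≤ A := by simpa using (norm_nonneg _).trans (hdecay 0)
  have hweight := integrable_sinWeight hν hL
  have hint : Integrable (fun x => (f x).re * sinWeight ν L x) := by
    refine hweight.bdd_mul (c := A) (by fun_prop) (Eventually.of_forall fun x => ?_)
    calc ‖(f x).re‖ ≤ A / (1 + |x|) ^ K := (Complex.abs_re_le_norm _).trans (hdecay x)
      _ ≤ A := div_le_self hA (one_le_pow₀ (by linarith [abs_nonneg x]))
  rw [← integral_const_mul, ← integral_add hint (hweight.const_mul _)]
  refine integral_mono_of_nonneg (Eventually.of_forall fun x => ?_)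
    (hint.add (hweight.const_mul _)) (Eventually.of_forall fun x => ?_)
  · exact mul_nonneg (re_periodization_nonneg L hf0 x) (sinWeight_nonneg ν L x)
  · rcases lt_or_ge |x| (Real.pi * L) with hx | hx
    · have hre := (Complex.re_le_norm _).trans (norm_periodization_sub_le hdecay hK hL hx.le)
      rw [Complex.sub_re, sub_le_iff_le_add'] at hre
      simpa only [add_mul] using mul_le_mul_of_nonneg_right hre (sinWeight_nonneg ν L x)
    · simp [sinWeight_of_le_abs hx]

theorem tendsto_integral_mul_sinWeight {g : ℝ → ℝ} (hg : Measurable g)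
    (hint : Integrable (fun x => g x * |x| ^ (2 * ν + 1))) :
    Tendsto (fun L => ∫ x, g x * sinWeight ν L x) atTop (𝓝 (∫ x, g x * |x| ^ (2 * ν + 1))) := by
  have hne : ∀ᵐ x : ℝ, x ≠ 0 := by simp [ae_iff]
  refine tendsto_integral_filter_of_dominated_convergence
    (fun x => max 1 ((2 / Real.pi) ^ (2 * ν + 1)) * ‖g x * |x| ^ (2 * ν + 1)‖)
    (Eventually.of_forall fun L => ?_) ?_ (hint.norm.const_mul _) ?_
  · exact (hg.mul (measurable_sinWeight ν L)).aestronglyMeasurable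
  · filter_upwards [eventually_gt_atTop 0] with L hL
    filter_upwards [hne] with x hx
    rw [norm_mul, norm_mul, Real.norm_of_nonneg (sinWeight_nonneg ν L x),
      Real.norm_of_nonneg (by positivity : 0 ≤ |x| ^ (2 * ν + 1)), mul_left_comm]
    exact mul_le_mul_of_nonneg_left (sinWeight_le ν hL hx) (norm_nonneg _)
  · filter_upwards [hne] with x hx
    exact (tendsto_sinWeight ν hx).const_mul _

theorem integral_sinWeight (hν : -1 < ν) (hL : 0 < L) :
    ∫ x, sinWeight ν L x = (2 * L) ^ (2 * ν + 2) * beta (ν + 1) (1 / 2) := by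
  have : IsProbabilityMeasure (betaMeasure (ν + 1) (1 / 2)) :=
    ProbabilityTheory.isProbabilityMeasureBeta (by linarith) one_half_pos
  simpa only [one_mul, integral_const, probReal_univ, one_smul, mul_one] using
    integral_comp_sin_sq_mul_sinWeight hν hL fun _ => 1

theorem tendsto_div_pow_mul_integral_sinWeight (hν : -1 < ν) (hK : 2 * ν + 2 < K) (Z : ℝ) :
    Tendsto (fun L => Z / L ^ K * ∫ x, sinWeight ν L x) atTop (𝓝 0) := by
  have hlim := (tendsto_rpow_neg_atTop (by linarith : (0 : ℝ) < K - (2 * ν + 2))).const_mul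
    (Z * 2 ^ (2 * ν + 2) * beta (ν + 1) (1 / 2))
  rw [mul_zero] at hlim
  refine hlim.congr' ?_
  filter_upwards [eventually_gt_atTop 0] with L hL
  rw [integral_sinWeight hν hL, neg_sub, Real.rpow_sub hL, Real.rpow_natCast,
    Real.mul_rpow zero_le_two hL.le]
  ring

theorem minimalMass_le_integral_of_decay (hν : 0 < ν + 1) (hτ : 0 < τ) (hG : Differentiable ℂ G)
    (hK : 2 ≤ K) (hKν : 2 * ν + 2 < K)
    (hbound : ∀ z, ‖G z‖ ≤ A * Real.exp (τ * |z.im|) / (1 + ‖z‖) ^ K)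
    (hpos : ∀ x : ℝ, 0 ≤ (G x).re) (hzero : 1 ≤ (G 0).re)
    (hint : Integrable (fun x : ℝ => (G x).re * |x| ^ (2 * ν + 1))) :
    minimalMass ν τ ≤ ∫ x : ℝ, (G x).re * |x| ^ (2 * ν + 1) := by
  have hν' : -1 < ν := by linarith
  have hA : 0 ≤ A := by simpa using (norm_nonneg _).trans (hbound 0)
  have hcont := hG.continuous
  have hdecay (x : ℝ) : ‖G x‖ ≤ A / (1 + |x|) ^ K := by simpa using hbound x
  have hL : Tendsto (fun n : ℕ => 2 * (n : ℝ) / τ) atTop atTop :=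
    (tendsto_natCast_atTop_atTop.const_mul_atTop two_pos).atTop_div_const hτ
  have hlim := ((tendsto_integral_mul_sinWeight (by fun_prop) hint).add
    (tendsto_div_pow_mul_integral_sinWeight hν' hKν
      (A / Real.pi ^ K * ∑' k : ℤ, |1 / (k : ℝ) ^ K|))).comp hL
  rw [add_zero] at hlim
  refine le_of_tendsto_of_tendsto (tendsto_mul_betaFunctional_jacobiPolynomial hν hτ) hlim ?_
  filter_upwards [hL.eventually_gt_atTop 0] with n hn
  have htrig : IsTrigPoly (2 * n) (2 * n / τ)
      (fun x => (periodization (2 * n / τ) (fun t => G t) x).re) :=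
    isTrigPoly_periodization hG
      (fun z => (hbound z).trans (exp_mul_div_one_add_pow_le hK hA z)) hτ.le hn
      (by rw [mul_div_cancel₀ _ hτ.ne']; push_cast; rfl)
  have hperiod_zero : 1 ≤ (periodization (2 * n / τ) (fun t => G t) 0).re :=
    hzero.trans <| by
      simpa using re_le_re_periodization hdecay hK hn hpos (x := 0) (by rw [abs_zero]; positivity)
  refine le_trans ?_ ((htrig.mul_betaFunctional_jacobiPolynomial_le_integral
    (re_periodization_nonneg _ hpos) hν hn).trans
      (integral_mul_sinWeight_le hν' hn hK (by fun_prop) hpos hdecay))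
  gcongr
  · exact mul_nonneg (by positivity) (beta_pos hν one_half_pos).le
  · refine le_mul_of_one_le_right ?_ hperiod_zero
    exact ((isRadauPolynomial_jacobiPolynomial hν one_half_pos n).map_pos
      (posDefOnUnitInterval_betaFunctional hν one_half_pos)).le

end LowerBound

section PhragmenLindelof

variable {Ψ : ℂ → ℂ} {C σ : ℝ} {N : ℕ}

theorem one_le_norm_one_add {z : ℂ} (hz : 0 ≤ z.re) : 1 ≤ ‖1 + z‖ := by
  have hre := (le_abs_self _).trans (Complex.abs_re_le_norm (1 + z))
  rw [Complex.add_re, Complex.one_re] at hre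
  linarith

theorem norm_exp_I_mul_div_pow (σ : ℝ) (N : ℕ) (z : ℂ) :
    ‖Complex.exp (Complex.I * σ * z) / (1 + z) ^ N‖ = Real.exp (-(σ * z.im)) / ‖1 + z‖ ^ N := by
  rw [norm_div, norm_pow, Complex.norm_exp]
  congr 2
  simp

theorem norm_exp_I_mul_div_pow_le (σ : ℝ) (N : ℕ) {z : ℂ} (hz : 0 ≤ z.re) :
    ‖Complex.exp (Complex.I * σ * z) / (1 + z) ^ N‖ ≤ Real.exp (-(σ * z.im)) := by
  rw [norm_exp_I_mul_div_pow]
  exact div_le_self (Real.exp_pos _).le (one_le_pow₀ (one_le_norm_one_add hz))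

theorem norm_mul_exp_div_pow_le_of_quadrant (hΨ : Differentiable ℂ Ψ) (hC : 0 ≤ C) (hσ : 0 ≤ σ)
    (hreal : ∀ x : ℝ, 0 ≤ x → ‖Ψ x‖ ≤ C * (1 + x) ^ N)
    (htype : ∀ z, ‖Ψ z‖ ≤ C * Real.exp (σ * ‖z‖)) {z : ℂ} (hre : 0 ≤ z.re) (him : 0 ≤ z.im) :
    ‖Ψ z * (Complex.exp (Complex.I * σ * z) / (1 + z) ^ N)‖ ≤ C := by
  refine PhragmenLindelof.quadrant_I
    (f := fun z => Ψ z * (Complex.exp (Complex.I * σ * z) / (1 + z) ^ N)) ?_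
    ⟨1, one_lt_two, σ, ?_⟩ (fun x hx => ?_) (fun x hx => ?_) hre him
  · refine DifferentiableOn.diffContOnCl fun w hw => ?_
    rw [Complex.closure_reProdIm, closure_Ioi, Complex.mem_reProdIm] at hw
    have hne : (1 + w) ^ N ≠ 0 :=
      pow_ne_zero _ (norm_pos_iff.mp (one_pos.trans_le (one_le_norm_one_add hw.1)))
    exact DifferentiableAt.differentiableWithinAt (by fun_prop (disch := exact hne))
  · refine .of_bound C (eventually_inf_principal.mpr (Eventually.of_forall fun w hw => ?_))
    obtain ⟨hw_re, hw_im⟩ := Complex.mem_reProdIm.mp hw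
    rw [mem_Ioi] at hw_re hw_im
    rw [norm_mul, Real.rpow_one, Real.norm_of_nonneg (Real.exp_pos _).le]
    refine (mul_le_of_le_one_right (norm_nonneg _) ?_).trans (htype w)
    refine (norm_exp_I_mul_div_pow_le σ N hw_re.le).trans (Real.exp_le_one_iff.mpr ?_)
    rw [neg_nonpos]
    positivity
  · rw [norm_mul, norm_exp_I_mul_div_pow, ← Complex.ofReal_one, ← Complex.ofReal_add,
      Complex.norm_of_nonneg (by positivity), mul_div_assoc', div_le_iff₀ (by positivity)]
    simpa using hreal x hx
  · have hIx : ‖(x * Complex.I : ℂ)‖ = x := by simp [abs_of_nonneg hx]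
    calc _ ≤ C * Real.exp (σ * x) * Real.exp (-(σ * x)) := by
          rw [norm_mul]
          refine mul_le_mul ?_ ?_ (norm_nonneg _) (by positivity)
          · simpa only [hIx] using htype (x * Complex.I)
          · simpa using norm_exp_I_mul_div_pow_le σ N (z := x * Complex.I) (by simp)
      _ = C := by rw [mul_assoc, ← Real.exp_add, add_neg_cancel, Real.exp_zero, mul_one]

theorem norm_le_mul_exp_im_of_quadrant (hΨ : Differentiable ℂ Ψ) (hC : 0 ≤ C) (hσ : 0 ≤ σ)
    (hreal : ∀ x : ℝ, 0 ≤ x → ‖Ψ x‖ ≤ C * (1 + x) ^ N)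
    (htype : ∀ z, ‖Ψ z‖ ≤ C * Real.exp (σ * ‖z‖)) {z : ℂ} (hre : 0 ≤ z.re) (him : 0 ≤ z.im) :
    ‖Ψ z‖ ≤ C * (1 + ‖z‖) ^ N * Real.exp (σ * z.im) := by
  have hbound := norm_mul_exp_div_pow_le_of_quadrant hΨ hC hσ hreal htype hre him
  have hone := one_le_norm_one_add hre
  rw [norm_mul, norm_exp_I_mul_div_pow, mul_div_assoc', div_le_iff₀ (by positivity), Real.exp_neg,
    ← div_eq_mul_inv, div_le_iff₀ (Real.exp_pos _)] at hbound
  refine hbound.trans ?_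
  gcongr
  simpa using norm_add_le 1 z

theorem norm_le_mul_exp_im_of_upperHalfPlane (hΨ : Differentiable ℂ Ψ) (hC : 0 ≤ C) (hσ : 0 ≤ σ)
    (hreal : ∀ x : ℝ, ‖Ψ x‖ ≤ C * (1 + |x|) ^ N)
    (htype : ∀ z, ‖Ψ z‖ ≤ C * Real.exp (σ * ‖z‖)) {z : ℂ} (him : 0 ≤ z.im) :
    ‖Ψ z‖ ≤ C * (1 + ‖z‖) ^ N * Real.exp (σ * z.im) := by
  rcases le_total 0 z.re with hre | hre
  · exact norm_le_mul_exp_im_of_quadrant hΨ hC hσ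
      (fun x hx => by simpa [abs_of_nonneg hx] using hreal x) htype hre him
  · have hreflect : Differentiable ℂ fun w => starRingEnd ℂ (Ψ (-starRingEnd ℂ w)) := fun w => by
      have hneg : DifferentiableAt ℂ (fun w => Ψ (-w)) (starRingEnd ℂ w) := by fun_prop
      simpa [Function.comp_def] using hneg.conj_conj
    have := norm_le_mul_exp_im_of_quadrant hreflect hC hσ
      (fun x hx => by simpa [abs_of_nonneg hx] using hreal (-x))
      (fun w => by simpa using htype (-starRingEnd ℂ w)) (z := -starRingEnd ℂ z)
      (by simpa using hre) (by simpa using him)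
    simpa using this

theorem norm_le_mul_exp_abs_im (hΨ : Differentiable ℂ Ψ) (hC : 0 ≤ C) (hσ : 0 ≤ σ)
    (hreal : ∀ x : ℝ, ‖Ψ x‖ ≤ C * (1 + |x|) ^ N)
    (htype : ∀ z, ‖Ψ z‖ ≤ C * Real.exp (σ * ‖z‖)) (z : ℂ) :
    ‖Ψ z‖ ≤ C * (1 + ‖z‖) ^ N * Real.exp (σ * |z.im|) := by
  rcases le_total 0 z.im with him | him
  · rw [abs_of_nonneg him]
    exact norm_le_mul_exp_im_of_upperHalfPlane hΨ hC hσ hreal htype him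
  · have hneg : Differentiable ℂ fun w => Ψ (-w) := by fun_prop
    have := norm_le_mul_exp_im_of_upperHalfPlane hneg hC hσ (fun x => by simpa using hreal (-x))
      (fun w => by simpa using htype (-w)) (z := -z) (by simpa using him)
    simpa [abs_of_nonpos him] using this

end PhragmenLindelof

section Growth

variable {F : ℂ → ℂ} {p δ : ℝ}

theorem exists_norm_le_add_mul_rpow {f : ℝ → ℂ} (hf : Continuous f) (p : ℝ) :
    ∃ C N, 0 ≤ C ∧ 1 ≤ N ∧ ∀ x t : ℝ, |t| ≤ |x| →
      ‖f t‖ ≤ C + (1 + |x|) ^ N * (‖f t‖ * |t| ^ p) := by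
  obtain ⟨C, hC⟩ := isCompact_Icc.exists_bound_of_continuousOn
    (hf.continuousOn (s := Icc (-1 : ℝ) 1))
  have hC0 : 0 ≤ C := (norm_nonneg _).trans (hC 0 (by simp))
  obtain ⟨N, hN⟩ := exists_nat_ge (max 1 (-p))
  refine ⟨C, N, hC0, Nat.one_le_cast.mp ((le_max_left _ _).trans hN), fun x t ht => ?_⟩
  rcases le_total |t| 1 with h | h
  · have := hC t (abs_le.mp h)
    have : 0 ≤ (1 + |x|) ^ N * (‖f t‖ * |t| ^ p) := by positivity
    linarith
  · have hpow : |t| ^ (-p) ≤ (1 + |x|) ^ N := by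
      calc |t| ^ (-p) ≤ |t| ^ (N : ℝ) :=
            Real.rpow_le_rpow_of_exponent_le h ((le_max_right _ _).trans hN)
        _ = |t| ^ N := Real.rpow_natCast _ _
        _ ≤ (1 + |x|) ^ N := by
          gcongr
          linarith
    have hone : 1 ≤ (1 + |x|) ^ N * |t| ^ p := by
      rwa [Real.rpow_neg (abs_nonneg t), inv_le_iff_one_le_mul₀ (by positivity)] at hpow
    nlinarith [mul_le_mul_of_nonneg_left hone (norm_nonneg (f t))]

theorem exists_norm_intervalIntegral_le {f : ℝ → ℂ} (hf : Continuous f)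
    (hint : Integrable (fun x => ‖f x‖ * |x| ^ p)) :
    ∃ C N, 0 ≤ C ∧ ∀ x : ℝ, ‖∫ t in (0 : ℝ)..x, f t‖ ≤ C * (1 + |x|) ^ N := by
  obtain ⟨C, N, hC, hN, hbound⟩ := exists_norm_le_add_mul_rpow hf p
  have hmass : 0 ≤ ∫ t, ‖f t‖ * |t| ^ p := integral_nonneg fun t => by positivity
  refine ⟨C + ∫ t, ‖f t‖ * |t| ^ p, N, add_nonneg hC hmass, fun x => ?_⟩
  have hconst : IntegrableOn (fun _ => C) (uIoc 0 x) := integrableOn_const (by simp [uIoc])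
  have hweighted := hint.integrableOn (s := uIoc 0 x) |>.const_mul ((1 + |x|) ^ N)
  have habs (t : ℝ) (ht : t ∈ uIoc 0 x) : |t| ≤ |x| := by
    simpa using abs_sub_left_of_mem_uIcc (uIoc_subset_uIcc ht)
  rw [intervalIntegral.norm_intervalIntegral_eq]
  calc _ ≤ ∫ t in uIoc 0 x, (C + (1 + |x|) ^ N * (‖f t‖ * |t| ^ p)) := by
        refine norm_integral_le_of_norm_le (hconst.add hweighted) ?_
        filter_upwards [ae_restrict_mem measurableSet_uIoc] with t ht using hbound x t (habs t ht)
    _ = C * |x| + (1 + |x|) ^ N * ∫ t in uIoc 0 x, ‖f t‖ * |t| ^ p := by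
        rw [integral_add hconst hweighted, integral_const_mul, setIntegral_const]
        simp [Measure.real, uIoc, mul_comm, max_sub_min_eq_abs]
    _ ≤ C * (1 + |x|) ^ N + (1 + |x|) ^ N * ∫ t, ‖f t‖ * |t| ^ p := by
        gcongr
        · have := le_self_pow₀ (a := 1 + |x|) (by linarith [abs_nonneg x]) (by omega : N ≠ 0)
          linarith
        · exact Eventually.of_forall fun t => by positivity
        · exact Measure.restrict_le_self
    _ = _ := by ring

theorem norm_primitive_le_of_norm_le {Ψ : ℂ → ℂ} {C ε : ℝ} (hΨ : ∀ z, HasDerivAt Ψ (F z) z)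
    (hΨ0 : Ψ 0 = 0) (hδ : 0 ≤ δ) (hε : 0 < ε) (hF : ∀ z, ‖F z‖ ≤ C * Real.exp ((δ + ε) * ‖z‖))
    (z : ℂ) : ‖Ψ z‖ ≤ C / ε * Real.exp ((δ + 2 * ε) * ‖z‖) := by
  have hC : 0 ≤ C := by simpa using (norm_nonneg _).trans (hF 0)
  have hmvt := (convex_closedBall (0 : ℂ) ‖z‖).norm_image_sub_le_of_norm_hasDerivWithin_le
    (f := Ψ) (f' := F) (C := C * Real.exp ((δ + ε) * ‖z‖)) (x := 0) (y := z)
    (fun w _ => (hΨ w).hasDerivWithinAt) (fun w hw => ?_) (by simp) (by simp)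
  · rw [hΨ0, sub_zero, sub_zero] at hmvt
    have hlin : ‖z‖ ≤ Real.exp (ε * ‖z‖) / ε := by
      rw [le_div_iff₀ hε]
      linarith [Real.add_one_le_exp (ε * ‖z‖)]
    calc ‖Ψ z‖ ≤ C * Real.exp ((δ + ε) * ‖z‖) * ‖z‖ := hmvt
      _ ≤ C * Real.exp ((δ + ε) * ‖z‖) * (Real.exp (ε * ‖z‖) / ε) := by gcongr
      _ = C / ε * (Real.exp ((δ + ε) * ‖z‖) * Real.exp (ε * ‖z‖)) := by ring
      _ = C / ε * Real.exp ((δ + 2 * ε) * ‖z‖) := by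
        rw [← Real.exp_add]
        ring_nf
  · refine (hF w).trans ?_
    have : ‖w‖ ≤ ‖z‖ := by simpa using hw
    gcongr

theorem norm_deriv_le_of_norm_le_mul_exp {Ψ : ℂ → ℂ} {C σ : ℝ} {N : ℕ} (hΨ : Differentiable ℂ Ψ)
    (hC : 0 ≤ C) (hσ : 0 ≤ σ)
    (hbound : ∀ z, ‖Ψ z‖ ≤ C * (1 + ‖z‖) ^ N * Real.exp (σ * |z.im|)) (z : ℂ) :
    ‖deriv Ψ z‖ ≤ C * 2 ^ N * Real.exp σ * (1 + ‖z‖) ^ N * Real.exp (σ * |z.im|) := by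
  have hcauchy := Complex.norm_deriv_le_of_forall_mem_sphere_norm_le (c := z) (R := 1)
    (C := C * (2 * (1 + ‖z‖)) ^ N * Real.exp (σ * (|z.im| + 1))) one_pos hΨ.diffContOnCl
    fun w hw => ?_
  · rw [div_one] at hcauchy
    refine hcauchy.trans_eq ?_
    rw [mul_pow, mul_add, mul_one, Real.exp_add]
    ring
  · have hwz : ‖w - z‖ = 1 := by simpa [dist_eq_norm] using hw
    have hnorm : ‖w‖ ≤ ‖z‖ + 1 := by linarith [norm_le_norm_add_norm_sub' w z]
    have him : |w.im| ≤ |z.im| + 1 := by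
      have h1 := Complex.abs_im_le_norm (w - z)
      have h2 := abs_sub_abs_le_abs_sub w.im z.im
      rw [Complex.sub_im] at h1
      linarith
    refine (hbound w).trans ?_
    have : 1 + ‖w‖ ≤ 2 * (1 + ‖z‖) := by linarith [norm_nonneg z]
    gcongr

theorem ExpTypeLE.exists_norm_le_of_integrable (hF : Differentiable ℂ F) (htype : ExpTypeLE F δ)
    (hδ : 0 ≤ δ) (hint : Integrable (fun x : ℝ => ‖F x‖ * |x| ^ p)) :
    ∃ N : ℕ, ∀ ε > 0, ∃ C, 0 ≤ C ∧
      ∀ z, ‖F z‖ ≤ C * (1 + ‖z‖) ^ N * Real.exp ((δ + ε) * |z.im|) := by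
  have hcont : Continuous fun x : ℝ => F x := hF.continuous.comp Complex.continuous_ofReal
  obtain ⟨Ψ, hΨ0, hΨ⟩ := hF.isExactOn_univ.with_val_at 0 0
  replace hΨ (z : ℂ) : HasDerivAt Ψ (F z) z := by simpa using hΨ z (mem_univ z)
  have hΨd : Differentiable ℂ Ψ := fun z => (hΨ z).differentiableAt
  obtain ⟨C₁, N, hC₁, hN⟩ := exists_norm_intervalIntegral_le hcont hint
  have hprim (x : ℝ) : ∫ t in (0 : ℝ)..x, F t = Ψ x := by
    rw [intervalIntegral.integral_eq_sub_of_hasDerivAt (f := fun t : ℝ => Ψ t)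
      (fun t _ => (hΨ t).comp_ofReal) (hcont.intervalIntegrable _ _)]
    simp [hΨ0]
  refine ⟨N, fun ε hε => ?_⟩
  obtain ⟨C₂, hC₂⟩ := htype (ε / 2) (half_pos hε)
  have hΨ_type := norm_primitive_le_of_norm_le hΨ hΨ0 hδ (half_pos hε) hC₂
  rw [mul_div_cancel₀ ε two_ne_zero] at hΨ_type
  set C := max C₁ (C₂ / (ε / 2))
  have hC : 0 ≤ C := hC₁.trans (le_max_left _ _)
  have hΨ_bound := norm_le_mul_exp_abs_im hΨd hC (by positivity : 0 ≤ δ + ε)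
    (fun x => (hprim x ▸ hN x).trans (by gcongr; exact le_max_left _ _))
    (fun z => (hΨ_type z).trans (by gcongr; exact le_max_right _ _))
  refine ⟨C * 2 ^ N * Real.exp (δ + ε), by positivity, fun z => ?_⟩
  rw [← (hΨ z).deriv]
  exact norm_deriv_le_of_norm_le_mul_exp hΨd hC (by positivity) hΨ_bound z

end Growth

/-- The entire function `sin z / z`, with value `1` at `0`. -/
noncomputable def complexSinc : ℂ → ℂ :=
  dslope Complex.sin 0

theorem differentiable_complexSinc : Differentiable ℂ complexSinc :=
  differentiableOn_univ.mp <| (Complex.differentiableOn_dslope univ_mem).mpr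
    Complex.differentiable_sin.differentiableOn

theorem complexSinc_zero : complexSinc 0 = 1 := by
  simp [complexSinc, dslope_same]

theorem complexSinc_of_ne_zero {z : ℂ} (hz : z ≠ 0) : complexSinc z = Complex.sin z / z := by
  rw [complexSinc, dslope_of_ne _ hz, slope_def_field, Complex.sin_zero, sub_zero, sub_zero]

theorem complexSinc_ofReal (x : ℝ) : complexSinc x = (Real.sinc x : ℂ) := by
  rcases eq_or_ne x 0 with rfl | hx
  · simp [complexSinc_zero]
  · rw [complexSinc_of_ne_zero (mod_cast hx), Real.sinc_of_ne_zero hx, Complex.ofReal_div,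
      Complex.ofReal_sin]

theorem re_mul_complexSinc_ofReal_pow (w : ℂ) (x : ℝ) (n : ℕ) :
    (w * complexSinc x ^ n).re = w.re * Real.sinc x ^ n := by
  rw [complexSinc_ofReal, ← Complex.ofReal_pow, Complex.re_mul_ofReal]

theorem sinc_pow_mem_Icc_of_even {n : ℕ} (hn : Even n) (x : ℝ) : Real.sinc x ^ n ∈ Icc 0 1 :=
  ⟨hn.pow_nonneg _, hn.pow_abs (Real.sinc x) ▸ pow_le_one₀ (abs_nonneg _) (Real.abs_sinc_le_one x)⟩

theorem norm_sin_le_exp_abs_im (z : ℂ) : ‖Complex.sin z‖ ≤ Real.exp |z.im| := by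
  rw [Complex.sin, norm_div, norm_mul, Complex.norm_I, mul_one, Complex.norm_two,
    div_le_iff₀ two_pos]
  refine (norm_sub_le _ _).trans ?_
  have hneg : Real.exp (-z.im) ≤ Real.exp |z.im| := Real.exp_le_exp.mpr (neg_le_abs _)
  have hpos : Real.exp z.im ≤ Real.exp |z.im| := Real.exp_le_exp.mpr (le_abs_self _)
  simp only [Complex.norm_exp, Complex.mul_I_re, Complex.neg_im, neg_neg]
  linarith

theorem exists_norm_complexSinc_le :
    ∃ B, 0 ≤ B ∧ ∀ z, ‖complexSinc z‖ ≤ B * Real.exp |z.im| / (1 + ‖z‖) := by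
  obtain ⟨B, hB⟩ := (isCompact_closedBall (0 : ℂ) 1).exists_bound_of_continuousOn
    differentiable_complexSinc.continuous.continuousOn
  have hB0 : 0 ≤ B := (norm_nonneg _).trans (hB 0 (by simp))
  refine ⟨2 * B + 2, by positivity, fun z => ?_⟩
  have hexp : 1 ≤ Real.exp |z.im| := Real.one_le_exp (abs_nonneg _)
  rw [le_div_iff₀ (by positivity)]
  rcases le_total ‖z‖ 1 with hz | hz
  · calc ‖complexSinc z‖ * (1 + ‖z‖) ≤ B * (1 + 1) := by
          gcongr
          exact hB z (by simpa using hz)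
      _ ≤ (2 * B + 2) * 1 := by linarith
      _ ≤ (2 * B + 2) * Real.exp |z.im| := by gcongr
  · have hz0 : z ≠ 0 := norm_pos_iff.mp (one_pos.trans_le hz)
    rw [complexSinc_of_ne_zero hz0, norm_div]
    calc ‖Complex.sin z‖ / ‖z‖ * (1 + ‖z‖) ≤ Real.exp |z.im| / ‖z‖ * (‖z‖ + ‖z‖) := by
          gcongr
          exact norm_sin_le_exp_abs_im z
      _ = 2 * Real.exp |z.im| := by
        field_simp
        ring
      _ ≤ (2 * B + 2) * Real.exp |z.im| := by
        gcongr
        linarith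

theorem exists_norm_complexSinc_mul_le {e : ℝ} (he : 0 < e) :
    ∃ B, 0 ≤ B ∧ ∀ z, ‖complexSinc (e * z)‖ ≤ B * Real.exp (e * |z.im|) / (1 + ‖z‖) := by
  obtain ⟨B, hB, hbound⟩ := exists_norm_complexSinc_le
  have hmin : 0 < min e 1 := lt_min he one_pos
  refine ⟨B / min e 1, div_nonneg hB hmin.le, fun z => (hbound _).trans ?_⟩
  have hdenom : min e 1 * (1 + ‖z‖) ≤ 1 + e * ‖z‖ := by
    nlinarith [min_le_left e 1, min_le_right e 1, norm_nonneg z]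
  rw [Complex.im_ofReal_mul, abs_mul, abs_of_pos he, norm_mul, Complex.norm_of_nonneg he.le]
  calc _ ≤ B * Real.exp (e * |z.im|) / (min e 1 * (1 + ‖z‖)) := by gcongr
    _ = _ := by field_simp

theorem exists_norm_mul_complexSinc_pow_le {F : ℂ → ℂ} {C σ e : ℝ} {N K n : ℕ} (hC : 0 ≤ C)
    (hF : ∀ z, ‖F z‖ ≤ C * (1 + ‖z‖) ^ N * Real.exp (σ * |z.im|)) (he : 0 < e)
    (hn : N + K ≤ n) : ∃ D, ∀ z, ‖F z * complexSinc (e * z) ^ n‖ ≤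
      D * Real.exp ((σ + n * e) * |z.im|) / (1 + ‖z‖) ^ K := by
  obtain ⟨B, hB, hbound⟩ := exists_norm_complexSinc_mul_le he
  refine ⟨C * B ^ n, fun z => ?_⟩
  have hexp : Real.exp ((σ + n * e) * |z.im|) =
      Real.exp (σ * |z.im|) * Real.exp (e * |z.im|) ^ n := by
    rw [← Real.exp_nat_mul, ← Real.exp_add]
    ring_nf
  have hpow : (1 + ‖z‖) ^ N / (1 + ‖z‖) ^ n ≤ 1 / (1 + ‖z‖) ^ K := by
    rw [div_le_div_iff₀ (by positivity) (by positivity), ← pow_add, one_mul]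
    exact pow_le_pow_right₀ (by linarith [norm_nonneg z]) hn
  rw [norm_mul, norm_pow]
  calc _ ≤ C * (1 + ‖z‖) ^ N * Real.exp (σ * |z.im|) *
        (B * Real.exp (e * |z.im|) / (1 + ‖z‖)) ^ n := by
        gcongr
        exacts [hF z, hbound z]
    _ = C * B ^ n * Real.exp ((σ + n * e) * |z.im|) * ((1 + ‖z‖) ^ N / (1 + ‖z‖) ^ n) := by
        rw [hexp]
        ring
    _ ≤ C * B ^ n * Real.exp ((σ + n * e) * |z.im|) * (1 / (1 + ‖z‖) ^ K) := by gcongr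
    _ = _ := by ring

section LowerBound

variable {ν δ : ℝ} {F : ℂ → ℂ}

theorem minimalMass_le_integral_of_norm_le {σ ε C : ℝ} {N : ℕ} (hν : 0 < ν + 1) (hσ : 0 ≤ σ)
    (hε : 0 < ε) (hF : Differentiable ℂ F) (hC : 0 ≤ C)
    (hbound : ∀ z, ‖F z‖ ≤ C * (1 + ‖z‖) ^ N * Real.exp (σ * |z.im|))
    (hpos : ∀ x : ℝ, 0 ≤ (F x).re) (hzero : 1 ≤ (F 0).re)
    (hint : Integrable (fun x : ℝ => (F x).re * |x| ^ (2 * ν + 1))) :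
    minimalMass ν (σ + ε) ≤ ∫ x : ℝ, (F x).re * |x| ^ (2 * ν + 1) := by
  obtain ⟨K, hK⟩ := exists_nat_gt (max 2 (2 * ν + 2))
  obtain ⟨hK2, hKν⟩ := max_lt_iff.mp hK
  set n := 2 * (N + K) with hn_def
  have hn : (0 : ℝ) < n := by
    rw [hn_def]
    push_cast
    positivity
  have he : 0 < ε / n := by positivity
  obtain ⟨D, hD⟩ := exists_norm_mul_complexSinc_pow_le hC hbound he (K := K) (n := n) (by omega)
  rw [mul_div_cancel₀ ε hn.ne'] at hD
  have hre (x : ℝ) : (F x * complexSinc ((ε / n : ℝ) * x) ^ n).re =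
      (F x).re * Real.sinc (ε / n * x) ^ n := by
    rw [← Complex.ofReal_mul, re_mul_complexSinc_ofReal_pow]
  have hsinc := sinc_pow_mem_Icc_of_even (n := n) (even_two_mul _)
  have hle (x : ℝ) : (F x * complexSinc ((ε / n : ℝ) * x) ^ n).re * |x| ^ (2 * ν + 1) ≤
      (F x).re * |x| ^ (2 * ν + 1) := by
    rw [hre]
    gcongr
    exact mul_le_of_le_one_right (hpos x) (hsinc _).2
  have hG : Differentiable ℂ fun z => F z * complexSinc ((ε / n : ℝ) * z) ^ n := by
    have := differentiable_complexSinc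
    fun_prop
  have hG_pos (x : ℝ) : 0 ≤ (F x * complexSinc ((ε / n : ℝ) * x) ^ n).re := by
    rw [hre]
    exact mul_nonneg (hpos x) (hsinc _).1
  have hG_int : Integrable
      (fun x : ℝ => (F x * complexSinc ((ε / n : ℝ) * x) ^ n).re * |x| ^ (2 * ν + 1)) := by
    have hcont : Continuous fun x : ℝ => F x * complexSinc ((ε / n : ℝ) * x) ^ n :=
      hG.continuous.comp Complex.continuous_ofReal
    refine hint.mono' (AEStronglyMeasurable.mul ?_ ?_) (Eventually.of_forall fun x => ?_)
    · exact (Complex.continuous_re.comp hcont).aestronglyMeasurable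
    · exact (by fun_prop : Measurable fun x : ℝ => |x| ^ (2 * ν + 1)).aestronglyMeasurable
    · rw [Real.norm_of_nonneg (mul_nonneg (hG_pos x) (by positivity))]
      exact hle x
  refine (minimalMass_le_integral_of_decay hν (by positivity) hG (mod_cast hK2.le) hKν hD hG_pos
    ?_ hG_int).trans (integral_mono hG_int hint hle)
  simpa [complexSinc_zero] using hzero

theorem ExpTypeLE.minimalMass_le_integral (hν : 0 < ν + 1) (hδ : 0 < δ) (hF : Differentiable ℂ F)
    (htype : ExpTypeLE F δ) (him : ∀ x : ℝ, (F x).im = 0) (hpos : ∀ x : ℝ, 0 ≤ (F x).re)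
    (hzero : 1 ≤ (F 0).re) (hint : Integrable (fun x : ℝ => (F x).re * |x| ^ (2 * ν + 1))) :
    minimalMass ν δ ≤ ∫ x : ℝ, (F x).re * |x| ^ (2 * ν + 1) := by
  have hnorm (x : ℝ) : ‖F x‖ = (F x).re := by
    rw [← abs_of_nonneg (hpos x)]
    exact (Complex.abs_re_eq_norm.mpr (him x)).symm
  obtain ⟨N, hN⟩ := htype.exists_norm_le_of_integrable hF hδ.le (by simpa only [hnorm] using hint)
  have hlim : Tendsto (fun ε : ℝ => minimalMass ν (δ + ε + ε)) (𝓝[>] 0) (𝓝 (minimalMass ν δ)) := by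
    have hmass : ContinuousAt (minimalMass ν) (δ + 0 + 0) :=
      (continuousOn_minimalMass ν).continuousAt (Ioi_mem_nhds (by simpa using hδ))
    have hcont : ContinuousAt (fun ε : ℝ => minimalMass ν (δ + ε + ε)) 0 :=
      hmass.comp (f := fun ε : ℝ => δ + ε + ε) (by fun_prop)
    simpa using hcont.tendsto.mono_left nhdsWithin_le_nhds
  refine le_of_tendsto hlim ?_
  filter_upwards [self_mem_nhdsWithin] with ε hε
  rw [mem_Ioi] at hε
  obtain ⟨C, hC, hbound⟩ := hN ε hε
  exact minimalMass_le_integral_of_norm_le hν (by positivity) hε hF hC hbound hpos hzero hint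

end LowerBound

theorem exists_tendsto_of_tendsto_charFun {E : Type*} [NormedAddCommGroup E]
    [InnerProductSpace ℝ E] [FiniteDimensional ℝ E] [MeasurableSpace E] [BorelSpace E]
    {μ : ℕ → ProbabilityMeasure E} {f : E → ℂ} (hf : ContinuousAt f 0)
    (h : ∀ t, Tendsto (fun n => charFun (μ n) t) atTop (𝓝 (f t))) :
    ∃ ρ : ProbabilityMeasure E, Tendsto μ atTop (𝓝 ρ) ∧ ∀ t, charFun (ρ : Measure E) t = f t := by
  have htight : IsTightMeasureSet {((m : ProbabilityMeasure E) : Measure E) | m ∈ range μ} := by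
    simpa using! isTightMeasureSet_of_tendsto_charFun hf h
  obtain ⟨ρ, -, hρ⟩ := (isCompact_closure_of_isTightMeasureSet htight).exists_mapClusterPt
    (f := atTop) (u := μ) (tendsto_principal.mpr <|
      Eventually.of_forall fun n => subset_closure (mem_range_self n))
  obtain ⟨U, hU, hlim⟩ := mapClusterPt_iff_ultrafilter.mp hρ
  have hchar (t : E) : charFun (ρ : Measure E) t = f t := by
    have hconv := (ProbabilityMeasure.tendsto_iff_forall_integral_rclike_tendsto ℂ).mp hlim
      (BoundedContinuousFunction.innerProbChar t)
    simp_rw [← charFun_eq_integral_innerProbChar] at hconv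
    exact tendsto_nhds_unique hconv ((h t).mono_left hU)
  exact ⟨ρ, ProbabilityMeasure.tendsto_of_tendsto_charFun fun t => by simpa [hchar] using h t,
    hchar⟩

theorem integrable_of_tendsto_of_integral_le {Ω : Type*} [TopologicalSpace Ω]
    [MeasurableSpace Ω] [OpensMeasurableSpace Ω] [HasOuterApproxClosed Ω]
    {μ : ℕ → ProbabilityMeasure Ω} {ρ : ProbabilityMeasure Ω} (h : Tendsto μ atTop (𝓝 ρ))
    {g : Ω → ℝ} (hg : Continuous g) (hg0 : 0 ≤ g) {B : ℝ}
    (hint : ∀ n, Integrable g (μ n : Measure Ω)) (hB : ∀ n, ∫ x, g x ∂(μ n : Measure Ω) ≤ B) :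
    Integrable g (ρ : Measure Ω) := by
  refine ⟨hg.aestronglyMeasurable, ?_⟩
  rw [hasFiniteIntegral_iff_ofReal (Eventually.of_forall hg0)]
  have hbound (n : ℕ) : ∫⁻ x, ENNReal.ofReal (g x) ∂(μ n : Measure Ω) ≤ ENNReal.ofReal B := by
    rw [← ofReal_integral_eq_lintegral_ofReal (hint n) (Eventually.of_forall hg0)]
    exact ENNReal.ofReal_le_ofReal (hB n)
  calc ∫⁻ x, ENNReal.ofReal (g x) ∂(ρ : Measure Ω)
      ≤ liminf (fun n => ∫⁻ x, ENNReal.ofReal (g x) ∂(μ n : Measure Ω)) atTop :=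
        lintegral_le_liminf_lintegral_of_forall_isOpen_measure_le_liminf_measure hg hg0
          fun _ hG => ProbabilityMeasure.le_liminf_measure_open_of_tendsto h hG
    _ ≤ ENNReal.ofReal B := (liminf_le_liminf (Eventually.of_forall hbound)).trans
        (liminf_const _).le
    _ < ⊤ := ENNReal.ofReal_lt_top

theorem expMeasure_eq_withDensity (r : ℝ) :
    ProbabilityTheory.expMeasure r = (volume.restrict (Ioi 0)).withDensity
      fun x => ENNReal.ofReal (r * Real.exp (-(r * x))) := by
  rw [ProbabilityTheory.expMeasure, ProbabilityTheory.gammaMeasure,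
    restrict_Ioi_eq_restrict_Ici, ← withDensity_indicator measurableSet_Ici]
  congr with x
  change ProbabilityTheory.exponentialPDF r x = _
  simp [ProbabilityTheory.exponentialPDF_eq, indicator_apply, apply_ite ENNReal.ofReal]

section ExpMeasure

variable {r : ℝ} {E : Type*} [NormedAddCommGroup E] [NormedSpace ℝ E]

theorem integrable_expMeasure_iff (hr : 0 < r) {f : ℝ → E} :
    Integrable f (ProbabilityTheory.expMeasure r) ↔
      IntegrableOn (fun x => (r * Real.exp (-(r * x))) • f x) (Ioi 0) := by
  rw [expMeasure_eq_withDensity, integrable_withDensity_iff_integrable_smul₀' (by fun_prop)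
    (Eventually.of_forall fun _ => ENNReal.ofReal_lt_top)]
  simp_rw [ENNReal.toReal_ofReal (mul_pos hr (Real.exp_pos _)).le, IntegrableOn]

theorem integral_expMeasure (hr : 0 < r) (f : ℝ → E) :
    ∫ x, f x ∂ProbabilityTheory.expMeasure r =
      ∫ x in Ioi 0, (r * Real.exp (-(r * x))) • f x := by
  rw [expMeasure_eq_withDensity, integral_withDensity_eq_integral_toReal_smul (by fun_prop)
    (Eventually.of_forall fun _ => ENNReal.ofReal_lt_top)]
  simp_rw [ENNReal.toReal_ofReal (mul_pos hr (Real.exp_pos _)).le]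

theorem integrable_exp_mul_abs_expMeasure (hr : 0 < r) {c : ℝ} (hc : c < r) :
    Integrable (fun t => Real.exp (c * |t|)) (ProbabilityTheory.expMeasure r) := by
  have hint : IntegrableOn (fun t => r * Real.exp ((c - r) * t)) (Ioi 0) :=
    (integrableOn_exp_mul_Ioi (sub_neg.mpr hc) 0).const_mul r
  refine (integrable_expMeasure_iff hr).mpr (hint.congr_fun (fun t ht => ?_) measurableSet_Ioi)
  rw [smul_eq_mul, mul_assoc, ← Real.exp_add, abs_of_pos (mem_Ioi.mp ht)]
  ring_nf

theorem charFun_expMeasure (hr : 0 < r) (y : ℝ) :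
    charFun (ProbabilityTheory.expMeasure r) y = r / (r - y * Complex.I) := by
  have hre : (y * Complex.I - r : ℂ).re < 0 := by simpa using hr
  have hcongr (t : ℝ) : (r * Real.exp (-(r * t))) • Complex.exp (y * t * Complex.I) =
      r * Complex.exp ((y * Complex.I - r) * t) := by
    rw [Complex.real_smul, Complex.ofReal_mul, Complex.ofReal_exp, mul_assoc, ← Complex.exp_add]
    push_cast
    ring_nf
  rw [charFun_apply_real, integral_expMeasure hr]
  simp_rw [hcongr, integral_const_mul, integral_exp_mul_complex_Ioi hre 0]
  rw [Complex.ofReal_zero, mul_zero, Complex.exp_zero, ← neg_sub (r : ℂ), neg_div_neg_eq,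
    mul_one_div]

end ExpMeasure

/-- A probability measure `ρ` with `∫ e^{c|t|} dρ(t) < ∞` whose moment generating function is
`1 / Q`, the equation being imposed on the imaginary axis only. -/
structure HasReciprocalMGF (ρ : Measure ℝ) (Q : ℂ → ℂ) (c : ℝ) : Prop where
  isProbabilityMeasure : IsProbabilityMeasure ρ
  integrable_exp_mul_abs : Integrable (fun t => Real.exp (c * |t|)) ρ
  charFun_mul : ∀ y : ℝ, charFun ρ y * Q (y * Complex.I) = 1

namespace HasReciprocalMGF

variable {ρ ρ' : Measure ℝ} {Q Q' : ℂ → ℂ} {c : ℝ}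

theorem mono (h : HasReciprocalMGF ρ Q c) {c' : ℝ} (hc : c' ≤ c) : HasReciprocalMGF ρ Q c' :=
  ⟨h.isProbabilityMeasure, h.integrable_exp_mul_abs.mono' (by fun_prop) <|
    Eventually.of_forall fun t => by
      rw [Real.norm_of_nonneg (Real.exp_pos _).le]
      gcongr, h.charFun_mul⟩

theorem dirac_zero (c : ℝ) : HasReciprocalMGF (Measure.dirac 0) (fun _ => 1) c :=
  ⟨inferInstance, integrable_dirac (by simp), fun y => by simp [charFun_dirac]⟩

theorem expMeasure {r : ℝ} (hr : 0 < r) (hc : c < r) :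
    HasReciprocalMGF (ProbabilityTheory.expMeasure r) (fun z => 1 - z / r) c where
  isProbabilityMeasure := ProbabilityTheory.isProbabilityMeasure_expMeasure hr
  integrable_exp_mul_abs := integrable_exp_mul_abs_expMeasure hr hc
  charFun_mul y := by
    have hr' : (r : ℂ) ≠ 0 := mod_cast hr.ne'
    have hne : (r - y * Complex.I : ℂ) ≠ 0 := fun h => hr.ne' (by simpa using congrArg Complex.re h)
    rw [charFun_expMeasure hr]
    field_simp

theorem map_mul {a : ℝ} (h : HasReciprocalMGF ρ Q (c * |a|)) :
    HasReciprocalMGF (ρ.map (a * ·)) (fun z => Q (a * z)) c where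
  isProbabilityMeasure :=
    have := h.isProbabilityMeasure
    Measure.isProbabilityMeasure_map (by fun_prop)
  integrable_exp_mul_abs := by
    rw [integrable_map_measure (by fun_prop) (by fun_prop)]
    simpa [Function.comp_def, abs_mul, mul_assoc] using h.integrable_exp_mul_abs
  charFun_mul y := by
    simpa [charFun_map_mul, mul_assoc] using h.charFun_mul (a * y)

theorem conv (hc : 0 ≤ c) (h : HasReciprocalMGF ρ Q c) (h' : HasReciprocalMGF ρ' Q' c) :
    HasReciprocalMGF (ρ.conv ρ') (fun z => Q z * Q' z) c := by
  have := h.isProbabilityMeasure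
  have := h'.isProbabilityMeasure
  refine ⟨inferInstance, ?_, fun y => ?_⟩
  · rw [Measure.conv, integrable_map_measure (by fun_prop) (by fun_prop)]
    refine (h.integrable_exp_mul_abs.mul_prod h'.integrable_exp_mul_abs).mono' (by fun_prop) <|
      Eventually.of_forall fun p => ?_
    rw [Function.comp_apply, Real.norm_of_nonneg (Real.exp_pos _).le, ← Real.exp_add, ← mul_add]
    gcongr
    exact abs_add_le _ _
  · rw [charFun_conv]
    linear_combination charFun ρ' y * Q' (y * Complex.I) * h.charFun_mul y + h'.charFun_mul y

theorem exists_prod {ι : Type*} {Q : ι → ℂ → ℂ} (hc : 0 ≤ c) {s : Finset ι}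
    (h : ∀ i ∈ s, ∃ ρ, HasReciprocalMGF ρ (Q i) c) :
    ∃ ρ, HasReciprocalMGF ρ (fun z => ∏ i ∈ s, Q i z) c := by
  classical
  induction s using Finset.induction_on with
  | empty => exact ⟨_, by simpa using dirac_zero c⟩
  | insert i s hi ih =>
    obtain ⟨ρ, hρ⟩ := h i (Finset.mem_insert_self i s)
    obtain ⟨ρ', hρ'⟩ := ih fun j hj => h j (Finset.mem_insert_of_mem hj)
    exact ⟨_, by simpa only [Finset.prod_insert hi] using hρ.conv hc hρ'⟩

theorem exists_one_sub_mul_sq {a : ℝ} (ha : 0 < a) (hc : 0 ≤ c) (hac : a * c ^ 2 < 1) :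
    ∃ ρ, HasReciprocalMGF ρ (fun z => 1 - a * z ^ 2) c := by
  obtain ⟨r, hr, rfl⟩ : ∃ r : ℝ, 0 < r ∧ a = (r ^ 2)⁻¹ :=
    ⟨(√a)⁻¹, by positivity, by rw [inv_pow, Real.sq_sqrt ha.le, inv_inv]⟩
  have hcr : c < r := by
    rw [inv_mul_lt_iff₀ (by positivity), mul_one] at hac
    exact lt_of_pow_lt_pow_left₀ 2 hr.le hac
  have hneg := map_mul (a := -1) (c := c) (expMeasure hr (by simpa using hcr))
  have hfactor : (fun z : ℂ => 1 - ((r ^ 2)⁻¹ : ℝ) * z ^ 2) =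
      fun z => (1 - z / r) * (1 - ((-1 : ℝ) : ℂ) * z / r) := by
    funext z
    push_cast
    ring
  exact ⟨_, hfactor ▸ (expMeasure hr hcr).conv hc hneg⟩

theorem integrable_exp_mul (h : HasReciprocalMGF ρ Q c) {x : ℝ} (hx : |x| ≤ c) :
    Integrable (fun t => Real.exp (x * t)) ρ := by
  refine h.integrable_exp_mul_abs.mono' (by fun_prop) (Eventually.of_forall fun t => ?_)
  rw [Real.norm_of_nonneg (Real.exp_pos _).le]
  refine Real.exp_le_exp.mpr ((le_abs_self _).trans ?_)
  rw [abs_mul]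
  gcongr

theorem complexMGF_mul (h : HasReciprocalMGF ρ Q c) (hQ : Differentiable ℂ Q) {z : ℂ}
    (hz : |z.re| < c) : ProbabilityTheory.complexMGF id ρ z * Q z = 1 := by
  have hc : 0 < c := (abs_nonneg _).trans_lt hz
  have hstrip : Ioo (-c) c ⊆ interior (ProbabilityTheory.integrableExpSet id ρ) :=
    interior_maximal (fun x hx => h.integrable_exp_mul (abs_le.mpr ⟨hx.1.le, hx.2.le⟩)) isOpen_Ioo
  have hanalytic : AnalyticOnNhd ℂ (fun w => ProbabilityTheory.complexMGF id ρ w * Q w)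
      (Complex.re ⁻¹' Ioo (-c) c) :=
    (ProbabilityTheory.analyticOnNhd_complexMGF.mono fun w hw => hstrip hw).mul
      fun w _ => hQ.analyticAt w
  have hconn : IsPreconnected (Complex.re ⁻¹' Ioo (-c) c) :=
    ((convex_Ioo (-c) c).is_linear_preimage (f := Complex.re) ⟨by simp, by simp⟩).isPreconnected
  have hlim : Tendsto (fun y : ℝ => (y * Complex.I : ℂ)) (𝓝[≠] 0) (𝓝[≠] 0) := by
    refine tendsto_nhdsWithin_iff.mpr ⟨?_, ?_⟩
    · have hcont : Continuous fun y : ℝ => (y * Complex.I : ℂ) := by fun_prop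
      exact (hcont.tendsto' 0 0 (by simp)).mono_left nhdsWithin_le_nhds
    · filter_upwards [self_mem_nhdsWithin] with y hy
      simpa using hy
  exact hanalytic.eqOn_of_preconnected_of_frequently_eq analyticOnNhd_const hconn
    (show (0 : ℂ) ∈ _ by simpa using hc)
    (hlim.frequently (Frequently.of_forall fun y => by
      rw [ProbabilityTheory.complexMGF_id_mul_I, h.charFun_mul])) (abs_lt.mp hz)

theorem integral_exp_mul_eq (h : HasReciprocalMGF ρ Q c) (hQ : Differentiable ℂ Q) {x : ℝ}
    (hx : |x| < c) : ∫ t, Real.exp (x * t) ∂ρ = ‖(Q x)⁻¹‖ := by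
  have hmgf := h.complexMGF_mul hQ (z := x) (by simpa using hx)
  rw [← eq_inv_of_mul_eq_one_left hmgf, ProbabilityTheory.complexMGF_ofReal, Complex.norm_real,
    Real.norm_of_nonneg ProbabilityTheory.mgf_nonneg, ProbabilityTheory.mgf]
  rfl

theorem integral_exp_mul_abs_le (h : HasReciprocalMGF ρ Q c) (hQ : Differentiable ℂ Q) {x : ℝ}
    (hx : |x| < c) : ∫ t, Real.exp (x * |t|) ∂ρ ≤ ‖(Q x)⁻¹‖ + ‖(Q (-x))⁻¹‖ := by
  have hpos := h.integrable_exp_mul hx.le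
  have hneg := h.integrable_exp_mul (x := -x) (by simpa using hx.le)
  calc ∫ t, Real.exp (x * |t|) ∂ρ
      ≤ ∫ t, (Real.exp (x * t) + Real.exp (-x * t)) ∂ρ := by
        refine integral_mono (h.mono ((le_abs_self x).trans hx.le)).integrable_exp_mul_abs
          (hpos.add hneg) fun t => ?_
        rcases abs_choice t with ht | ht
        · simpa only [ht] using le_add_of_nonneg_right (Real.exp_pos _).le
        · simpa only [ht, neg_mul_comm] using le_add_of_nonneg_left (Real.exp_pos _).le
    _ = ‖(Q x)⁻¹‖ + ‖(Q (-x))⁻¹‖ := by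
        rw [integral_add hpos hneg, h.integral_exp_mul_eq hQ hx,
          h.integral_exp_mul_eq hQ (by simpa using hx), Complex.ofReal_neg]

theorem exists_of_tendsto {ρ : ℕ → Measure ℝ} {P : ℕ → ℂ → ℂ} {B : ℝ}
    (h : ∀ n, HasReciprocalMGF (ρ n) (P n) c) (hB : ∀ n, ∫ t, Real.exp (c * |t|) ∂ρ n ≤ B)
    (hQ : Continuous Q) (hlim : ∀ z, Tendsto (fun n => P n z) atTop (𝓝 (Q z))) :
    ∃ ρ', HasReciprocalMGF ρ' Q c := by
  have hprob (n : ℕ) : IsProbabilityMeasure (ρ n) := (h n).isProbabilityMeasure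
  have hne (y : ℝ) : Q (y * Complex.I) ≠ 0 := by
    have hge : 1 ≤ ‖Q (y * Complex.I)‖ := ge_of_tendsto' (hlim _).norm fun n => by
      calc 1 = ‖charFun (ρ n) y‖ * ‖P n (y * Complex.I)‖ := by
            rw [← norm_mul, (h n).charFun_mul, norm_one]
        _ ≤ ‖P n (y * Complex.I)‖ := mul_le_of_le_one_left (norm_nonneg _) (norm_charFun_le_one y)
    exact norm_pos_iff.mp (one_pos.trans_le hge)
  have hchar (y : ℝ) :
      Tendsto (fun n => charFun (ρ n) y) atTop (𝓝 (Q (y * Complex.I))⁻¹) :=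
    ((hlim _).inv₀ (hne y)).congr fun n => (eq_inv_of_mul_eq_one_left ((h n).charFun_mul y)).symm
  have hcont : ContinuousAt (fun y : ℝ => (Q (y * Complex.I))⁻¹) 0 :=
    ContinuousAt.inv₀ (by fun_prop) (hne 0)
  obtain ⟨ρ', hconv, hchar'⟩ := exists_tendsto_of_tendsto_charFun
    (μ := fun n => ⟨ρ n, hprob n⟩) hcont hchar
  refine ⟨ρ', inferInstance, integrable_of_tendsto_of_integral_le hconv (by fun_prop)
    (fun t => (Real.exp_pos _).le) (fun n => (h n).integrable_exp_mul_abs) hB, fun y => ?_⟩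
  rw [hchar', inv_mul_cancel₀ (hne y)]

end HasReciprocalMGF

theorem factorial_le_ascPochhammer_eval {b : ℝ} (hb : 1 ≤ b) (k : ℕ) :
    (k.factorial : ℝ) ≤ (ascPochhammer ℝ k).eval b := by
  rw [← ascPochhammer_eval_one ℝ k, ascPochhammer_eval_eq_prod, ascPochhammer_eval_eq_prod]
  exact Finset.prod_le_prod (fun j _ => by positivity) fun j _ => by gcongr

theorem ascPochhammer_eval_le_pow {x : ℝ} (hx : 0 ≤ x) {k n : ℕ} (hk : k ≤ n) :
    (ascPochhammer ℝ k).eval x ≤ (x + n) ^ k := by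
  rw [ascPochhammer_eval_eq_prod, ← Finset.card_range k, ← Finset.prod_const, Finset.card_range]
  refine Finset.prod_le_prod (fun j _ => by positivity) fun j hj => ?_
  gcongr
  exact (Finset.mem_range.mp hj).le.trans hk

theorem tendsto_ascPochhammer_eval_natCast_add_div_pow (x : ℝ) (k : ℕ) :
    Tendsto (fun n : ℕ => (ascPochhammer ℝ k).eval (n + x) / (n : ℝ) ^ k) atTop (𝓝 1) := by
  have hfactor (j : ℕ) : Tendsto (fun n : ℕ => (n + x + j) / (n : ℝ)) atTop (𝓝 1) := by
    have hlim := (tendsto_const_div_atTop_nhds_zero_nat (x + j)).const_add 1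
    rw [add_zero] at hlim
    refine hlim.congr' ?_
    filter_upwards [eventually_ne_atTop 0] with n hn
    field_simp
    ring
  have hprod := tendsto_finsetProd (Finset.range k) fun j _ => hfactor j
  simpa only [Finset.prod_div_distrib, Finset.prod_const, one_pow,
    Finset.card_range, ← ascPochhammer_eval_eq_prod] using hprod

/-- The confluent hypergeometric limit function `₀F₁(; b; z)`. Up to normalization, the Bessel
function `J_α(x)` is `(x/2)^α ₀F₁(; α + 1; -x²/4)`. -/
noncomputable def zeroFOne (b : ℝ) (z : ℂ) : ℂ :=
  ∑' k : ℕ, z ^ k / ((ascPochhammer ℝ k).eval b * k.factorial : ℝ)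

section ZeroFOne

variable {b : ℝ}

theorem im_zeroFOne_ofReal (b x : ℝ) : (zeroFOne b x).im = 0 := by
  have hreal : zeroFOne b x =
      ((∑' k : ℕ, x ^ k / ((ascPochhammer ℝ k).eval b * k.factorial) : ℝ) : ℂ) := by
    push_cast [zeroFOne]
    rfl
  rw [hreal, Complex.ofReal_im]

theorem norm_zeroFOne_term_le (hb : 1 ≤ b) (z : ℂ) (k : ℕ) :
    ‖z ^ k / ((ascPochhammer ℝ k).eval b * k.factorial : ℝ)‖ ≤
      ‖z‖ ^ k / (k.factorial * k.factorial) := by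
  have hfac := factorial_le_ascPochhammer_eval hb k
  rw [norm_div, norm_pow, Complex.norm_real, Real.norm_of_nonneg
    (mul_nonneg ((Nat.cast_nonneg _).trans hfac) (Nat.cast_nonneg _))]
  gcongr

theorem differentiable_zeroFOne (hb : 1 ≤ b) : Differentiable ℂ (zeroFOne b) := fun z => by
  have hball : DifferentiableOn ℂ (zeroFOne b) (Metric.ball 0 (‖z‖ + 1)) := by
    refine Complex.differentiableOn_tsum_of_summable_norm
      (Real.summable_pow_div_factorial (‖z‖ + 1)) (fun k => by fun_prop) Metric.isOpen_ball ?_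
    intro k w hw
    have hw' : ‖w‖ ≤ ‖z‖ + 1 := (mem_ball_zero_iff.mp hw).le
    have hfac : (1 : ℝ) ≤ k.factorial := mod_cast k.factorial_pos
    calc _ ≤ ‖w‖ ^ k / (k.factorial * k.factorial) := norm_zeroFOne_term_le hb w k
      _ ≤ (‖z‖ + 1) ^ k / (k.factorial * 1) := by gcongr
      _ = _ := by rw [mul_one]
  exact hball.differentiableAt (Metric.isOpen_ball.mem_nhds (by simp))

theorem factorial_two_mul_le (k : ℕ) :
    (2 * k).factorial ≤ 4 ^ k * (k.factorial * k.factorial) := by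
  have hchoose := Nat.choose_mul_factorial_mul_factorial (show k ≤ 2 * k by lia)
  rw [show 2 * k - k = k by lia, ← Nat.centralBinom_eq_two_mul_choose, mul_assoc] at hchoose
  rw [← hchoose]
  exact Nat.mul_le_mul_right _ (Nat.centralBinom_le_four_pow k)

theorem norm_zeroFOne_neg_sq_le (hb : 1 ≤ b) (u : ℂ) :
    ‖zeroFOne b (-u ^ 2)‖ ≤ Real.exp (2 * ‖u‖) := by
  have hterm (k : ℕ) : ‖(-u ^ 2) ^ k / ((ascPochhammer ℝ k).eval b * k.factorial : ℝ)‖ ≤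
      (2 * ‖u‖) ^ (2 * k) / (2 * k).factorial := by
    refine (norm_zeroFOne_term_le hb _ k).trans ?_
    have hfac : ((2 * k).factorial : ℝ) ≤ 4 ^ k * (k.factorial * k.factorial) :=
      mod_cast factorial_two_mul_le k
    rw [norm_neg, norm_pow, ← pow_mul, div_le_div_iff₀ (by positivity) (by positivity), mul_pow,
      pow_mul 2]
    calc ‖u‖ ^ (2 * k) * ((2 * k).factorial : ℝ)
        ≤ ‖u‖ ^ (2 * k) * (4 ^ k * (k.factorial * k.factorial)) := by gcongr
      _ = _ := by ring
  refine (tsum_of_norm_bounded (Real.hasSum_cosh (2 * ‖u‖)) hterm).trans ?_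
  have hneg : Real.exp (-(2 * ‖u‖)) ≤ Real.exp (2 * ‖u‖) := by
    gcongr
    linarith [norm_nonneg u]
  rw [Real.cosh_eq]
  linarith

end ZeroFOne

section MehlerHeine

variable {a b : ℝ}

theorem abs_coeff_jacobiPolynomial_div_le (ha : 0 ≤ a) (hb : 0 ≤ b) {n : ℕ} (hn : n ≠ 0) (k : ℕ) :
    |(jacobiPolynomial a b n).coeff k| / (n : ℝ) ^ (2 * k) ≤ (a + b + 2) ^ k / k.factorial := by
  have hn1 : (1 : ℝ) ≤ n := mod_cast Nat.one_le_iff_ne_zero.mpr hn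
  have hden : 1 ≤ (ascPochhammer ℝ k).eval (a + 1) :=
    (mod_cast k.factorial_pos : (1 : ℝ) ≤ k.factorial).trans
      (factorial_le_ascPochhammer_eval (by linarith) k)
  have hnum0 : 0 ≤ (ascPochhammer ℝ k).eval (n + a + b) :=
    (ascPochhammer_pos k _ (by linarith)).le
  rcases lt_or_ge n k with hk | hk
  · rw [coeff_jacobiPolynomial, Nat.choose_eq_zero_of_lt hk]
    simp only [Nat.cast_zero, mul_zero, zero_mul, abs_zero, zero_div]
    positivity
  have hnum : (ascPochhammer ℝ k).eval (n + a + b) ≤ ((a + b + 2) * n) ^ k :=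
    (ascPochhammer_eval_le_pow (by linarith) hk).trans <|
      pow_le_pow_left₀ (by linarith) (by nlinarith) k
  rw [coeff_jacobiPolynomial, abs_mul, abs_mul, abs_neg_one_pow, one_mul, Nat.abs_cast,
    abs_of_nonneg (by positivity), div_le_iff₀ (by positivity)]
  calc n.choose k * ((ascPochhammer ℝ k).eval (n + a + b) / (ascPochhammer ℝ k).eval (a + 1))
      ≤ n ^ k / k.factorial * (((a + b + 2) * n) ^ k / 1) := by
        gcongr
        exact Nat.choose_le_pow_div k n
    _ = (a + b + 2) ^ k / k.factorial * n ^ (2 * k) := by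
        rw [mul_pow]
        ring

theorem tendsto_coeff_jacobiPolynomial_div (a b : ℝ) (k : ℕ) :
    Tendsto (fun n : ℕ => (jacobiPolynomial a b n).coeff k / (n : ℝ) ^ (2 * k)) atTop
      (𝓝 ((-1) ^ k / ((ascPochhammer ℝ k).eval (a + 1) * k.factorial))) := by
  have hchoose : Tendsto (fun n : ℕ => n.choose k * ((n : ℝ)⁻¹) ^ k) atTop
      (𝓝 (1 ^ k / k.factorial)) := by
    refine ProbabilityTheory.tendsto_choose_mul_pow_atTop k (tendsto_const_nhds.congr' ?_)
    filter_upwards [eventually_ne_atTop 0] with n hn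
    field_simp
  have hlim := ((hchoose.mul (tendsto_ascPochhammer_eval_natCast_add_div_pow (a + b) k)).const_mul
    ((-1) ^ k / (ascPochhammer ℝ k).eval (a + 1)))
  convert hlim using 2 with n
  · rw [coeff_jacobiPolynomial, add_assoc, inv_pow, two_mul, pow_add]
    ring
  · rw [one_pow]
    ring

theorem aeval_div_sq_eq_tsum (p : ℝ[X]) (w : ℂ) (n : ℕ) :
    aeval (w / (n : ℂ) ^ 2) p = ∑' k, ((p.coeff k / (n : ℝ) ^ (2 * k) : ℝ) : ℂ) * w ^ k := by
  rw [aeval_eq_sum_range, tsum_eq_sum (s := Finset.range (p.natDegree + 1)) fun k hk => ?_]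
  · refine Finset.sum_congr rfl fun k _ => ?_
    rw [Complex.real_smul, div_pow, ← pow_mul]
    push_cast
    ring
  · rw [coeff_eq_zero_of_natDegree_lt (by simpa using hk)]
    simp

theorem norm_coeff_jacobiPolynomial_div_mul_pow_le (ha : 0 ≤ a) (hb : 0 ≤ b) {n : ℕ} (hn : n ≠ 0)
    {w : ℂ} {R : ℝ} (hw : ‖w‖ ≤ R) (k : ℕ) :
    ‖(((jacobiPolynomial a b n).coeff k / (n : ℝ) ^ (2 * k) : ℝ) : ℂ) * w ^ k‖ ≤
      ((a + b + 2) * R) ^ k / k.factorial := by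
  rw [norm_mul, norm_pow, Complex.norm_real, Real.norm_eq_abs, abs_div,
    abs_of_nonneg (by positivity : (0 : ℝ) ≤ (n : ℝ) ^ (2 * k)), mul_pow, mul_div_right_comm]
  exact mul_le_mul (abs_coeff_jacobiPolynomial_div_le ha hb hn k)
    (pow_le_pow_left₀ (norm_nonneg w) hw k) (by positivity) (by positivity)

theorem tendsto_aeval_jacobiPolynomial (ha : 0 ≤ a) (hb : 0 ≤ b) {w : ℕ → ℂ} {w₀ : ℂ}
    (hw : Tendsto w atTop (𝓝 w₀)) :
    Tendsto (fun n : ℕ => aeval (w n / (n : ℂ) ^ 2) (jacobiPolynomial a b n)) atTop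
      (𝓝 (zeroFOne (a + 1) (-w₀))) := by
  have hseries : zeroFOne (a + 1) (-w₀) =
      ∑' k : ℕ, (((-1) ^ k / ((ascPochhammer ℝ k).eval (a + 1) * k.factorial) : ℝ) : ℂ) *
        w₀ ^ k := by
    refine tsum_congr fun k => ?_
    rw [neg_pow]
    push_cast
    ring
  simp_rw [hseries, aeval_div_sq_eq_tsum]
  refine tendsto_tsum_of_dominated_convergence
    (Real.summable_pow_div_factorial ((a + b + 2) * (‖w₀‖ + 1))) (fun k => ?_) ?_
  · exact ((Complex.continuous_ofReal.tendsto _).comp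
      (tendsto_coeff_jacobiPolynomial_div a b k)).mul (hw.pow k)
  · filter_upwards [hw.norm.eventually_le_const (lt_add_one _), eventually_ne_atTop 0]
      with n hwn hn k
    exact norm_coeff_jacobiPolynomial_div_mul_pow_le ha hb hn hwn k

theorem norm_aeval_jacobiPolynomial_sub_one_le (ha : 0 ≤ a) (hb : 0 ≤ b) {n : ℕ} (hn : n ≠ 0)
    (w : ℂ) : ‖aeval (w / (n : ℂ) ^ 2) (jacobiPolynomial a b n) - 1‖ ≤
      Real.exp ((a + b + 2) * ‖w‖) - 1 := by
  have hbound := norm_coeff_jacobiPolynomial_div_mul_pow_le ha hb hn (le_refl ‖w‖)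
  have hexp := Real.summable_pow_div_factorial ((a + b + 2) * ‖w‖)
  have hexp_eq : Real.exp ((a + b + 2) * ‖w‖) =
      ∑' k : ℕ, ((a + b + 2) * ‖w‖) ^ k / k.factorial := by
    rw [Real.exp_eq_exp_ℝ, NormedSpace.exp_eq_tsum_div]
  rw [aeval_div_sq_eq_tsum, (Summable.of_norm_bounded hexp hbound).tsum_eq_zero_add,
    hexp_eq, hexp.tsum_eq_zero_add]
  simp only [coeff_zero_eq_eval_zero, eval_zero_jacobiPolynomial, mul_zero, pow_zero, div_one,
    Complex.ofReal_one, mul_one, add_sub_cancel_left, Nat.factorial_zero, Nat.cast_one]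
  exact tsum_of_norm_bounded ((summable_nat_add_iff 1).mpr hexp).hasSum fun k => hbound (k + 1)

end MehlerHeine

section ReciprocalMGF

variable {a b c : ℝ}

theorem one_half_le_norm_aeval_jacobiPolynomial (ha : 0 ≤ a) (hb : 0 ≤ b) {n : ℕ} (hn : n ≠ 0)
    {w : ℂ} (hw : (a + b + 2) * ‖w‖ ≤ 1 / 3) :
    1 / 2 ≤ ‖aeval (w / (n : ℂ) ^ 2) (jacobiPolynomial a b n)‖ := by
  have hsub := norm_aeval_jacobiPolynomial_sub_one_le ha hb hn w
  have hexp : Real.exp ((a + b + 2) * ‖w‖) ≤ 3 / 2 :=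
    (Real.exp_le_exp.mpr hw).trans <|
      (Real.exp_bound_div_one_sub_of_interval (by norm_num) (by norm_num)).trans (by norm_num)
  have htri := norm_sub_norm_le 1 (1 - aeval (w / (n : ℂ) ^ 2) (jacobiPolynomial a b n))
  rw [norm_one, sub_sub_cancel, norm_sub_rev] at htri
  linarith

theorem exists_hasReciprocalMGF_jacobiPolynomial (ha : 0 < a) (hb : 0 < b) {n : ℕ} (hn : n ≠ 0)
    (hc : 0 ≤ c) (hsmall : (a + b + 2) * c ^ 2 ≤ 1 / 3) :
    ∃ ρ, HasReciprocalMGF ρ (fun z => aeval (z ^ 2 / (n : ℂ) ^ 2) (jacobiPolynomial a b n)) c := by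
  have hP := isRadauPolynomial_jacobiPolynomial ha hb n
  have hJ := posDefOnUnitInterval_betaFunctional ha hb
  set S := (jacobiPolynomial a b n).roots.toFinset
  have : (0 : ℝ) < n := mod_cast Nat.pos_of_ne_zero hn
  have hroot : ∀ s ∈ S, 0 < s ∧ c ^ 2 < s * n ^ 2 := fun s hs => by
    have hs0 : 0 < s := ((hP.roots_toFinset hJ).2 s hs).1
    refine ⟨hs0, lt_of_not_ge fun hle => ?_⟩
    have hge := one_half_le_norm_aeval_jacobiPolynomial ha.le hb.le hn (w := (s * n ^ 2 : ℝ)) <| by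
      rw [Complex.norm_real, Real.norm_of_nonneg (by positivity)]
      refine le_trans ?_ hsmall
      gcongr
    have hdiv : ((s * n ^ 2 : ℝ) : ℂ) / (n : ℂ) ^ 2 = algebraMap ℝ ℂ s := by
      rw [Complex.coe_algebraMap]
      push_cast
      field_simp
    rw [hdiv, aeval_algebraMap_apply, coe_aeval_eq_eval,
      (mem_roots'.mp (Multiset.mem_toFinset.mp hs)).2, map_zero, norm_zero] at hge
    norm_num at hge
  have hfactor : (fun z : ℂ => aeval (z ^ 2 / (n : ℂ) ^ 2) (jacobiPolynomial a b n)) =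
      fun z => ∏ s ∈ S, (1 - (((s * n ^ 2)⁻¹ : ℝ) : ℂ) * z ^ 2) := by
    funext z
    conv_lhs => rw [hP.eq_prod_roots hJ, map_prod]
    refine Finset.prod_congr rfl fun s _ => ?_
    simp only [map_sub, map_one, map_mul, aeval_C, aeval_X, Complex.coe_algebraMap]
    push_cast
    ring
  rw [hfactor]
  refine HasReciprocalMGF.exists_prod hc fun s hs => ?_
  obtain ⟨hs0, hcs⟩ := hroot s hs
  have hpos : 0 < s * (n : ℝ) ^ 2 := by positivity
  exact HasReciprocalMGF.exists_one_sub_mul_sq (inv_pos.mpr hpos) hc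
    ((inv_mul_lt_one₀ hpos).mpr hcs)

theorem integral_exp_mul_abs_le_four_of_jacobiPolynomial (ha : 0 ≤ a) (hb : 0 ≤ b) {n : ℕ}
    (hn : n ≠ 0) {ρ : Measure ℝ} {x : ℝ} (hx : |x| < c) (hsmall : (a + b + 2) * x ^ 2 ≤ 1 / 3)
    (hρ : HasReciprocalMGF ρ (fun z => aeval (z ^ 2 / (n : ℂ) ^ 2) (jacobiPolynomial a b n)) c) :
    ∫ t, Real.exp (x * |t|) ∂ρ ≤ 4 := by
  have hle := hρ.integral_exp_mul_abs_le
    (Differentiable.comp (g := fun w : ℂ => aeval w (jacobiPolynomial a b n))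
      (Polynomial.differentiable_aeval _) (by fun_prop)) hx
  have hge := one_half_le_norm_aeval_jacobiPolynomial ha hb hn (w := (x : ℂ) ^ 2) <| by
    rwa [norm_pow, Complex.norm_real, Real.norm_eq_abs, sq_abs]
  have hinv := inv_anti₀ one_half_pos hge
  rw [neg_sq, norm_inv] at hle
  norm_num at hinv
  linarith

theorem exists_hasReciprocalMGF_zeroFOne (ha : 0 < a) :
    ∃ c > 0, ∃ ρ, HasReciprocalMGF ρ (fun z => zeroFOne (a + 1) (-z ^ 2)) c := by
  have hb : (0 : ℝ) < 1 / 2 := one_half_pos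
  set κ := a + 1 / 2 + 2
  have hκ : 0 < κ := by positivity
  set C := √(1 / (3 * κ))
  have hC : 0 < C := by positivity
  have hC2 : κ * C ^ 2 = 1 / 3 := by
    rw [Real.sq_sqrt (by positivity)]
    field_simp
  choose ρ hρ using fun n : ℕ =>
    exists_hasReciprocalMGF_jacobiPolynomial ha hb n.succ_ne_zero hC.le hC2.le
  set c := C / 2
  have hcC : |c| < C := by
    rw [abs_of_pos (half_pos hC)]
    exact half_lt_self hC
  refine ⟨c, half_pos hC, HasReciprocalMGF.exists_of_tendsto (B := 4)
    (fun n => (hρ n).mono (half_lt_self hC).le) (fun n => ?_)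
    ((differentiable_zeroFOne (by linarith)).continuous.comp (by fun_prop)) fun z =>
      (tendsto_aeval_jacobiPolynomial ha.le hb.le tendsto_const_nhds).comp
        (tendsto_add_atTop_nat 1)⟩
  refine integral_exp_mul_abs_le_four_of_jacobiPolynomial ha.le hb.le n.succ_ne_zero hcC
    (le_trans ?_ hC2.le) (hρ n)
  gcongr
  exact (half_lt_self hC).le

end ReciprocalMGF

/-- The even entire function `(Γ(ν + 2) (2 / w)^(ν + 1) J_{ν + 1}(w))²` with `w = δz/2`, where
`J` denotes the Bessel function. -/
noncomputable def normalizedBesselSq (ν δ : ℝ) (z : ℂ) : ℂ :=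
  zeroFOne (ν + 2) (-(δ / 4 * z) ^ 2) ^ 2

section NormalizedBesselSq

variable {ν δ : ℝ}

theorem normalizedBesselSq_neg (ν δ : ℝ) (z : ℂ) :
    normalizedBesselSq ν δ (-z) = normalizedBesselSq ν δ z := by
  rw [normalizedBesselSq, mul_neg, neg_sq, normalizedBesselSq]

theorem differentiable_normalizedBesselSq (hν : 0 < ν + 1) (δ : ℝ) :
    Differentiable ℂ (normalizedBesselSq ν δ) :=
  ((differentiable_zeroFOne (by linarith)).comp (by fun_prop)).pow 2

theorem norm_normalizedBesselSq_le (hν : 0 < ν + 1) (hδ : 0 ≤ δ) (z : ℂ) :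
    ‖normalizedBesselSq ν δ z‖ ≤ Real.exp (δ * ‖z‖) := by
  have hle := norm_zeroFOne_neg_sq_le (b := ν + 2) (by linarith) (δ / 4 * z)
  have hnorm : ‖(δ / 4 * z : ℂ)‖ = δ / 4 * ‖z‖ := by
    rw [norm_mul, norm_div, Complex.norm_real, Real.norm_of_nonneg hδ]
    norm_num
  calc ‖normalizedBesselSq ν δ z‖ ≤ Real.exp (2 * ‖(δ / 4 * z : ℂ)‖) ^ 2 := by
        rw [normalizedBesselSq, norm_pow]
        gcongr
    _ = Real.exp (δ * ‖z‖) := by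
        rw [← Real.exp_nat_mul, hnorm]
        push_cast
        ring_nf

theorem normalizedBesselSq_ofReal (ν δ x : ℝ) :
    normalizedBesselSq ν δ x = (((zeroFOne (ν + 2) (-(δ / 4 * x) ^ 2)).re ^ 2 : ℝ) : ℂ) := by
  have hreal : (-(δ / 4 * x) ^ 2 : ℂ) = ((-(δ / 4 * x) ^ 2 : ℝ) : ℂ) := by push_cast; rfl
  have him := im_zeroFOne_ofReal (ν + 2) (-(δ / 4 * x) ^ 2)
  rw [normalizedBesselSq, hreal, Complex.ofReal_pow]
  congr 1
  exact Complex.ext rfl (by simpa using him)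

theorem im_normalizedBesselSq_ofReal (ν δ x : ℝ) : (normalizedBesselSq ν δ x).im = 0 := by
  rw [normalizedBesselSq_ofReal, Complex.ofReal_im]

theorem re_normalizedBesselSq_ofReal_nonneg (ν δ x : ℝ) : 0 ≤ (normalizedBesselSq ν δ x).re := by
  rw [normalizedBesselSq_ofReal, Complex.ofReal_re]
  positivity

theorem exists_hasReciprocalMGF_normalizedBesselSq (hν : 0 < ν + 1) (hδ : 0 < δ) :
    ∃ c > 0, ∃ ρ, HasReciprocalMGF ρ (normalizedBesselSq ν δ) c := by
  obtain ⟨c, hc, ρ, hρ⟩ := exists_hasReciprocalMGF_zeroFOne hν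
  have hδ4 : 0 < δ / 4 := by positivity
  have hscale := HasReciprocalMGF.map_mul (a := δ / 4) (c := c / (δ / 4)) <|
    hρ.mono (by rw [abs_of_pos hδ4, div_mul_cancel₀ _ hδ4.ne'])
  have hsq : normalizedBesselSq ν δ = fun z => zeroFOne (ν + 1 + 1) (-((δ / 4 : ℝ) * z) ^ 2) *
      zeroFOne (ν + 1 + 1) (-((δ / 4 : ℝ) * z) ^ 2) := by
    funext z
    rw [normalizedBesselSq, sq (zeroFOne _ _), add_assoc, one_add_one_eq_two]
    push_cast
    rfl
  exact ⟨c / (δ / 4), by positivity, _, hsq ▸ hscale.conv (by positivity) hscale⟩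

end NormalizedBesselSq

theorem integrable_and_integral_le_of_tendsto {α : Type*} [MeasurableSpace α] {μ : Measure α}
    {g : ℕ → α → ℝ} {f : α → ℝ} {Λ : ℝ} (hg : ∀ n, Integrable (g n) μ)
    (hg0 : ∀ n x, 0 ≤ g n x) (hf : ∀ᵐ x ∂μ, Tendsto (fun n => g n x) atTop (𝓝 (f x)))
    (hΛ : Tendsto (fun n => ∫ x, g n x ∂μ) atTop (𝓝 Λ)) :
    Integrable f μ ∧ ∫ x, f x ∂μ ≤ Λ := by
  have hf0 : 0 ≤ᵐ[μ] f := hf.mono fun x hx => ge_of_tendsto' hx fun n => hg0 n x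
  have hfatou : ∫⁻ x, ENNReal.ofReal (f x) ∂μ ≤ ENNReal.ofReal Λ := by
    calc ∫⁻ x, ENNReal.ofReal (f x) ∂μ
        = ∫⁻ x, liminf (fun n => ENNReal.ofReal (g n x)) atTop ∂μ :=
          lintegral_congr_ae <| hf.mono fun x hx => (ENNReal.tendsto_ofReal hx).liminf_eq.symm
      _ ≤ liminf (fun n => ∫⁻ x, ENNReal.ofReal (g n x) ∂μ) atTop :=
          lintegral_liminf_le' fun n => (hg n).aestronglyMeasurable.aemeasurable.ennreal_ofReal
      _ = ENNReal.ofReal Λ := by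
          simp_rw [← ofReal_integral_eq_lintegral_ofReal (hg _) (Eventually.of_forall (hg0 _))]
          exact (ENNReal.tendsto_ofReal hΛ).liminf_eq
  have hint : Integrable f μ := by
    refine ⟨aestronglyMeasurable_of_tendsto_ae atTop (fun n => (hg n).aestronglyMeasurable) hf, ?_⟩
    rw [hasFiniteIntegral_iff_ofReal hf0]
    exact hfatou.trans_lt ENNReal.ofReal_lt_top
  rw [← ofReal_integral_eq_lintegral_ofReal hint hf0] at hfatou
  exact ⟨hint, (ENNReal.ofReal_le_ofReal_iff
    (ge_of_tendsto' hΛ fun n => integral_nonneg (hg0 n))).mp hfatou⟩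

theorem tendsto_jacobiPolynomial_sin_sq {ν δ : ℝ} (hν : 0 < ν + 1) (hδ : 0 < δ) (x : ℝ) :
    Tendsto (fun n : ℕ => (jacobiPolynomial (ν + 1) (1 / 2) n).eval
      (Real.sin (x / (2 * (2 * n / δ))) ^ 2) ^ 2) atTop (𝓝 (normalizedBesselSq ν δ x).re) := by
  have hL : Tendsto (fun n : ℕ => 2 * (2 * n / δ)) atTop atTop :=
    ((tendsto_natCast_atTop_atTop.const_mul_atTop two_pos).atTop_div_const hδ).const_mul_atTop
      two_pos
  have hw : Tendsto
      (fun n : ℕ => (((δ / 4 * (2 * (2 * n / δ) * Real.sin (x / (2 * (2 * n / δ))))) ^ 2 : ℝ) : ℂ))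
      atTop (𝓝 (((δ / 4 * x) ^ 2 : ℝ) : ℂ)) :=
    (Complex.continuous_ofReal.tendsto _).comp
      ((((tendsto_mul_sin_div x).comp hL).const_mul (δ / 4)).pow 2)
  have hlim := ((Complex.continuous_re.tendsto _).comp <|
    (tendsto_aeval_jacobiPolynomial hν.le one_half_pos.le hw).pow 2)
  have hvalue : zeroFOne (ν + 1 + 1) (-(((δ / 4 * x) ^ 2 : ℝ) : ℂ)) ^ 2 =
      normalizedBesselSq ν δ x := by
    rw [normalizedBesselSq, add_assoc, one_add_one_eq_two]
    push_cast
    rfl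
  rw [hvalue] at hlim
  refine hlim.congr' ?_
  filter_upwards [eventually_ne_atTop 0] with n hn
  have hn0 : (n : ℝ) ≠ 0 := mod_cast hn
  set q := Real.sin (x / (2 * (2 * n / δ)))
  have hscale : (((δ / 4 * (2 * (2 * n / δ) * q)) ^ 2 : ℝ) : ℂ) / (n : ℂ) ^ 2 =
      algebraMap ℝ ℂ (q ^ 2) := by
    rw [Complex.coe_algebraMap, ← Complex.ofReal_natCast, ← Complex.ofReal_pow,
      ← Complex.ofReal_div]
    congr 1
    field_simp
    norm_num
  rw [Function.comp_apply, hscale, aeval_algebraMap_apply, coe_aeval_eq_eval,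
    Complex.coe_algebraMap, ← Complex.ofReal_pow, Complex.ofReal_re]

theorem integrable_and_integral_normalizedBesselSq_le {ν δ : ℝ} (hν : 0 < ν + 1) (hδ : 0 < δ) :
    Integrable (fun x : ℝ => (normalizedBesselSq ν δ x).re * |x| ^ (2 * ν + 1)) ∧
      ∫ x : ℝ, (normalizedBesselSq ν δ x).re * |x| ^ (2 * ν + 1) ≤ minimalMass ν δ := by
  let P (n : ℕ) := jacobiPolynomial (ν + 1) (1 / 2) n
  let L (n : ℕ) : ℝ := 2 * n / δ
  have hL : Tendsto L atTop atTop :=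
    (tendsto_natCast_atTop_atTop.const_mul_atTop two_pos).atTop_div_const hδ
  let g (n : ℕ) (x : ℝ) : ℝ :=
    (P n).eval (Real.sin (x / (2 * L n)) ^ 2) ^ 2 * sinWeight ν (L n) x
  have hLpos (n : ℕ) : 0 < L (n + 1) := by positivity
  have hmass (n : ℕ) : ∫ x, g (n + 1) x = (2 * L (n + 1)) ^ (2 * ν + 2) * beta (ν + 1) (1 / 2) *
      betaFunctional hν one_half_pos (P (n + 1)) := by
    rw [← (isRadauPolynomial_jacobiPolynomial hν one_half_pos _).map_sq, betaFunctional_apply]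
    simp only [eval_pow]
    exact integral_comp_sin_sq_mul_sinWeight (by linarith) (hLpos n) fun y => (P (n + 1)).eval y ^ 2
  refine integrable_and_integral_le_of_tendsto (g := fun n => g (n + 1)) (fun n => ?_)
    (fun n x => mul_nonneg (sq_nonneg _) (sinWeight_nonneg ν _ x)) ?_ ?_
  · have hJ := (isRadauPolynomial_jacobiPolynomial hν one_half_pos (n + 1)).map_pos
      (posDefOnUnitInterval_betaFunctional hν one_half_pos)
    have := hLpos n
    refine .of_integral_ne_zero ?_
    rw [hmass]
    exact (mul_pos (mul_pos (by positivity) (beta_pos hν one_half_pos)) hJ).ne'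
  · filter_upwards [Measure.ae_ne volume 0] with x hx
    exact ((tendsto_jacobiPolynomial_sin_sq hν hδ x).mul ((tendsto_sinWeight ν hx).comp hL)).comp
      (tendsto_add_atTop_nat 1)
  · simp_rw [hmass]
    exact (tendsto_mul_betaFunctional_jacobiPolynomial hν hδ).comp (tendsto_add_atTop_nat 1)

/-- The two-sided Laplace transform `∫ v(t) e^{-zt} dt` of a real function, taken to be `0` where
the integral diverges. -/
noncomputable def bilateralLaplace (v : ℝ → ℝ) (z : ℂ) : ℂ :=
  ∫ t : ℝ, (v t : ℂ) * Complex.exp (-(z * t))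

section BilateralLaplace

variable {v w : ℝ → ℝ}

theorem norm_mul_cexp_neg_mul (v : ℝ → ℝ) (z : ℂ) (t : ℝ) :
    ‖(v t : ℂ) * Complex.exp (-(z * t))‖ = |v t| * Real.exp (-(z.re * t)) := by
  rw [norm_mul, Complex.norm_exp, Complex.norm_real, Real.norm_eq_abs]
  simp

theorem integrable_mul_cexp_neg_mul (hv : Measurable v) {z : ℂ}
    (h : Integrable fun t => v t * Real.exp (-(z.re * t))) :
    Integrable fun t : ℝ => (v t : ℂ) * Complex.exp (-(z * t)) :=
  h.norm.mono' (by fun_prop) (Eventually.of_forall fun t => by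
    rw [norm_mul_cexp_neg_mul, norm_mul, Real.norm_eq_abs, Real.norm_of_nonneg (Real.exp_pos _).le])

theorem bilateralLaplace_ofReal (v : ℝ → ℝ) (x : ℝ) :
    bilateralLaplace v x = ((∫ t, v t * Real.exp (-(x * t)) : ℝ) : ℂ) := by
  rw [bilateralLaplace, ← integral_complex_ofReal]
  push_cast
  rfl

theorem norm_bilateralLaplace_le (hv : ∀ t, 0 ≤ v t) (z : ℂ) :
    ‖bilateralLaplace v z‖ ≤ ∫ t, v t * Real.exp (-(z.re * t)) := by
  refine (norm_integral_le_integral_norm _).trans_eq (integral_congr_ae ?_)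
  exact Eventually.of_forall fun t => by
    simp only [norm_mul_cexp_neg_mul, abs_of_nonneg (hv t)]

theorem bilateralLaplace_add (hv : Measurable v) (hw : Measurable w) {z : ℂ}
    (hvz : Integrable fun t => v t * Real.exp (-(z.re * t)))
    (hwz : Integrable fun t => w t * Real.exp (-(z.re * t))) :
    bilateralLaplace (v + w) z = bilateralLaplace v z + bilateralLaplace w z := by
  simp only [bilateralLaplace, Pi.add_apply, Complex.ofReal_add, add_mul]
  exact integral_add (integrable_mul_cexp_neg_mul hv hvz) (integrable_mul_cexp_neg_mul hw hwz)

theorem differentiableOn_bilateralLaplace (hv : Measurable v) (hv0 : ∀ t, 0 ≤ v t) {s : Set ℝ}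
    (hs : IsOpen s) (h : ∀ x ∈ s, Integrable fun t => v t * Real.exp (-(x * t))) :
    DifferentiableOn ℂ (bilateralLaplace v) (Complex.re ⁻¹' s) := by
  set d : ℝ → NNReal := fun t => (v t).toNNReal
  have hd : Measurable d := hv.real_toNNReal
  have hdv (t : ℝ) : (d t : ℝ) = v t := Real.coe_toNNReal _ (hv0 t)
  have hmgf : bilateralLaplace v = fun z =>
      ProbabilityTheory.complexMGF id (volume.withDensity fun t => (d t : ENNReal)) (-z) := by
    funext z
    rw [ProbabilityTheory.complexMGF, integral_withDensity_eq_integral_smul hd, bilateralLaplace]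
    congr! 2 with _
    rw [NNReal.smul_def, hdv, Complex.real_smul, neg_mul, id]
  have hstrip : Neg.neg ⁻¹' s ⊆ interior (ProbabilityTheory.integrableExpSet id
      (volume.withDensity fun t => (d t : ENNReal))) := by
    refine interior_maximal (fun x hx => ?_) (hs.preimage continuous_neg)
    refine (integrable_withDensity_iff_integrable_smul hd).mpr ((h (-x) hx).congr ?_)
    exact Eventually.of_forall fun t => by
      simp only [NNReal.smul_def, hdv, smul_eq_mul, neg_mul, neg_neg, id]
  rw [hmgf]
  exact ProbabilityTheory.differentiableOn_complexMGF.comp differentiable_neg.differentiableOn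
    fun z hz => hstrip (by simpa using hz)

theorem integrable_mul_exp_and_integral_le_of_le_indicator_Iic (hv : Measurable v)
    (hv0 : ∀ t, 0 ≤ v t) {K c : ℝ}
    (hle : ∀ t, v t ≤ (Iic 0).indicator (fun t => K * Real.exp (c * t)) t) {x : ℝ} (hx : x < c) :
    Integrable (fun t => v t * Real.exp (-(x * t))) ∧
      ∫ t, v t * Real.exp (-(x * t)) ≤ K / (c - x) := by
  have hcx : 0 < c - x := sub_pos.mpr hx
  have hexp : IntegrableOn (fun t => K * Real.exp ((c - x) * t)) (Iic 0) :=
    Integrable.const_mul (integrableOn_exp_mul_Iic hcx 0) K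
  have hdom := hexp.integrable_indicator measurableSet_Iic
  have hbound (t : ℝ) : v t * Real.exp (-(x * t)) ≤
      (Iic 0).indicator (fun t => K * Real.exp ((c - x) * t)) t := by
    calc v t * Real.exp (-(x * t))
        ≤ (Iic 0).indicator (fun t => K * Real.exp (c * t)) t * Real.exp (-(x * t)) := by
          gcongr
          exact hle t
      _ = (Iic 0).indicator (fun t => K * Real.exp ((c - x) * t)) t := by
          simp only [indicator_apply, ite_mul, zero_mul, mul_assoc, ← Real.exp_add, ← neg_mul,
            ← add_mul, sub_eq_add_neg]
  have hint : Integrable fun t => v t * Real.exp (-(x * t)) :=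
    hdom.mono' (by fun_prop) <| Eventually.of_forall fun t => by
      rw [Real.norm_of_nonneg (mul_nonneg (hv0 t) (Real.exp_pos _).le)]
      exact hbound t
  refine ⟨hint, (integral_mono hint hdom hbound).trans_eq ?_⟩
  rw [integral_indicator measurableSet_Iic, integral_const_mul, integral_exp_mul_Iic hcx,
    mul_zero, Real.exp_zero, mul_one_div]

end BilateralLaplace

theorem integrableOn_exp_neg_mul_Ici {x : ℝ} (hx : 0 < x) (b : ℝ) :
    IntegrableOn (fun t => Real.exp (-(x * t))) (Ici b) :=
  (integrableOn_Ici_iff_integrableOn_Ioi (by simp)).mpr <| by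
    simpa only [neg_mul] using integrableOn_exp_mul_Ioi (neg_lt_zero.mpr hx) b

theorem integral_exp_neg_mul_Ici {x : ℝ} (hx : 0 < x) (b : ℝ) :
    ∫ t in Ici b, Real.exp (-(x * t)) = Real.exp (-(x * b)) / x := by
  simpa only [neg_mul, neg_div_neg_eq, integral_Ici_eq_integral_Ioi] using
    integral_exp_mul_Ioi (neg_lt_zero.mpr hx) b

/-- A measurable function with values in `[0, 1]` that vanishes to the left of `b`. -/
structure IsUnitValuedFrom (v : ℝ → ℝ) (b : ℝ) : Prop where
  measurable : Measurable v
  mem_Icc : ∀ t, v t ∈ Icc (0 : ℝ) 1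
  eq_zero_of_lt : ∀ t < b, v t = 0

namespace IsUnitValuedFrom

variable {v : ℝ → ℝ} {b x : ℝ}

theorem nonneg (h : IsUnitValuedFrom v b) (t : ℝ) : 0 ≤ v t := (h.mem_Icc t).1

theorem le_one (h : IsUnitValuedFrom v b) (t : ℝ) : v t ≤ 1 := (h.mem_Icc t).2

theorem le_indicator (h : IsUnitValuedFrom v b) (t : ℝ) : v t ≤ (Ici b).indicator 1 t := by
  rcases lt_or_ge t b with ht | ht
  · rw [h.eq_zero_of_lt t ht]
    exact indicator_nonneg (fun _ _ => zero_le_one) t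
  · rw [indicator_of_mem (mem_Ici.mpr ht)]
    exact h.le_one t

theorem integrable_mul_exp_and_integral_le (h : IsUnitValuedFrom v b) (hx : 0 < x) :
    Integrable (fun t => v t * Real.exp (-(x * t))) ∧
      ∫ t, v t * Real.exp (-(x * t)) ≤ Real.exp (-(x * b)) / x := by
  have hdom := (integrableOn_exp_neg_mul_Ici hx b).integrable_indicator measurableSet_Ici
  have hbound (t : ℝ) : v t * Real.exp (-(x * t)) ≤
      (Ici b).indicator (fun t => Real.exp (-(x * t))) t := by
    calc v t * Real.exp (-(x * t)) ≤ (Ici b).indicator 1 t * Real.exp (-(x * t)) := by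
          gcongr
          exact h.le_indicator t
      _ = _ := by simp only [indicator_apply, ite_mul, Pi.one_apply, one_mul, zero_mul]
  have hint : Integrable fun t => v t * Real.exp (-(x * t)) :=
    hdom.mono' (h.measurable.mul (by fun_prop)).aestronglyMeasurable <|
      Eventually.of_forall fun t => by
        rw [Real.norm_of_nonneg (mul_nonneg (h.nonneg t) (Real.exp_pos _).le)]
        exact hbound t
  refine ⟨hint, (integral_mono hint hdom hbound).trans_eq ?_⟩
  rw [integral_indicator measurableSet_Ici, integral_exp_neg_mul_Ici hx]

theorem integrable_mul_exp (h : IsUnitValuedFrom v b) (hx : 0 < x) :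
    Integrable fun t => v t * Real.exp (-(x * t)) :=
  (h.integrable_mul_exp_and_integral_le hx).1

theorem differentiableOn_bilateralLaplace (h : IsUnitValuedFrom v b) :
    DifferentiableOn ℂ (bilateralLaplace v) (Complex.re ⁻¹' Ioi 0) :=
  _root_.differentiableOn_bilateralLaplace h.measurable h.nonneg isOpen_Ioi fun _ hx =>
    h.integrable_mul_exp hx

end IsUnitValuedFrom

/-- The average of the translates `v (· - s)` with respect to `ρ`, i.e. the convolution `ρ * v`. -/
noncomputable def mollify (ρ : Measure ℝ) (v : ℝ → ℝ) (t : ℝ) : ℝ :=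
  ∫ s, v (t - s) ∂ρ

section Mollify

variable {ρ : Measure ℝ} {v : ℝ → ℝ} {b c : ℝ}

theorem measurable_mollify [SFinite ρ] (hv : Measurable v) : Measurable (mollify ρ v) := by
  have hmeas : StronglyMeasurable (Function.uncurry fun t s : ℝ => v (t - s)) :=
    (hv.comp (measurable_fst.sub measurable_snd)).stronglyMeasurable
  exact hmeas.integral_prod_right.measurable

theorem integrable_comp_const_sub [IsFiniteMeasure ρ] (hv : IsUnitValuedFrom v b) (t : ℝ) :
    Integrable (fun s => v (t - s)) ρ :=
  .of_bound (hv.measurable.comp (by fun_prop)).aestronglyMeasurable 1 <|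
    Eventually.of_forall fun s => by
      rw [Real.norm_of_nonneg (hv.nonneg _)]
      exact hv.le_one _

theorem mollify_mem_Icc [IsProbabilityMeasure ρ] (hv : IsUnitValuedFrom v b) (t : ℝ) :
    mollify ρ v t ∈ Icc (0 : ℝ) 1 := by
  refine ⟨integral_nonneg fun s => hv.nonneg _, ?_⟩
  calc mollify ρ v t ≤ ∫ _, 1 ∂ρ :=
        integral_mono (integrable_comp_const_sub hv t) (integrable_const 1) fun s => hv.le_one _
    _ = 1 := by simp

theorem mollify_le_mul_exp [IsFiniteMeasure ρ] (hv : IsUnitValuedFrom v b) (hc : 0 ≤ c)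
    (hρ : Integrable (fun s => Real.exp (c * |s|)) ρ) (t : ℝ) :
    mollify ρ v t ≤ Real.exp (-(c * b)) * (∫ s, Real.exp (c * |s|) ∂ρ) * Real.exp (c * t) := by
  rw [← integral_const_mul, ← integral_mul_const]
  refine integral_mono (integrable_comp_const_sub hv t) ((hρ.const_mul _).mul_const _) fun s => ?_
  simp only [← Real.exp_add]
  rcases lt_or_ge (t - s) b with hts | hts
  · rw [hv.eq_zero_of_lt _ hts]
    positivity
  · refine (hv.le_one _).trans (Real.one_le_exp ?_)
    have hnonneg : 0 ≤ c * (|s| + t - b) := mul_nonneg hc (by linarith [neg_abs_le s])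
    linarith

theorem bilateralLaplace_mollify [SFinite ρ] (hv : Measurable v) {z : ℂ}
    (hvz : Integrable fun t : ℝ => (v t : ℂ) * Complex.exp (-(z * t)))
    (hρz : Integrable (fun s : ℝ => Complex.exp (-z * s)) ρ) :
    bilateralLaplace (mollify ρ v) z =
      ProbabilityTheory.complexMGF id ρ (-z) * bilateralLaplace v z := by
  set g : ℝ → ℂ := fun t => (v t : ℂ) * Complex.exp (-(z * t))
  have hshift (s t : ℝ) : (v (t - s) : ℂ) * Complex.exp (-(z * t)) =
      Complex.exp (-z * s) * g (t - s) := by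
    rw [mul_left_comm, ← Complex.exp_add]
    push_cast
    ring_nf
  have hprod : Integrable
      (Function.uncurry fun s t : ℝ => (v (t - s) : ℂ) * Complex.exp (-(z * t)))
      (ρ.prod volume) := by
    have : Measurable fun p : ℝ × ℝ => v (p.2 - p.1) :=
      hv.comp (measurable_snd.sub measurable_fst)
    refine (integrable_prod_iff (by unfold Function.uncurry; fun_prop)).mpr ⟨?_, ?_⟩
    · simp only [Function.uncurry, hshift]
      exact Eventually.of_forall fun s => (hvz.comp_sub_right s).const_mul _
    · simp only [Function.uncurry, hshift, norm_mul (Complex.exp _), integral_const_mul,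
        integral_sub_right_eq_self fun t => ‖g t‖]
      exact hρz.norm.mul_const _
  calc bilateralLaplace (mollify ρ v) z
      = ∫ t : ℝ, ∫ s, (v (t - s) : ℂ) * Complex.exp (-(z * t)) ∂ρ := by
        simp only [bilateralLaplace, mollify, ← integral_complex_ofReal, integral_mul_const]
    _ = ∫ s, (∫ t : ℝ, (v (t - s) : ℂ) * Complex.exp (-(z * t))) ∂ρ :=
        (integral_integral_swap hprod).symm
    _ = _ := by
        simp only [hshift, integral_const_mul, integral_sub_right_eq_self g, integral_mul_const]
        rfl

theorem HasReciprocalMGF.mul_bilateralLaplace_mollify {P : ℂ → ℂ} (hρ : HasReciprocalMGF ρ P c)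
    (hP : Differentiable ℂ P) (heven : ∀ z, P (-z) = P z) (hv : IsUnitValuedFrom v b) {z : ℂ}
    (hz0 : 0 < z.re) (hzc : z.re < c) :
    P z * bilateralLaplace (mollify ρ v) z = bilateralLaplace v z := by
  have := hρ.isProbabilityMeasure
  have hzabs : |(-z).re| < c := by rwa [Complex.neg_re, abs_neg, abs_of_pos hz0]
  have hexp : Integrable (fun s : ℝ => Complex.exp (-z * s)) ρ :=
    (hρ.integrable_exp_mul hzabs.le).mono' (by fun_prop) <| Eventually.of_forall fun s => by
      rw [Complex.norm_exp]
      simp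
  have hmgf := hρ.complexMGF_mul hP hzabs
  rw [heven] at hmgf
  rw [bilateralLaplace_mollify hv.measurable
    (integrable_mul_cexp_neg_mul hv.measurable (hv.integrable_mul_exp hz0)) hexp]
  linear_combination bilateralLaplace v z * hmgf

end Mollify

theorem exists_differentiable_eqOn_of_eqOn_strip {f g : ℂ → ℂ} {a b : ℝ} (hab : a < b)
    (hf : DifferentiableOn ℂ f (Complex.re ⁻¹' Iio b))
    (hg : DifferentiableOn ℂ g (Complex.re ⁻¹' Ioi a))
    (hfg : EqOn f g (Complex.re ⁻¹' Ioo a b)) :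
    ∃ F, Differentiable ℂ F ∧ EqOn F f (Complex.re ⁻¹' Iio b) ∧
      EqOn F g (Complex.re ⁻¹' Ioi a) := by
  set F : ℂ → ℂ := fun z => if z.re < b then f z else g z
  have hFf : EqOn F f (Complex.re ⁻¹' Iio b) := fun z hz => if_pos hz
  have hFg : EqOn F g (Complex.re ⁻¹' Ioi a) := fun z hz => by
    by_cases hzb : z.re < b
    · exact (if_pos hzb).trans (hfg ⟨hz, hzb⟩)
    · exact if_neg hzb
  have hcover : Complex.re ⁻¹' Iio b ∪ Complex.re ⁻¹' Ioi a = univ := by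
    rw [← preimage_union, Iio_union_Ioi_of_lt hab, preimage_univ]
  refine ⟨F, differentiableOn_univ.mp (hcover ▸ ?_), hFf, hFg⟩
  exact (hf.congr hFf).union_of_isOpen (hg.congr hFg)
    (isOpen_Iio.preimage Complex.continuous_re) (isOpen_Ioi.preimage Complex.continuous_re)

/-- The part of `mollify ρ v` on the left half-line. -/
noncomputable def mollifyLeft (ρ : Measure ℝ) (v : ℝ → ℝ) : ℝ → ℝ :=
  (Iic 0).indicator (mollify ρ v)

/-- The part of `mollify ρ v` on the right half-line. -/
noncomputable def mollifyRight (ρ : Measure ℝ) (v : ℝ → ℝ) : ℝ → ℝ :=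
  (Ioi 0).indicator (mollify ρ v)

section MollifyParts

variable {ρ : Measure ℝ} {v : ℝ → ℝ} {b c x : ℝ}

theorem mollifyLeft_add_mollifyRight (ρ : Measure ℝ) (v : ℝ → ℝ) :
    mollifyLeft ρ v + mollifyRight ρ v = mollify ρ v := by
  rw [mollifyLeft, mollifyRight, ← compl_Iic, indicator_self_add_compl]

theorem measurable_mollifyLeft [SFinite ρ] (hv : Measurable v) : Measurable (mollifyLeft ρ v) :=
  (measurable_mollify hv).indicator measurableSet_Iic

theorem mollifyLeft_nonneg [IsProbabilityMeasure ρ] (hv : IsUnitValuedFrom v b) (t : ℝ) :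
    0 ≤ mollifyLeft ρ v t :=
  indicator_nonneg (fun _ _ => (mollify_mem_Icc hv _).1) t

theorem integrable_mollifyLeft_and_integral_le [IsProbabilityMeasure ρ]
    (hv : IsUnitValuedFrom v b) (hc : 0 ≤ c) (hρ : Integrable (fun s => Real.exp (c * |s|)) ρ)
    (hx : x < c) :
    Integrable (fun t => mollifyLeft ρ v t * Real.exp (-(x * t))) ∧
      ∫ t, mollifyLeft ρ v t * Real.exp (-(x * t)) ≤
        Real.exp (-(c * b)) * (∫ s, Real.exp (c * |s|) ∂ρ) / (c - x) :=
  integrable_mul_exp_and_integral_le_of_le_indicator_Iic (measurable_mollifyLeft hv.measurable)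
    (mollifyLeft_nonneg hv)
    (fun t => indicator_le_indicator (mollify_le_mul_exp hv hc hρ t)) hx

theorem integral_mollifyLeft_le_of_neg [IsProbabilityMeasure ρ] (hv : IsUnitValuedFrom v b)
    (hx : x < 0) : ∫ t, mollifyLeft ρ v t * Real.exp (-(x * t)) ≤ 1 / -x := by
  simpa using (integrable_mollifyLeft_and_integral_le (ρ := ρ) hv le_rfl (by simp) hx).2

theorem isUnitValuedFrom_mollifyRight [IsProbabilityMeasure ρ] (hv : IsUnitValuedFrom v b) :
    IsUnitValuedFrom (mollifyRight ρ v) 0 where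
  measurable := (measurable_mollify hv.measurable).indicator measurableSet_Ioi
  mem_Icc t := ⟨indicator_nonneg (fun _ _ => (mollify_mem_Icc hv _).1) t,
    indicator_le' (fun _ _ => (mollify_mem_Icc hv _).2) (fun _ _ => zero_le_one) t⟩
  eq_zero_of_lt _ ht := indicator_of_notMem (notMem_Ioi.mpr ht.le) _

end MollifyParts

/-- The truncated Laplace transform `∫ e^{-λx} dμ(λ)` (for `x > 0`, and `0` for `x ≤ 0`) of the
measure with distribution function `m`, written after an integration by parts. -/
noncomputable def truncatedLaplace (m : ℝ → ℝ) (x : ℝ) : ℝ :=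
  if 0 < x then ∫ lam : ℝ, x * Real.exp (-lam * x) * m lam else 0

theorem truncatedLaplace_of_nonpos (m : ℝ → ℝ) {x : ℝ} (hx : x ≤ 0) : truncatedLaplace m x = 0 :=
  if_neg hx.not_gt

theorem truncatedLaplace_of_pos (m : ℝ → ℝ) {x : ℝ} (hx : 0 < x) :
    truncatedLaplace m x = x * ∫ t, m t * Real.exp (-(x * t)) := by
  rw [truncatedLaplace, if_pos hx, ← integral_const_mul]
  congr! 2
  ring_nf

/-- `L` is the entire function that continues `z P(z) ∫_{-∞}^0 u(t) e^{-zt} dt`, with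
`u = mollify ρ m`, from the half-plane `Re z < c`. -/
structure IsLaplaceMinorant (ρ : Measure ℝ) (P : ℂ → ℂ) (m : ℝ → ℝ) (c : ℝ) (L : ℂ → ℂ) :
    Prop where
  differentiable : Differentiable ℂ L
  eq_left : ∀ z : ℂ, z.re < c → L z = z * P z * bilateralLaplace (mollifyLeft ρ m) z
  eq_right : ∀ z : ℂ, 0 < z.re →
    L z = z * (bilateralLaplace m z - P z * bilateralLaplace (mollifyRight ρ m) z)

section Minorant

variable {ρ : Measure ℝ} {P L : ℂ → ℂ} {m : ℝ → ℝ} {b c δ x : ℝ}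

theorem exists_isLaplaceMinorant (hc : 0 < c) (hρ : HasReciprocalMGF ρ P c)
    (hP : Differentiable ℂ P) (heven : ∀ z, P (-z) = P z) (hm : IsUnitValuedFrom m b) :
    ∃ L, IsLaplaceMinorant ρ P m c L := by
  have := hρ.isProbabilityMeasure
  have hmeas := measurable_mollifyLeft (ρ := ρ) hm.measurable
  have hright := isUnitValuedFrom_mollifyRight (ρ := ρ) hm
  have hint (x : ℝ) (hx : x < c) :=
    (integrable_mollifyLeft_and_integral_le hm hc.le hρ.integrable_exp_mul_abs hx).1
  have hdiff := differentiableOn_bilateralLaplace hmeas (mollifyLeft_nonneg hm) isOpen_Iio hint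
  obtain ⟨L, hL, hleft, hright⟩ := exists_differentiable_eqOn_of_eqOn_strip hc
    (differentiableOn_id.mul hP.differentiableOn |>.mul hdiff)
    (differentiableOn_id.mul (hm.differentiableOn_bilateralLaplace.sub
      (hP.differentiableOn.mul hright.differentiableOn_bilateralLaplace))) fun z hz => by
    have hmul := hρ.mul_bilateralLaplace_mollify hP heven hm hz.1 hz.2
    rw [← mollifyLeft_add_mollifyRight, bilateralLaplace_add hmeas hright.measurable
      (hint _ hz.2) (hright.integrable_mul_exp hz.1)] at hmul
    simp only [id, ← hmul, Pi.mul_apply, Pi.sub_apply]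
    ring
  exact ⟨L, hL, fun z hz => hleft hz, fun z hz => hright hz⟩

namespace IsLaplaceMinorant

theorem ofReal_of_lt (h : IsLaplaceMinorant ρ P m c L) (hreal : ∀ x : ℝ, (P x).im = 0)
    (hx : x < c) :
    L x = ((x * (P x).re * ∫ t, mollifyLeft ρ m t * Real.exp (-(x * t)) : ℝ) : ℂ) := by
  have hPx : ((P x).re : ℂ) = P x := Complex.ext rfl (hreal x).symm
  rw [h.eq_left x hx, bilateralLaplace_ofReal, Complex.ofReal_mul, Complex.ofReal_mul, hPx]

theorem ofReal_of_pos (h : IsLaplaceMinorant ρ P m c L) (hreal : ∀ x : ℝ, (P x).im = 0)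
    (hx : 0 < x) :
    L x = ((truncatedLaplace m x -
      x * (P x).re * ∫ t, mollifyRight ρ m t * Real.exp (-(x * t)) : ℝ) : ℂ) := by
  have hPx : ((P x).re : ℂ) = P x := Complex.ext rfl (hreal x).symm
  rw [h.eq_right x hx, bilateralLaplace_ofReal, bilateralLaplace_ofReal,
    truncatedLaplace_of_pos m hx, Complex.ofReal_sub, Complex.ofReal_mul, Complex.ofReal_mul,
    Complex.ofReal_mul, hPx]
  ring

theorem im_eq_zero (h : IsLaplaceMinorant ρ P m c L) (hc : 0 < c)
    (hreal : ∀ x : ℝ, (P x).im = 0) (x : ℝ) : (L x).im = 0 := by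
  rcases lt_or_ge x c with hx | hx
  · rw [h.ofReal_of_lt hreal hx, Complex.ofReal_im]
  · rw [h.ofReal_of_pos hreal (hc.trans_le hx), Complex.ofReal_im]

theorem re_mem_Icc_of_nonpos [IsProbabilityMeasure ρ] (h : IsLaplaceMinorant ρ P m c L)
    (hc : 0 < c) (hm : IsUnitValuedFrom m b) (hreal : ∀ x : ℝ, (P x).im = 0)
    (hpos : 0 ≤ (P x).re) (hx : x ≤ 0) : (L x).re ∈ Icc (-(P x).re) 0 := by
  rw [h.ofReal_of_lt hreal (hx.trans_lt hc), Complex.ofReal_re]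
  set I := ∫ t, mollifyLeft ρ m t * Real.exp (-(x * t))
  have hI : 0 ≤ I :=
    integral_nonneg fun t => mul_nonneg (mollifyLeft_nonneg (ρ := ρ) hm t) (Real.exp_pos _).le
  have hxI : -1 ≤ x * I := by
    rcases hx.eq_or_lt with rfl | hx
    · norm_num
    · have hle := (le_div_iff₀ (neg_pos.mpr hx)).mp
        (integral_mollifyLeft_le_of_neg (ρ := ρ) hm hx)
      linarith
  have hxI' : x * I ≤ 0 := mul_nonpos_of_nonpos_of_nonneg hx hI
  constructor <;> nlinarith

theorem sub_re_mem_Icc_of_pos [IsProbabilityMeasure ρ] (h : IsLaplaceMinorant ρ P m c L)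
    (hm : IsUnitValuedFrom m b) (hreal : ∀ x : ℝ, (P x).im = 0) (hpos : 0 ≤ (P x).re)
    (hx : 0 < x) : truncatedLaplace m x - (L x).re ∈ Icc 0 (P x).re := by
  have hright := isUnitValuedFrom_mollifyRight (ρ := ρ) hm
  rw [h.ofReal_of_pos hreal hx, Complex.ofReal_re, sub_sub_cancel]
  set I := ∫ t, mollifyRight ρ m t * Real.exp (-(x * t))
  have hI : 0 ≤ I := integral_nonneg fun t => mul_nonneg (hright.nonneg t) (Real.exp_pos _).le
  have hle := (hright.integrable_mul_exp_and_integral_le hx).2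
  rw [mul_zero, neg_zero, Real.exp_zero, le_div_iff₀ hx] at hle
  exact ⟨by positivity, by nlinarith⟩

theorem re_le_truncatedLaplace_le [IsProbabilityMeasure ρ] (h : IsLaplaceMinorant ρ P m c L)
    (hc : 0 < c) (hm : IsUnitValuedFrom m b) (hreal : ∀ x : ℝ, (P x).im = 0)
    (hpos : ∀ x : ℝ, 0 ≤ (P x).re) (x : ℝ) :
    (L x).re ≤ truncatedLaplace m x ∧ truncatedLaplace m x ≤ (L x).re + (P x).re := by
  rcases le_or_gt x 0 with hx | hx
  · obtain ⟨hlower, hupper⟩ := h.re_mem_Icc_of_nonpos hc hm hreal (hpos x) hx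
    rw [truncatedLaplace_of_nonpos m hx]
    exact ⟨hupper, by linarith⟩
  · obtain ⟨hlower, hupper⟩ := h.sub_re_mem_Icc_of_pos hm hreal (hpos x) hx
    exact ⟨by linarith, by linarith⟩

theorem norm_le_of_re_le [IsProbabilityMeasure ρ] (h : IsLaplaceMinorant ρ P m c L) (hc : 0 < c)
    (hm : IsUnitValuedFrom m b) (hρ : Integrable (fun s => Real.exp (c * |s|)) ρ) {z : ℂ}
    (hz : z.re ≤ c / 2) :
    ‖L z‖ ≤
      Real.exp (-(c * b)) * (∫ s, Real.exp (c * |s|) ∂ρ) / (c / 2) * (‖z‖ * ‖P z‖) := by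
  have hzc : z.re < c := by linarith
  rw [h.eq_left z hzc, norm_mul, norm_mul, mul_comm]
  gcongr
  calc ‖bilateralLaplace (mollifyLeft ρ m) z‖
      ≤ ∫ t, mollifyLeft ρ m t * Real.exp (-(z.re * t)) :=
        norm_bilateralLaplace_le (mollifyLeft_nonneg hm) z
    _ ≤ Real.exp (-(c * b)) * (∫ s, Real.exp (c * |s|) ∂ρ) / (c - z.re) :=
        (integrable_mollifyLeft_and_integral_le hm hc.le hρ hzc).2
    _ ≤ Real.exp (-(c * b)) * (∫ s, Real.exp (c * |s|) ∂ρ) / (c / 2) := by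
        gcongr
        linarith

theorem norm_le_of_le_re [IsProbabilityMeasure ρ] (h : IsLaplaceMinorant ρ P m c L) (hc : 0 < c)
    (hm : IsUnitValuedFrom m b) {z : ℂ} (hz : c / 2 ≤ z.re) :
    ‖L z‖ ≤ 1 / (c / 2) * (‖z‖ * (Real.exp (-(z.re * b)) + ‖P z‖)) := by
  have hz0 : 0 < z.re := by linarith
  have hright := isUnitValuedFrom_mollifyRight (ρ := ρ) hm
  have hbm := (norm_bilateralLaplace_le hm.nonneg z).trans
    (hm.integrable_mul_exp_and_integral_le hz0).2
  have hbr := (norm_bilateralLaplace_le hright.nonneg z).trans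
    (hright.integrable_mul_exp_and_integral_le hz0).2
  rw [mul_zero, neg_zero, Real.exp_zero] at hbr
  rw [h.eq_right z hz0]
  calc ‖z * (bilateralLaplace m z - P z * bilateralLaplace (mollifyRight ρ m) z)‖
      ≤ ‖z‖ * (Real.exp (-(z.re * b)) / z.re + ‖P z‖ * (1 / z.re)) := by
        rw [norm_mul]
        gcongr
        refine (norm_sub_le _ _).trans ?_
        rw [norm_mul]
        gcongr
    _ = 1 / z.re * (‖z‖ * (Real.exp (-(z.re * b)) + ‖P z‖)) := by ring
    _ ≤ 1 / (c / 2) * (‖z‖ * (Real.exp (-(z.re * b)) + ‖P z‖)) := by gcongr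

theorem exists_norm_le [IsProbabilityMeasure ρ] (h : IsLaplaceMinorant ρ P m c L) (hc : 0 < c)
    (hm : IsUnitValuedFrom m (-δ)) (hδ : 0 ≤ δ) (hPδ : ∀ z, ‖P z‖ ≤ Real.exp (δ * ‖z‖))
    (hρ : Integrable (fun s => Real.exp (c * |s|)) ρ) :
    ∃ D, ∀ z, ‖L z‖ ≤ D * (‖z‖ * Real.exp (δ * ‖z‖)) := by
  refine ⟨max (Real.exp (-(c * -δ)) * (∫ s, Real.exp (c * |s|) ∂ρ) / (c / 2)) (1 / (c / 2) * 2),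
    fun z => ?_⟩
  rcases le_total z.re (c / 2) with hz | hz
  · calc ‖L z‖ ≤ _ := h.norm_le_of_re_le hc hm hρ hz
      _ ≤ _ := by
        gcongr
        exacts [le_max_left _ _, hPδ z]
  · have hexp : Real.exp (-(z.re * -δ)) ≤ Real.exp (δ * ‖z‖) := by
      rw [mul_neg, neg_neg, mul_comm]
      gcongr
      exact Complex.re_le_norm z
    calc ‖L z‖ ≤ 1 / (c / 2) * (‖z‖ * (Real.exp (-(z.re * -δ)) + ‖P z‖)) :=
          h.norm_le_of_le_re hc hm hz
      _ ≤ 1 / (c / 2) * (‖z‖ * (Real.exp (δ * ‖z‖) + Real.exp (δ * ‖z‖))) := by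
        gcongr
        exact hPδ z
      _ = 1 / (c / 2) * 2 * (‖z‖ * Real.exp (δ * ‖z‖)) := by ring
      _ ≤ _ := by
        gcongr
        exact le_max_right _ _

end IsLaplaceMinorant

end Minorant

namespace ExpTypeLE

variable {F G : ℂ → ℂ} {D δ : ℝ}

theorem of_norm_le_exp (h : ∀ z, ‖F z‖ ≤ Real.exp (δ * ‖z‖)) : ExpTypeLE F δ := by
  refine fun ε hε => ⟨1, fun z => (h z).trans ?_⟩
  rw [one_mul]
  gcongr
  exact (lt_add_of_pos_right δ hε).le

theorem of_norm_le_mul_exp (h : ∀ z, ‖F z‖ ≤ D * (‖z‖ * Real.exp (δ * ‖z‖))) :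
    ExpTypeLE F δ := by
  have hD : 0 ≤ D := by
    have hone := (norm_nonneg _).trans (h 1)
    rw [norm_one, one_mul] at hone
    exact nonneg_of_mul_nonneg_left hone (Real.exp_pos _)
  refine fun ε hε => ⟨D / ε, fun z => (h z).trans ?_⟩
  have hlin : ε * ‖z‖ ≤ Real.exp (ε * ‖z‖) := by linarith [Real.add_one_le_exp (ε * ‖z‖)]
  calc D * (‖z‖ * Real.exp (δ * ‖z‖)) = D / ε * (Real.exp (δ * ‖z‖) * (ε * ‖z‖)) := by
        field_simp
    _ ≤ D / ε * (Real.exp (δ * ‖z‖) * Real.exp (ε * ‖z‖)) := by gcongr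
    _ = D / ε * Real.exp ((δ + ε) * ‖z‖) := by rw [← Real.exp_add, ← add_mul]

theorem add (hF : ExpTypeLE F δ) (hG : ExpTypeLE G δ) : ExpTypeLE (F + G) δ := by
  intro ε hε
  obtain ⟨C, hC⟩ := hF ε hε
  obtain ⟨C', hC'⟩ := hG ε hε
  exact ⟨C + C', fun z => (norm_add_le _ _).trans
    ((add_le_add (hC z) (hC' z)).trans_eq (add_mul _ _ _).symm)⟩

theorem neg (hF : ExpTypeLE F δ) : ExpTypeLE (-F) δ := fun ε hε =>
  (hF ε hε).imp fun _ hC z => by simpa only [Pi.neg_apply, norm_neg] using hC z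

theorem sub (hF : ExpTypeLE F δ) (hG : ExpTypeLE G δ) : ExpTypeLE (F - G) δ :=
  sub_eq_add_neg F G ▸ hF.add hG.neg

end ExpTypeLE

theorem exists_minorant_truncatedLaplace {ρ : Measure ℝ} {P : ℂ → ℂ} {m : ℝ → ℝ} {c δ : ℝ}
    (hδ : 0 ≤ δ) (hm : IsUnitValuedFrom m (-δ)) (hc : 0 < c) (hρ : HasReciprocalMGF ρ P c)
    (hP : Differentiable ℂ P) (heven : ∀ z, P (-z) = P z)
    (hPδ : ∀ z, ‖P z‖ ≤ Real.exp (δ * ‖z‖)) (hreal : ∀ x : ℝ, (P x).im = 0)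
    (hpos : ∀ x : ℝ, 0 ≤ (P x).re) :
    ∃ L : ℂ → ℂ, Differentiable ℂ L ∧ ExpTypeLE L δ ∧ (∀ x : ℝ, (L x).im = 0) ∧
      ∀ x : ℝ, (L x).re ≤ truncatedLaplace m x ∧
        truncatedLaplace m x ≤ (L x).re + (P x).re := by
  have := hρ.isProbabilityMeasure
  obtain ⟨L, hL⟩ := exists_isLaplaceMinorant hc hρ hP heven hm
  obtain ⟨D, hD⟩ := hL.exists_norm_le hc hm hδ hPδ hρ.integrable_exp_mul_abs
  exact ⟨L, hL.differentiable, .of_norm_le_mul_exp hD, hL.im_eq_zero hc hreal,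
    hL.re_le_truncatedLaplace_le hc hm hreal hpos⟩

theorem integrable_exp_neg_mul_max_and_integral_eq_one :
    Integrable (fun t : ℝ => Real.exp (-t) * max t 0) ∧ ∫ t : ℝ, Real.exp (-t) * max t 0 = 1 := by
  have heq : (fun t : ℝ => Real.exp (-t) * max t 0) =
      (Ioi 0).indicator fun t => Real.exp (-t) * t ^ ((2 : ℝ) - 1) := by
    funext t
    rcases le_or_gt t 0 with ht | ht
    · rw [max_eq_right ht, mul_zero, indicator_of_notMem (notMem_Ioi.mpr ht)]
    · rw [max_eq_left ht.le, indicator_of_mem (mem_Ioi.mpr ht)]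
      norm_num
  rw [heq, integral_indicator measurableSet_Ioi, ← Real.Gamma_eq_integral two_pos, Real.Gamma_two]
  exact ⟨(Real.GammaIntegral_convergent two_pos).integrable_indicator measurableSet_Ioi, rfl⟩

section Abelian

variable {m : ℝ → ℝ} {b x : ℝ}

theorem measurable_setIntegral_Iic (hm : Measurable m) :
    Measurable fun s => ∫ t in Iic s, m t := by
  have hmeas : StronglyMeasurable (Function.uncurry fun s t => (Iic s).indicator m t) :=
    (Measurable.ite (measurableSet_le measurable_snd measurable_fst)
      (hm.comp measurable_snd) measurable_const).stronglyMeasurable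
  simpa only [integral_indicator measurableSet_Iic] using hmeas.integral_prod_right.measurable

theorem IsUnitValuedFrom.setIntegral_Iic_mem_Icc (h : IsUnitValuedFrom m b) (s : ℝ) :
    ∫ t in Iic s, m t ∈ Icc 0 (max (s - b) 0) := by
  refine ⟨setIntegral_nonneg measurableSet_Iic fun t _ => h.nonneg t, ?_⟩
  have hint : IntegrableOn ((Ici b).indicator (1 : ℝ → ℝ)) (Iic s) := by
    rw [integrableOn_indicator_iff measurableSet_Ici, Ici_inter_Iic]
    exact integrableOn_const (by simp)
  calc ∫ t in Iic s, m t ≤ ∫ t in Iic s, (Ici b).indicator 1 t :=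
        integral_mono_of_nonneg (Eventually.of_forall h.nonneg) hint
          (Eventually.of_forall h.le_indicator)
    _ = volume.real (Icc b s) := by
        rw [integral_indicator_one measurableSet_Ici, measureReal_restrict_apply measurableSet_Ici,
          Ici_inter_Iic]
    _ = max (s - b) 0 := Real.volume_real_Icc

theorem IsUnitValuedFrom.integral_mul_exp_eq (h : IsUnitValuedFrom m b) (hx : 0 < x) :
    ∫ t, m t * Real.exp (-(x * t)) = ∫ s, x * Real.exp (-(x * s)) * ∫ t in Iic s, m t := by
  set k : ℝ → ℝ → ℝ := fun t s => m t * (Ici t).indicator (fun s => x * Real.exp (-(x * s))) s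
  have hk (t s : ℝ) : k t s = x * Real.exp (-(x * s)) * (Iic s).indicator m t := by
    simp only [k, indicator_apply, mem_Ici, mem_Iic]
    split_ifs <;> ring
  have htail (t : ℝ) : IntegrableOn (fun s => x * Real.exp (-(x * s))) (Ici t) :=
    Integrable.const_mul (integrableOn_exp_neg_mul_Ici hx t) x
  have hinner (t : ℝ) : ∫ s, k t s = m t * Real.exp (-(x * t)) := by
    rw [integral_const_mul, integral_indicator measurableSet_Ici, integral_const_mul,
      integral_exp_neg_mul_Ici hx, mul_div_cancel₀ _ hx.ne']
  have hnonneg (t s : ℝ) : 0 ≤ k t s :=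
    mul_nonneg (h.nonneg t) (indicator_nonneg (fun _ _ => by positivity) s)
  have hmeas : Measurable (Function.uncurry k) :=
    (h.measurable.comp measurable_fst).mul <|
      Measurable.ite (measurableSet_le measurable_fst measurable_snd) (by fun_prop)
        measurable_const
  have hprod : Integrable (Function.uncurry k) (volume.prod volume) := by
    refine (integrable_prod_iff hmeas.aestronglyMeasurable).mpr ⟨?_, ?_⟩
    · exact Eventually.of_forall fun t =>
        ((htail t).integrable_indicator measurableSet_Ici).const_mul (m t)
    · simpa only [Function.uncurry, Real.norm_of_nonneg (hnonneg _ _), hinner] using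
        h.integrable_mul_exp hx
  calc ∫ t, m t * Real.exp (-(x * t)) = ∫ t, ∫ s, k t s := by simp only [hinner]
    _ = ∫ s, ∫ t, k t s := integral_integral_swap hprod
    _ = ∫ s, x * Real.exp (-(x * s)) * ∫ t in Iic s, m t := by
      simp only [hk, integral_const_mul, integral_indicator measurableSet_Iic]

theorem IsUnitValuedFrom.truncatedLaplace_eq_integral (h : IsUnitValuedFrom m b) (hx : 0 < x) :
    truncatedLaplace m x = ∫ s, Real.exp (-s) * (x * ∫ t in Iic (s / x), m t) := by
  have hscale := Measure.integral_comp_mul_left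
    (fun s => Real.exp (-s) * (x * ∫ t in Iic (s / x), m t)) x
  simp only [mul_div_cancel_left₀ _ hx.ne', abs_of_pos (inv_pos.mpr hx), smul_eq_mul] at hscale
  rw [truncatedLaplace_of_pos m hx, h.integral_mul_exp_eq hx, ← eq_inv_mul_iff_mul_eq₀ hx.ne']
  simpa only [mul_assoc, mul_left_comm] using hscale

theorem tendsto_mul_setIntegral_Iic_div {ℓ : ℝ} (h : IsUnitValuedFrom m b)
    (hlim : Tendsto (fun y : ℝ => (1 / y) * ∫ t in Iic y, m t) atTop (𝓝 ℓ)) {s : ℝ}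
    (hs : s ≠ 0) :
    Tendsto (fun x => x * ∫ t in Iic (s / x), m t) (𝓝[>] 0) (𝓝 (ℓ * max s 0)) := by
  simp only [div_eq_mul_inv]
  rcases hs.lt_or_gt with hs | hs
  · have hev : ∀ᶠ x : ℝ in 𝓝[>] 0, s * x⁻¹ < b :=
      (tendsto_inv_nhdsGT_zero.const_mul_atTop_of_neg hs).eventually_lt_atBot b
    rw [max_eq_right hs.le, mul_zero]
    refine tendsto_const_nhds.congr' (hev.mono fun x hx => ?_)
    have hzero : ∫ t in Iic (s * x⁻¹), m t = 0 :=
      setIntegral_eq_zero_of_forall_eq_zero fun t ht =>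
        h.eq_zero_of_lt t (lt_of_le_of_lt (mem_Iic.mp ht) hx)
    simp only [hzero, mul_zero]
  · have hmean := hlim.comp (tendsto_inv_nhdsGT_zero.const_mul_atTop hs)
    rw [max_eq_left hs.le]
    refine (hmean.mul_const s).congr' (eventually_mem_nhdsWithin.mono fun x hx => ?_)
    have hx0 : x ≠ 0 := (mem_Ioi.mp hx).ne'
    simp only [Function.comp_apply]
    field_simp

theorem IsUnitValuedFrom.mul_setIntegral_Iic_div_le (h : IsUnitValuedFrom m b)
    (hx : x ∈ Ioo (0 : ℝ) 1) (s : ℝ) : x * ∫ t in Iic (s / x), m t ≤ max (s + |b|) 0 := by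
  calc x * ∫ t in Iic (s / x), m t ≤ x * max (s / x - b) 0 :=
        mul_le_mul_of_nonneg_left (h.setIntegral_Iic_mem_Icc _).2 hx.1.le
    _ = max (s - x * b) 0 := by
        rw [mul_max_of_nonneg _ _ hx.1.le, mul_sub, mul_div_cancel₀ _ hx.1.ne', mul_zero]
    _ ≤ max (s + |b|) 0 := by
        gcongr
        nlinarith [neg_abs_le b, abs_nonneg b, hx.1, hx.2]

theorem IsUnitValuedFrom.tendsto_truncatedLaplace {ℓ : ℝ} (h : IsUnitValuedFrom m b)
    (hlim : Tendsto (fun y : ℝ => (1 / y) * ∫ t in Iic y, m t) atTop (𝓝 ℓ)) :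
    Tendsto (truncatedLaplace m) (𝓝[>] 0) (𝓝 ℓ) := by
  obtain ⟨hint, hone⟩ := integrable_exp_neg_mul_max_and_integral_eq_one
  have hdom : Tendsto (fun x => ∫ s, Real.exp (-s) * (x * ∫ t in Iic (s / x), m t)) (𝓝[>] 0)
      (𝓝 (∫ s, Real.exp (-s) * (ℓ * max s 0))) := by
    refine tendsto_integral_filter_of_dominated_convergence
      (fun s => Real.exp |b| * (Real.exp (-(s + |b|)) * max (s + |b|) 0)) ?_ ?_
      ((hint.comp_add_right |b|).const_mul _) ?_
    · have hmeas := measurable_setIntegral_Iic h.measurable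
      exact Eventually.of_forall fun x => Measurable.aestronglyMeasurable <|
        (by fun_prop : Measurable fun s : ℝ => Real.exp (-s)).mul <|
          (hmeas.comp (measurable_id.div_const x)).const_mul x
    · filter_upwards [Ioo_mem_nhdsGT one_pos] with x hx
      refine Eventually.of_forall fun s => ?_
      have hnonneg := mul_nonneg hx.1.le (h.setIntegral_Iic_mem_Icc (s / x)).1
      rw [Real.norm_of_nonneg (mul_nonneg (Real.exp_pos _).le hnonneg),
        ← mul_assoc (Real.exp |b|), ← Real.exp_add, neg_add, add_neg_cancel_comm_assoc]
      gcongr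
      exact h.mul_setIntegral_Iic_div_le hx s
    · filter_upwards [Measure.ae_ne volume 0] with s hs
      exact (tendsto_mul_setIntegral_Iic_div h hlim hs).const_mul _
  have hval : ∫ s, Real.exp (-s) * (ℓ * max s 0) = ℓ := by
    simp only [mul_left_comm _ ℓ, integral_const_mul, hone, mul_one]
  rw [hval] at hdom
  refine hdom.congr' (eventually_mem_nhdsWithin.mono fun x hx => ?_)
  rw [h.truncatedLaplace_eq_integral hx]

end Abelian

theorem measurable_signedMeasure_Iic (μ : SignedMeasure ℝ) : Measurable fun x => μ (Iic x) := by
  have hjordan (x : ℝ) : μ (Iic x) = μ.toJordanDecomposition.posPart.real (Iic x) -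
      μ.toJordanDecomposition.negPart.real (Iic x) := by
    conv_lhs => rw [← μ.toSignedMeasure_toJordanDecomposition]
    rw [JordanDecomposition.toSignedMeasure, sub_apply,
      Measure.toSignedMeasure_apply_measurable measurableSet_Iic,
      Measure.toSignedMeasure_apply_measurable measurableSet_Iic]
  have hmono (p : Measure ℝ) [IsFiniteMeasure p] : Measurable fun x => p.real (Iic x) :=
    Monotone.measurable fun _ _ hxy => measureReal_mono (Iic_subset_Iic.mpr hxy)
  simp only [hjordan]
  exact (hmono _).sub (hmono _)

theorem isUnitValuedFrom_signedMeasure_Iic {μ : SignedMeasure ℝ} {b : ℝ}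
    (hsupp : ∀ s : Set ℝ, MeasurableSet s → s ⊆ Iio b → μ s = 0)
    (hdist : ∀ x : ℝ, 0 ≤ μ (Iic x) ∧ μ (Iic x) ≤ 1) :
    IsUnitValuedFrom (fun x => μ (Iic x)) b where
  measurable := measurable_signedMeasure_Iic μ
  mem_Icc := hdist
  eq_zero_of_lt _ ht := hsupp _ measurableSet_Iic (Iic_subset_Iio.mpr ht)

section Extremal

variable {ν δ b : ℝ} {m : ℝ → ℝ} {L M : ℂ → ℂ}

theorem IsUnitValuedFrom.one_le_re_zero (hm : IsUnitValuedFrom m b)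
    (hmean : Tendsto (fun y : ℝ => (1 / y) * ∫ x in Iic y, m x) atTop (𝓝 1))
    (hM : Continuous M) (hle : ∀ x : ℝ, truncatedLaplace m x ≤ (M x).re) : 1 ≤ (M 0).re := by
  have hcont : Continuous fun x : ℝ => (M x).re := by fun_prop
  exact le_of_tendsto_of_tendsto' (hm.tendsto_truncatedLaplace hmean)
    ((hcont.tendsto' 0 _ rfl).mono_left nhdsWithin_le_nhds) hle

theorem IsUnitValuedFrom.minimalMass_le_integral (hm : IsUnitValuedFrom m b) (hν : 0 < ν + 1)
    (hδ : 0 < δ) (hmean : Tendsto (fun y : ℝ => (1 / y) * ∫ x in Iic y, m x) atTop (𝓝 1))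
    (hL : Differentiable ℂ L) (hM : Differentiable ℂ M) (hLδ : ExpTypeLE L δ)
    (hMδ : ExpTypeLE M δ) (hLim : ∀ x : ℝ, (L x).im = 0) (hMim : ∀ x : ℝ, (M x).im = 0)
    (hle : ∀ x : ℝ, (L x).re ≤ truncatedLaplace m x ∧ truncatedLaplace m x ≤ (M x).re)
    (hint : Integrable fun x : ℝ => ((M x).re - (L x).re) * |x| ^ (2 * ν + 1)) :
    minimalMass ν δ ≤ ∫ x : ℝ, ((M x).re - (L x).re) * |x| ^ (2 * ν + 1) := by
  have hM0 : 1 ≤ (M 0).re := hm.one_le_re_zero hmean hM.continuous fun x => (hle x).2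
  have hL0 : (L 0).re ≤ 0 := (hle 0).1.trans_eq (truncatedLaplace_of_nonpos m le_rfl)
  refine (hMδ.sub hLδ).minimalMass_le_integral hν hδ (hM.sub hL)
    (fun x => ?_) (fun x => ?_) ?_ hint
  · rw [Pi.sub_apply, Complex.sub_im, hMim, hLim, sub_zero]
  · exact sub_nonneg.mpr ((hle x).1.trans (hle x).2)
  · rw [Pi.sub_apply, Complex.sub_re]
    linarith

theorem exists_minorant_majorant (hν : 0 < ν + 1) (hδ : 0 < δ) (hm : IsUnitValuedFrom m (-δ)) :
    ∃ L M : ℂ → ℂ, Differentiable ℂ L ∧ Differentiable ℂ M ∧ ExpTypeLE L δ ∧ ExpTypeLE M δ ∧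
      (∀ x : ℝ, (L x).im = 0) ∧ (∀ x : ℝ, (M x).im = 0) ∧
      (∀ x : ℝ, (L x).re ≤ truncatedLaplace m x ∧ truncatedLaplace m x ≤ (M x).re) ∧
      Integrable (fun x : ℝ => ((M x).re - (L x).re) * |x| ^ (2 * ν + 1)) ∧
      ∫ x : ℝ, ((M x).re - (L x).re) * |x| ^ (2 * ν + 1) ≤ minimalMass ν δ := by
  obtain ⟨c, hc, ρ, hρ⟩ := exists_hasReciprocalMGF_normalizedBesselSq hν hδ
  have hP := differentiable_normalizedBesselSq hν δ
  have hPδ := norm_normalizedBesselSq_le hν hδ.le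
  have hreal := im_normalizedBesselSq_ofReal ν δ
  obtain ⟨L, hL, hLδ, hLim, hle⟩ := exists_minorant_truncatedLaplace hδ.le hm hc hρ hP
    (normalizedBesselSq_neg ν δ) hPδ hreal (re_normalizedBesselSq_ofReal_nonneg ν δ)
  refine ⟨L, L + normalizedBesselSq ν δ, hL, hL.add hP, hLδ, hLδ.add (.of_norm_le_exp hPδ), hLim,
    fun x => ?_, hle, ?_⟩
  · rw [Pi.add_apply, Complex.add_im, hLim, hreal, add_zero]
  · simpa only [Pi.add_apply, Complex.add_re, add_sub_cancel_left] using
      integrable_and_integral_normalizedBesselSq_le hν hδ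

end Extremal

theorem stmt8_general {ν δ : ℝ} (hν : -1 < ν) (hδ : 0 < δ) {m : ℝ → ℝ}
    (hm : IsUnitValuedFrom m (-δ))
    (hmean : Tendsto (fun y : ℝ => (1 / y) * ∫ x in Iic y, m x) atTop (𝓝 1)) :
    IsLeast {v : ℝ | ∃ L M : ℂ → ℂ,
        Differentiable ℂ L ∧ Differentiable ℂ M ∧
        ExpTypeLE L δ ∧ ExpTypeLE M δ ∧
        (∀ x : ℝ, (L x).im = 0) ∧ (∀ x : ℝ, (M x).im = 0) ∧
        (∀ x : ℝ, (L x).re ≤ truncatedLaplace m x ∧ truncatedLaplace m x ≤ (M x).re) ∧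
        Integrable (fun x : ℝ => ((M x).re - (L x).re) * |x| ^ (2 * ν + 1)) ∧
        v = ∫ x : ℝ, ((M x).re - (L x).re) * |x| ^ (2 * ν + 1)}
      (Real.Gamma (ν + 1) * Real.Gamma (ν + 2) * (4 / δ) ^ (2 * ν + 2)) := by
  rw [neg_lt_iff_pos_add] at hν
  constructor
  · obtain ⟨L, M, hL, hM, hLδ, hMδ, hLim, hMim, hle, hint, hmass⟩ :=
      exists_minorant_majorant hν hδ hm
    exact ⟨L, M, hL, hM, hLδ, hMδ, hLim, hMim, hle, hint, hmass.antisymm' <|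
      hm.minimalMass_le_integral hν hδ hmean hL hM hLδ hMδ hLim hMim hle hint⟩
  · rintro _ ⟨L, M, hL, hM, hLδ, hMδ, hLim, hMim, hle, hint, rfl⟩
    exact hm.minimalMass_le_integral hν hδ hmean hL hM hLδ hMδ hLim hMim hle hint

end

/-- (Theorem 3, truncated case.) Let `ν > -1`, `δ > 0`, and `μ` a signed
Borel measure satisfying (H1)-(H2)-(H3) with `supp(μ) ⊂ [-δ,∞)`.  Then the infimum of
`∫ {M(x) - L(x)} |x|^{2ν+1} dx` over all pairs of real entire functions `L, M` of
exponential type at most `δ` with `L ≤ f_μ ≤ M` on `ℝ` equals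
`Γ(ν+1)Γ(ν+2)(4/δ)^{2ν+2}`. -/
theorem stmt8 (ν δ : ℝ) (hν : -1 < ν) (hδ : 0 < δ)
    (μ : MeasureTheory.SignedMeasure ℝ)
    (hsupp : ∀ s : Set ℝ, MeasurableSet s → s ⊆ Set.Iio (-δ) → μ s = 0)
    (hdist : ∀ x : ℝ, 0 ≤ μ (Set.Iic x) ∧ μ (Set.Iic x) ≤ 1)
    (hH3 : Filter.Tendsto (fun y : ℝ => (1 / y) * ∫ x in Set.Iic y, μ (Set.Iic x))
      Filter.atTop (nhds 1))
    (fμ : ℝ → ℝ)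
    (hfμ : ∀ x : ℝ, fμ x =
      if 0 < x then ∫ lam : ℝ, x * Real.exp (-lam * x) * μ (Set.Iic lam) else 0) :
    sInf {v : ℝ | ∃ L M : ℂ → ℂ,
        Differentiable ℂ L ∧ Differentiable ℂ M ∧
        ExpTypeLE L δ ∧ ExpTypeLE M δ ∧
        (∀ x : ℝ, (L x).im = 0) ∧ (∀ x : ℝ, (M x).im = 0) ∧
        (∀ x : ℝ, (L x).re ≤ fμ x ∧ fμ x ≤ (M x).re) ∧
        MeasureTheory.Integrable (fun x : ℝ => ((M x).re - (L x).re) * |x| ^ (2 * ν + 1)) ∧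
        v = ∫ x : ℝ, ((M x).re - (L x).re) * |x| ^ (2 * ν + 1)} =
      Real.Gamma (ν + 1) * Real.Gamma (ν + 2) * (4 / δ) ^ (2 * ν + 2) := by
  obtain rfl : fμ = truncatedLaplace fun x => μ (Iic x) := funext hfμ
  exact (stmt8_general hν hδ (isUnitValuedFrom_signedMeasure_Iic hsupp hdist) hH3).csInf_eq
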